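/- arXiv:2010.07407 — 9 statements merged into one kernel-verified Lean document; each statement's English description precedes it below -/
import Mathlib

section
/- Let G be a group with a normal subgroup A of finite index and a fixed group isomorphism between A and ℤⁿ, and let ρ : G → GL(n, ℤ) be the conjugation action (ρ(g) is the automorphism of ℤⁿ corresponding to a ↦ g a g⁻¹ on A). If G acts properly and cocompactly by graph automorphisms on some Helly graph, then there exists φ ∈ GL(n, ℝ) such that for every g ∈ G the matrix φ ρ(g) φ⁻¹ (viewed in GL(n, ℝ)) is a linear isometry of ℝⁿ = (Fin n → ℝ) equipped with the supremum norm ‖x‖∞ = max |xᵢ|. -/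
/-- A simple graph is Helly if it is connected and every pairwise intersecting family of
closed balls (with respect to the graph metric) has a common vertex. -/
def IsHellyGraph {V : Type*} (Γ : SimpleGraph V) : Prop :=
  Γ.Connected ∧
    ∀ {ι : Type} (v : ι → V) (r : ι → ℕ),
      (∀ i j, Γ.dist (v i) (v j) ≤ r i + r j) → ∃ x : V, ∀ i, Γ.dist x (v i) ≤ r i

/-- A group `G` acts properly and cocompactly by automorphisms on a graph `Γ` (the action
being given by a homomorphism to permutations of the vertex set preserving adjacency) if
for every vertex `v` and radius `R` the set `{g | d(v, g·v) ≤ R}` is finite, and there are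
finitely many orbits of vertices. -/
def IsProperCocompactGraphAction {G : Type*} [Group G] {V : Type*} (Γ : SimpleGraph V)
    (act : G →* Equiv.Perm V) : Prop :=
  (∀ (g : G) (u v : V), Γ.Adj u v → Γ.Adj (act g u) (act g v)) ∧
  (∀ (v : V) (R : ℕ), {g : G | Γ.dist v (act g v) ≤ R}.Finite) ∧
  (∃ S : Finset V, ∀ v : V, ∃ g : G, act g v ∈ S)

/-- A group is Helly if it acts properly and cocompactly by automorphisms on some
Helly graph. -/
def IsHellyGroup (G : Type*) [Group G] : Prop :=
  ∃ (V : Type) (Γ : SimpleGraph V) (act : G →* Equiv.Perm V),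
    IsHellyGraph Γ ∧ IsProperCocompactGraphAction Γ act

section funct
variable {n : ℕ}

/-- Weak Helly property. -/
def WeakHelly (p : (Fin n → ℝ) → ℝ) : Prop :=
  ∀ {ι : Type} [Fintype ι] (x : ι → (Fin n → ℝ)), (∀ i j, p (x i - x j) < 2) →
    ∃ y, ∀ i, p (x i - y) < 1

variable {p : (Fin n → ℝ) → ℝ}

lemma deriv_self (hadd : ∀ x y, p (x + y) ≤ p x + p y)
    (hsmul : ∀ (t : ℝ) x, p (t • x) = |t| * p x)
    {x : Fin n → ℝ} {f : (Fin n → ℝ) →L[ℝ] ℝ} (hf : HasFDerivAt p f x) :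
    f x = p x := by
  have h1 : HasDerivAt (fun t : ℝ => p ((1 + t) • x)) (f x) 0 := by
    have : HasDerivAt (fun t : ℝ => (1 + t) • x) x 0 := by
      have := ((hasDerivAt_id (0:ℝ)).const_add 1).smul_const x
      simpa using this
    have h0 : HasFDerivAt p f ((1 + (0:ℝ)) • x) := by simpa using hf
    exact h0.comp_hasDerivAt (0:ℝ) this
  have h2 : HasDerivAt (fun t : ℝ => p ((1 + t) • x)) (p x) 0 := by
    have : HasDerivAt (fun t : ℝ => (1 + t) * p x) (p x) 0 := by
      simpa using ((hasDerivAt_id (0:ℝ)).const_add 1).mul_const (p x)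
    refine this.congr_of_eventuallyEq ?_
    filter_upwards [lt_mem_nhds (show (-1:ℝ) < 0 by norm_num)] with t ht
    rw [hsmul, abs_of_pos (by linarith)]
  exact h1.unique h2

/-- A linear functional dominated by `p` and equal at `x` is the derivative. -/
lemma deriv_unique (hadd : ∀ x y, p (x + y) ≤ p x + p y)
    (hsmul : ∀ (t : ℝ) x, p (t • x) = |t| * p x)
    {x : Fin n → ℝ} {f g : (Fin n → ℝ) →L[ℝ] ℝ} (hf : HasFDerivAt p f x)
    (hg : ∀ v, g v ≤ p v) (hgx : g x = p x) : g = f := by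
  have h1 : HasFDerivAt (fun v => p v - g v) (f - g) x := hf.sub g.hasFDerivAt
  have h2 : IsLocalMin (fun v => p v - g v) x := by
    refine Filter.Eventually.of_forall fun v => ?_
    have := hg v
    simp only [hgx]; linarith
  have := h2.hasFDerivAt_eq_zero h1
  exact (sub_eq_zero.1 this).symm

lemma deriv_le (hadd : ∀ x y, p (x + y) ≤ p x + p y)
    (hsmul : ∀ (t : ℝ) x, p (t • x) = |t| * p x)
    {x : Fin n → ℝ} {f : (Fin n → ℝ) →L[ℝ] ℝ} (hf : HasFDerivAt p f x)
    (v : Fin n → ℝ) : f v ≤ p v := by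
  have h1 : HasDerivAt (fun t : ℝ => p (x + t • v)) (f v) 0 := by
    have : HasDerivAt (fun t : ℝ => x + t • v) v 0 := by
      simpa using ((hasDerivAt_id (0:ℝ)).smul_const v).const_add x
    have h0 : HasFDerivAt p f (x + (0:ℝ) • v) := by simpa using hf
    exact h0.comp_hasDerivAt (0:ℝ) this
  have h2 := h1.tendsto_slope_zero_right
  refine le_of_tendsto h2 ?_
  filter_upwards [self_mem_nhdsWithin] with t ht
  have ht : 0 < t := ht
  simp only [zero_add, zero_smul, add_zero, smul_eq_mul]
  have h3 := hadd x (t • v)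
  rw [hsmul, abs_of_pos ht] at h3
  rw [inv_mul_le_iff₀ ht]; linarith

lemma deriv_abs_le (hadd : ∀ x y, p (x + y) ≤ p x + p y)
    (hsmul : ∀ (t : ℝ) x, p (t • x) = |t| * p x)
    {x : Fin n → ℝ} {f : (Fin n → ℝ) →L[ℝ] ℝ} (hf : HasFDerivAt p f x)
    (v : Fin n → ℝ) : |f v| ≤ p v := by
  rw [abs_le]
  have h1 := deriv_le hadd hsmul hf v
  have h2 := deriv_le hadd hsmul hf (-v)
  have h3 := hsmul (-1) v
  simp at h3
  rw [map_neg, h3] at h2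
  constructor <;> linarith

lemma hp_deriv_smul (hadd : ∀ x y, p (x + y) ≤ p x + p y)
    (hsmul : ∀ (t : ℝ) x, p (t • x) = |t| * p x)
    {x : Fin n → ℝ} {f : (Fin n → ℝ) →L[ℝ] ℝ} (hf : HasFDerivAt p f x)
    {t : ℝ} (ht : 0 < t) : HasFDerivAt p f (t • x) := by
  have h0 : HasFDerivAt p f (t⁻¹ • (t • x)) := by
    rwa [smul_smul, inv_mul_cancel₀ ht.ne', one_smul]
  have h1 : HasFDerivAt (fun v : Fin n → ℝ => t⁻¹ • v)
    (t⁻¹ • ContinuousLinearMap.id ℝ (Fin n → ℝ)) (t • x) :=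
    (hasFDerivAt_id (𝕜 := ℝ) (t • x)).const_smul t⁻¹
  have h2 := (h0.comp (t • x) h1).const_mul t
  have e1 : (fun y => t * (p ∘ fun v : Fin n → ℝ => t⁻¹ • v) y) = p := by
    ext v
    simp only [Function.comp, hsmul, abs_of_pos (inv_pos.2 ht)]
    field_simp
  have e2 : t • f.comp (t⁻¹ • ContinuousLinearMap.id ℝ (Fin n → ℝ)) = f := by
    ext v
    simp [ht.ne']
  rw [e2] at h2
  rw [← e1]
  exact h2

lemma hp_deriv_neg (hadd : ∀ x y, p (x + y) ≤ p x + p y)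
    (hsmul : ∀ (t : ℝ) x, p (t • x) = |t| * p x)
    {x : Fin n → ℝ} {f : (Fin n → ℝ) →L[ℝ] ℝ} (hf : HasFDerivAt p f x) :
    HasFDerivAt p (-f) (-x) := by
  have h0 : HasFDerivAt p f (-(-x)) := by simpa using hf
  have h1 : HasFDerivAt (fun v : Fin n → ℝ => - v)
    (- ContinuousLinearMap.id ℝ (Fin n → ℝ)) (-x) := (hasFDerivAt_id (𝕜 := ℝ) (-x)).neg
  have h2 := h0.comp (-x) h1
  have e1 : (p ∘ fun v : Fin n → ℝ => -v) = p := by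
    ext v
    have := hsmul (-1) v
    simp at this
    simp [this]
  have e2 : f.comp (- ContinuousLinearMap.id ℝ (Fin n → ℝ)) = -f := by
    ext v
    simp
  rw [e1, e2] at h2
  exact h2

lemma antipodal (hadd : ∀ x y, p (x + y) ≤ p x + p y)
    (hsmul : ∀ (t : ℝ) x, p (t • x) = |t| * p x)
    {x y : Fin n → ℝ} {f g : (Fin n → ℝ) →L[ℝ] ℝ} (hx : p x = 1) (hy : p y = 1)
    (hf : HasFDerivAt p f x) (hg : HasFDerivAt p g y) (h : 2 ≤ p (x - y)) : f = -g := by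
  have hneg : ∀ v, p (-v) = p v := fun v => by have := hsmul (-1) v; simpa using this
  -- Hahn-Banach
  obtain ⟨k, hk1, hk2⟩ : ∃ k : (Fin n → ℝ) →ₗ[ℝ] ℝ, k (x - y) = p (x - y) ∧ ∀ v, k v ≤ p v := by
    have hne : x - y ≠ 0 := by
      intro h0
      have := hsmul 0 0
      simp at this
      rw [h0, this] at h; linarith
    let F := LinearPMap.mkSpanSingleton (K := ℝ) (F := ℝ) (σ := RingHom.id ℝ) (x - y) (p (x - y)) hne
    obtain ⟨k, h1, h2⟩ := exists_extension_of_le_sublinear F p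
      (fun c hc x => by rw [hsmul, abs_of_pos hc]) hadd (by
        rintro ⟨v, hv⟩
        obtain ⟨c, rfl⟩ := Submodule.mem_span_singleton.1 hv
        have : F ⟨c • (x - y), hv⟩ = c • p (x - y) := LinearPMap.mkSpanSingleton'_apply _ _ _ _ _
        rw [this, hsmul, smul_eq_mul]
        have : 0 ≤ p (x - y) := by linarith
        gcongr
        exact le_abs_self c)
    refine ⟨k, ?_, h2⟩
    have := h1 ⟨x - y, Submodule.mem_span_singleton_self _⟩
    simp only at this
    rw [this]
    have : F ⟨(1:ℝ) • (x - y), by simp [F]⟩ = (1:ℝ) • p (x - y) :=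
      LinearPMap.mkSpanSingleton'_apply _ _ _ _ _
    simpa using this
  let k' : (Fin n → ℝ) →L[ℝ] ℝ := LinearMap.toContinuousLinearMap k
  have e1 := hk2 x
  have e2 := hk2 (-y)
  rw [hneg, hy] at e2
  rw [map_sub] at hk1
  rw [map_neg] at e2
  have a1 : k' = f := deriv_unique hadd hsmul hf hk2 (by show k x = p x; linarith)
  have a2 : k' = -g := deriv_unique hadd hsmul (hp_deriv_neg hadd hsmul hg) hk2
    (by show k (-y) = p (-y); rw [map_neg, hneg]; linarith)
  rw [← a1, a2]

theorem exists_linfty (hadd : ∀ x y, p (x + y) ≤ p x + p y)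
    (hsmul : ∀ (t : ℝ) x, p (t • x) = |t| * p x)
    {c C : ℝ} (hc : 0 < c) (hlow : ∀ x, c * ‖x‖ ≤ p x)
    (hup : ∀ x, p x ≤ C * ‖x‖) (hH : WeakHelly p) :
    ∃ φ : Matrix.GeneralLinearGroup (Fin n) ℝ,
      ∀ x, ‖Matrix.mulVec (φ : Matrix (Fin n) (Fin n) ℝ) x‖ = p x := by
  classical
  have hneg1 : ∀ g : ((Fin n → ℝ) →L[ℝ] ℝ), (-1 : ℝ) • g = -g := by
    intro g
    ext v
    simp
  have hneg : ∀ v, p (-v) = p v := fun v => by have := hsmul (-1) v; simpa using this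
  have hp0 : p 0 = 0 := by simpa using hsmul 0 0
  have hLip : LipschitzWith (Real.toNNReal C) p := by
    refine LipschitzWith.of_le_add_mul _ fun x y => ?_
    have h1 := hadd y (x - y)
    have h2 := hup (x - y)
    rw [add_sub_cancel] at h1
    rw [dist_eq_norm, Real.coe_toNNReal']
    have : C * ‖x - y‖ ≤ max C 0 * ‖x - y‖ := by gcongr; exact le_max_left _ _
    linarith
  have hdense : Dense {x | DifferentiableAt ℝ p x} :=
    MeasureTheory.Measure.dense_of_ae (μ := MeasureTheory.volume) hLip.ae_differentiableAt
  let F : Set ((Fin n → ℝ) →L[ℝ] ℝ) := {f | ∃ x, p x = 1 ∧ HasFDerivAt p f x}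
  obtain ⟨B, hBF, hspan, hli⟩ := exists_linearIndependent ℝ F
  have hfinB : Finite B := hli.finite
  have := Fintype.ofFinite B
  have hBx : ∀ b : B, ∃ x, p x = 1 ∧ HasFDerivAt p (b : (Fin n → ℝ) →L[ℝ] ℝ) x :=
    fun b => hBF b.2
  choose xb hxb1 hxb2 using hBx
  have hne : ∀ b : B, (b : (Fin n → ℝ) →L[ℝ] ℝ) ≠ 0 := fun b => hli.ne_zero b
  -- key claim
  have hF : ∀ f ∈ F, ∃ b : B, f = b ∨ f = -b := by
    intro f hf
    by_contra! hcon
    obtain ⟨xf, hxf1, hxf2⟩ := hf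
    have hmem : f ∈ Submodule.span ℝ (Set.range ((↑) : B → ((Fin n → ℝ) →L[ℝ] ℝ))) := by
      rw [Subtype.range_coe, hspan]; exact Submodule.subset_span ⟨xf, hxf1, hxf2⟩
    obtain ⟨c, hc⟩ := (Submodule.mem_span_range_iff_exists_fun ℝ).1 hmem
    let s : B → ℝ := fun b => if 0 ≤ c b then 1 else -1
    have hs : ∀ b, s b = 1 ∧ 0 ≤ c b ∨ s b = -1 ∧ c b ≤ 0 := by
      intro b
      by_cases h : 0 ≤ c b
      · left; simp [s, h]
      · right; simp [s, h]; linarith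
    let X : Option B → (Fin n → ℝ) := fun o => o.elim (-xf) (fun b => s b • xb b)
    let L : Option B → ((Fin n → ℝ) →L[ℝ] ℝ) := fun o => o.elim (-f) (fun b => s b • b)
    have hX1 : ∀ o, p (X o) = 1 := by
      rintro (_ | b)
      · simp [X, hneg, hxf1]
      · rcases hs b with h | h <;> simp [X, h.1, hneg, hxb1]
    have hXL : ∀ o, HasFDerivAt p (L o) (X o) := by
      rintro (_ | b)
      · exact hp_deriv_neg hadd hsmul hxf2
      · rcases hs b with h | h
        · simpa [X, L, h.1] using hxb2 b
        · simpa [X, L, h.1, hneg1] using hp_deriv_neg hadd hsmul (hxb2 b)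
    have hf0 : f ≠ 0 := by
      intro h0
      have := deriv_self hadd hsmul hxf2
      rw [h0, hxf1] at this
      simp at this
    have hself : ∀ g : ((Fin n → ℝ) →L[ℝ] ℝ), g = -g → g = 0 := by
      intro g hg
      ext v
      have := congrArg (fun h => h v) hg
      simp only [neg_apply] at this
      rw [zero_apply]; linarith
    have hLne : ∀ o o', L o ≠ - L o' := by
      have key : ∀ b : B, -f ≠ -(s b • (b : (Fin n → ℝ) →L[ℝ] ℝ)) := by
        intro b h
        rw [neg_inj] at h
        rcases hs b with h' | h'
        · exact (hcon b).1 (by simpa [h'.1] using h)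
        · exact (hcon b).2 (by rw [h, h'.1, hneg1])
      rintro (_ | b) (_ | b') h
      · exact hf0 (neg_eq_zero.1 (hself _ h))
      · exact key b' h
      · exact key b (by 
          have h : s b • (b : (Fin n → ℝ) →L[ℝ] ℝ) = - -f := h
          rw [h, neg_neg])
      · have h : s b • (b : (Fin n → ℝ) →L[ℝ] ℝ) = - (s b' • (b' : (Fin n → ℝ) →L[ℝ] ℝ)) := h
        have h1 := Fintype.linearIndependent_iff.1 hli (Pi.single b (s b) + Pi.single b' (s b'))
          (by
            simp only [Pi.add_apply, add_smul, Finset.sum_add_distrib, Pi.single_apply, ite_smul,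
              zero_smul, Finset.sum_ite_eq', Finset.mem_univ, if_true]
            rw [h, neg_add_cancel]) b
        by_cases hbb : b = b'
        · subst hbb
          simp at h1
          rcases hs b with h' | h' <;> rw [h'.1] at h1 <;> norm_num at h1
        · simp [hbb] at h1
          rcases hs b with h' | h' <;> rw [h'.1] at h1 <;> norm_num at h1
    obtain ⟨y, hy⟩ := hH X (fun o o' => by
      by_contra! h
      exact hLne _ _ (antipodal hadd hsmul (hX1 o) (hX1 o') (hXL o) (hXL o') h))
    have hpos : ∀ o, 0 < L o y := by
      intro o
      have h1 := hy o
      have h2 := deriv_le hadd hsmul (hXL o) (X o - y)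
      have h3 := deriv_self hadd hsmul (hXL o)
      rw [map_sub, h3, hX1] at h2
      linarith
    have h1 := hpos none
    simp only [L, Option.elim, neg_apply] at h1
    have h2 : f y = ∑ b, c b * (b : (Fin n → ℝ) →L[ℝ] ℝ) y := by
      rw [← hc]; simp
    have h3 : 0 ≤ ∑ b, c b * (b : (Fin n → ℝ) →L[ℝ] ℝ) y := by
      refine Finset.sum_nonneg fun b _ => ?_
      have h4 := hpos (some b)
      rcases hs b with h' | h'
      · simp [L, h'.1] at h4
        exact mul_nonneg h'.2 h4.le
      · simp [L, h'.1] at h4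
        exact mul_nonneg_of_nonpos_of_nonpos h'.2 h4.le
    linarith
  let Φ : (Fin n → ℝ) →ₗ[ℝ] (B → ℝ) :=
    LinearMap.pi fun b => ((b : (Fin n → ℝ) →L[ℝ] ℝ) : (Fin n → ℝ) →ₗ[ℝ] ℝ)
  have hΦc : Continuous Φ := Φ.continuous_of_finiteDimensional
  have hpnn : ∀ x, 0 ≤ p x := fun x => le_trans (by positivity) (hlow x)
  have hp_pos : ∀ x, x ≠ 0 → 0 < p x := fun x hx =>
    lt_of_lt_of_le (mul_pos hc (norm_pos_iff.2 hx)) (hlow x)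
  have hΦ : ∀ x, ‖Φ x‖ = p x := by
    have : (fun x => ‖Φ x‖) = p := by
      refine Continuous.ext_on hdense hΦc.norm hLip.continuous ?_
      intro x hx
      have hx : DifferentiableAt ℝ p x := hx
      apply le_antisymm
      · rw [pi_norm_le_iff_of_nonneg (hpnn x)]
        intro b
        exact deriv_abs_le hadd hsmul (hxb2 b) x
      · by_cases hx0 : x = 0
        · simp [hx0, hp0]
        have hpx := hp_pos x hx0
        have hd := hx.hasFDerivAt
        have hmem : fderiv ℝ p x ∈ F := by
          refine ⟨(p x)⁻¹ • x, ?_, hp_deriv_smul hadd hsmul hd (inv_pos.2 hpx)⟩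
          rw [hsmul, abs_of_pos (inv_pos.2 hpx), inv_mul_cancel₀ hpx.ne']
        obtain ⟨b, hb⟩ := hF _ hmem
        have h1 := deriv_self hadd hsmul hd
        have h2 : |(b : (Fin n → ℝ) →L[ℝ] ℝ) x| = p x := by
          rcases hb with hb | hb
          · rw [← hb, h1, abs_of_pos hpx]
          · rw [hb] at h1
            rw [← abs_neg, ← h1, neg_apply, abs_of_pos]
            rw [neg_apply] at h1; linarith
        rw [← h2]
        exact norm_le_pi_norm (Φ x) b
    exact fun x => congrFun this x
  have hinj : Function.Injective Φ := by
    rw [injective_iff_map_eq_zero]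
    intro x hx
    by_contra hx0
    have := hp_pos x hx0
    rw [← hΦ, hx, norm_zero] at this
    exact lt_irrefl _ this
  have hcard : Fintype.card B = n := by
    apply le_antisymm
    · have := hli.fintype_card_le_finrank
      rwa [← (LinearMap.toContinuousLinearMap (𝕜 := ℝ) (E := Fin n → ℝ) (F' := ℝ)).finrank_eq,
        Module.finrank_linearMap, Module.finrank_fin_fun, Module.finrank_self, mul_one] at this
    · have := LinearMap.finrank_le_finrank_of_injective hinj
      simpa using this
  let eB : B ≃ Fin n := Fintype.equivFinOfCardEq hcard
  let Ψ : (Fin n → ℝ) →ₗ[ℝ] (Fin n → ℝ) := (LinearEquiv.funCongrLeft ℝ ℝ eB.symm).toLinearMap ∘ₗ Φ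
  have hΨinj : Function.Injective Ψ := by
    intro x y h
    exact hinj ((LinearEquiv.funCongrLeft ℝ ℝ eB.symm).injective h)
  have hΨn : ∀ x, ‖Ψ x‖ = p x := by
    intro x
    rw [← hΦ]
    apply le_antisymm
    · rw [pi_norm_le_iff_of_nonneg (norm_nonneg _)]
      exact fun i => norm_le_pi_norm (Φ x) (eB.symm i)
    · rw [pi_norm_le_iff_of_nonneg (norm_nonneg _)]
      intro b
      have := norm_le_pi_norm (Ψ x) (eB b)
      simpa [Ψ] using this
  let M := LinearMap.toMatrix' Ψ
  have hM : IsUnit M := by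
    rw [← Matrix.mulVec_injective_iff_isUnit]
    intro x y hxy
    apply hΨinj
    simpa [M, LinearMap.toMatrix'_mulVec] using hxy
  refine ⟨hM.unit, fun x => ?_⟩
  rw [← hΨn]
  simp [M, LinearMap.toMatrix'_mulVec]

end funct

section asymp
open Filter Topology
variable {n : ℕ}

/-- coordinatewise cast -/
def icast (a : Fin n → ℤ) : Fin n → ℝ := fun i => (a i : ℝ)

/-- coordinatewise floor -/
noncomputable def ifloor (x : Fin n → ℝ) : Fin n → ℤ := fun i => ⌊x i⌋

lemma icast_add (a b : Fin n → ℤ) : icast (a + b) = icast a + icast b := by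
  ext i; simp [icast]

lemma icast_sub (a b : Fin n → ℤ) : icast (a - b) = icast a - icast b := by
  ext i; simp [icast]

lemma icast_neg (a : Fin n → ℤ) : icast (-a) = -icast a := by
  ext i; simp [icast]

lemma icast_nsmul (m : ℕ) (a : Fin n → ℤ) : icast (m • a) = (m : ℝ) • icast a := by
  ext i; simp [icast]

lemma floor_err (x : Fin n → ℝ) : ‖x - icast (ifloor x)‖ ≤ 1 := by
  rw [pi_norm_le_iff_of_nonneg zero_le_one]
  intro i
  simp only [Pi.sub_apply, icast, ifloor, Real.norm_eq_abs]
  rw [abs_le]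
  constructor <;> linarith [Int.floor_le (x i), Int.lt_floor_add_one (x i)]

lemma D_upper {D : (Fin n → ℤ) → ℝ} (hadd : ∀ a b, D (a + b) ≤ D a + D b)
    (hneg : ∀ a, D (-a) = D a) (h0 : D 0 = 0) :
    ∃ C : ℝ, 0 ≤ C ∧ ∀ a, D a ≤ C * ‖icast a‖ := by
  have hnn : ∀ a, 0 ≤ D a := by
    intro a
    have := hadd a (-a)
    rw [hneg, add_neg_cancel, h0] at this
    linarith
  have hnsmul : ∀ (m : ℕ) a, D (m • a) ≤ m * D a := by
    intro m a
    induction m with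
    | zero => simp [h0]
    | succ m ih =>
      rw [succ_nsmul]
      have := hadd (m • a) a
      push_cast
      linarith
  have hzsmul : ∀ (m : ℤ) a, D (m • a) ≤ |(m : ℝ)| * D a := by
    intro m a
    rcases Int.eq_nat_or_neg m with ⟨k, rfl | rfl⟩
    · simpa using hnsmul k a
    · simpa [hneg] using hnsmul k a
  have hsum : ∀ (s : Finset (Fin n)) (f : Fin n → (Fin n → ℤ)),
      D (∑ i ∈ s, f i) ≤ ∑ i ∈ s, D (f i) := by
    intro s f
    induction s using Finset.induction_on with
    | empty => simp [h0]
    | insert i s hi ih =>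
      rw [Finset.sum_insert hi, Finset.sum_insert hi]
      linarith [hadd (f i) (∑ i ∈ s, f i)]
  refine ⟨∑ i, D (Pi.single i 1), Finset.sum_nonneg fun i _ => hnn _, fun a => ?_⟩
  have h1 : a = ∑ i, a i • (Pi.single i 1 : Fin n → ℤ) := by
    ext j; simp [Finset.sum_apply, Pi.single_apply]
  calc D a = D (∑ i, a i • (Pi.single i 1 : Fin n → ℤ)) := by rw [← h1]
    _ ≤ ∑ i, D (a i • (Pi.single i 1 : Fin n → ℤ)) := hsum _ _
    _ ≤ ∑ i, D (Pi.single i 1) * ‖icast a‖ := by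
      refine Finset.sum_le_sum fun i _ => (hzsmul _ _).trans ?_
      rw [mul_comm]
      exact mul_le_mul_of_nonneg_left (norm_le_pi_norm (icast a) i) (hnn _)
    _ = _ := by rw [Finset.sum_mul]

set_option maxHeartbeats 1000000 in
lemma D_limit {D : (Fin n → ℤ) → ℝ} (hadd : ∀ a b, D (a + b) ≤ D a + D b)
    (hnn : ∀ a, 0 ≤ D a) {C : ℝ} (hC : 0 ≤ C)
    (hup : ∀ a, D a ≤ C * ‖icast a‖) (x : Fin n → ℝ) :
    ∃ l : ℝ, ∀ (b : ℕ → (Fin n → ℤ)) (K : ℝ), (∀ m : ℕ, ‖(m : ℝ) • x - icast (b m)‖ ≤ K) →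
      Tendsto (fun m : ℕ => D (b m) / m) atTop (𝓝 l) := by
  have hlip : ∀ a b, D a ≤ D b + C * ‖icast a - icast b‖ := by
    intro a b
    have h1 := hadd b (a - b)
    rw [add_sub_cancel] at h1
    have h2 := hup (a - b)
    rw [icast_sub] at h2
    linarith
  let F : ℕ → (Fin n → ℤ) := fun m => ifloor ((m : ℝ) • x)
  have hF : ∀ m : ℕ, ‖(m : ℝ) • x - icast (F m)‖ ≤ 1 := fun m => floor_err _
  let u : ℕ → ℝ := fun m => D (F m) + C * 3
  have hu : Subadditive u := by
    intro m l
    have h1 := hlip (F (m + l)) (F m + F l)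
    have h2 := hadd (F m) (F l)
    have h3 : ‖icast (F (m + l)) - icast (F m + F l)‖ ≤ 3 := by
      have : icast (F (m + l)) - icast (F m + F l) =
        ((m : ℝ) • x - icast (F m)) + ((l : ℝ) • x - icast (F l)) -
          (((m + l : ℕ) : ℝ) • x - icast (F (m + l))) := by
        rw [icast_add]; push_cast; module
      rw [this]
      refine (norm_sub_le _ _).trans ?_
      linarith [norm_add_le ((m : ℝ) • x - icast (F m)) ((l : ℝ) • x - icast (F l)), hF m, hF l,
        hF (m + l)]
    have h4 := mul_le_mul_of_nonneg_left h3 hC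
    simp only [u]
    linarith
  have hb : BddBelow (Set.range fun m => u m / m) := by
    refine ⟨0, ?_⟩
    rintro _ ⟨m, rfl⟩
    have := hnn (F m)
    positivity
  refine ⟨hu.lim, fun b K hK => ?_⟩
  have h1 := hu.tendsto_lim hb
  have h2 : Tendsto (fun m : ℕ => D (b m) / m - u m / m) atTop (𝓝 0) := by
    have h3 : Tendsto (fun m : ℕ => (C * (K + 1) + C * 3) / m) atTop (𝓝 0) :=
      tendsto_const_div_atTop_nhds_zero_nat _
    refine squeeze_zero_norm (fun m => ?_) h3
    rw [← sub_div, norm_div, Real.norm_natCast]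
    gcongr
    have e1 := hlip (b m) (F m)
    have e2 := hlip (F m) (b m)
    have e3 : ‖icast (b m) - icast (F m)‖ ≤ K + 1 := by
      have : icast (b m) - icast (F m) =
        ((m : ℝ) • x - icast (F m)) - ((m : ℝ) • x - icast (b m)) := by module
      rw [this]
      refine (norm_sub_le _ _).trans ?_
      linarith [hF m, hK m]
    rw [norm_sub_rev] at e2
    have e4 := mul_le_mul_of_nonneg_left e3 hC
    rw [Real.norm_eq_abs, abs_le]
    simp only [u]
    constructor <;> linarith
  simpa using h2.add h1

set_option maxHeartbeats 2000000 in
theorem exists_asymp {D : (Fin n → ℤ) → ℝ} (hadd : ∀ a b, D (a + b) ≤ D a + D b)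
    (hneg : ∀ a, D (-a) = D a) (h0 : D 0 = 0)
    {M M' : ℝ} (hM : 0 < M) (hlow : ∀ a, ‖icast a‖ ≤ M * D a + M')
    {R : ℝ} (hH : ∀ {ι : Type} [Fintype ι] (a : ι → (Fin n → ℤ)) (r : ℕ),
      (∀ i j, D (a i - a j) ≤ 2 * r) → ∃ b, ∀ i, D (a i - b) ≤ r + R) :
    ∃ (p : (Fin n → ℝ) → ℝ) (c C : ℝ), (∀ x y, p (x + y) ≤ p x + p y) ∧
      (∀ (t : ℝ) x, p (t • x) = |t| * p x) ∧ 0 < c ∧ (∀ x, c * ‖x‖ ≤ p x) ∧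
      (∀ x, p x ≤ C * ‖x‖) ∧ WeakHelly p ∧
      ∀ (T : Matrix (Fin n) (Fin n) ℤ) (K : ℝ), (∀ a, D (T.mulVec a) ≤ D a + K) →
        ∀ x, p ((T.map (Int.castRingHom ℝ)).mulVec x) ≤ p x := by
  have hnn : ∀ a, 0 ≤ D a := by
    intro a
    have := hadd a (-a)
    rw [hneg, add_neg_cancel, h0] at this
    linarith
  obtain ⟨C, hC, hup⟩ := D_upper hadd hneg h0
  choose p hp using D_limit hadd hnn hC hup
  have hp' : ∀ x, Tendsto (fun m : ℕ => D (ifloor ((m : ℝ) • x)) / m) atTop (𝓝 (p x)) :=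
    fun x => hp x _ 1 fun m => floor_err _
  have hpnn : ∀ x, 0 ≤ p x := fun x =>
    ge_of_tendsto' (hp' x) fun m => div_nonneg (hnn _) (Nat.cast_nonneg _)
  have hpadd : ∀ x y, p (x + y) ≤ p x + p y := by
    intro x y
    have h1 := hp (x + y) (fun m => ifloor ((m : ℝ) • x) + ifloor ((m : ℝ) • y)) 2 (by
      intro m
      have : (m : ℝ) • (x + y) - icast (ifloor ((m : ℝ) • x) + ifloor ((m : ℝ) • y)) =
        ((m : ℝ) • x - icast (ifloor ((m : ℝ) • x))) +
        ((m : ℝ) • y - icast (ifloor ((m : ℝ) • y))) := by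
        rw [icast_add]; module
      rw [this]
      refine (norm_add_le _ _).trans ?_
      linarith [floor_err ((m : ℝ) • x), floor_err ((m : ℝ) • y)])
    refine le_of_tendsto_of_tendsto' h1 ((hp' x).add (hp' y)) fun m => ?_
    rw [← add_div]
    gcongr
    exact hadd _ _
  have hpneg : ∀ x, p (-x) = p x := by
    intro x
    have h1 := hp (-x) (fun m => -ifloor ((m : ℝ) • x)) 1 (by
      intro m
      have : (m : ℝ) • (-x) - icast (-ifloor ((m : ℝ) • x)) =
        -((m : ℝ) • x - icast (ifloor ((m : ℝ) • x))) := by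
        rw [icast_neg]; module
      rw [this, norm_neg]
      exact floor_err _)
    simp only [hneg] at h1
    exact tendsto_nhds_unique h1 (hp' x)
  have hp0 : p 0 = 0 := by
    have h1 := hp 0 (fun m => 0) 0 (by intro m; simp; ext i; simp [icast])
    simp only [h0, zero_div] at h1
    exact tendsto_nhds_unique h1 tendsto_const_nhds
  have hppos : ∀ (t : ℝ) x, 0 < t → p (t • x) = t * p x := by
    intro t x ht
    have h1 := hp (t • x) (fun m => ifloor ((⌊t * m⌋₊ : ℝ) • x)) (1 + ‖x‖) (by
      intro m
      have : (m : ℝ) • (t • x) - icast (ifloor ((⌊t * m⌋₊ : ℝ) • x)) =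
        ((⌊t * m⌋₊ : ℝ) • x - icast (ifloor ((⌊t * m⌋₊ : ℝ) • x))) +
          (t * m - (⌊t * m⌋₊ : ℝ)) • x := by module
      rw [this]
      refine (norm_add_le _ _).trans (add_le_add (floor_err _) ?_)
      rw [norm_smul]
      refine mul_le_of_le_one_left (norm_nonneg _) ?_
      rw [Real.norm_eq_abs, abs_le]
      have : 0 ≤ t * m := by positivity
      constructor <;> linarith [Nat.floor_le this, Nat.lt_floor_add_one (t * m)])
    have htop : Tendsto (fun m : ℕ => ⌊t * (m : ℝ)⌋₊) atTop atTop :=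
      tendsto_nat_floor_atTop.comp (tendsto_natCast_atTop_atTop.const_mul_atTop ht)
    have h2 := (hp' x).comp htop
    have h3 : Tendsto (fun m : ℕ => (⌊t * (m : ℝ)⌋₊ : ℝ) / m) atTop (𝓝 t) :=
      (tendsto_nat_floor_mul_div_atTop ht.le).comp tendsto_natCast_atTop_atTop
    have h4 := h3.mul h2
    refine tendsto_nhds_unique h1 (h4.congr' ?_)
    filter_upwards [htop.eventually_gt_atTop 0] with m hm
    have : (⌊t * (m : ℝ)⌋₊ : ℝ) ≠ 0 := by exact_mod_cast hm.ne'
    simp only [Function.comp]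
    field_simp
  have hpsmul : ∀ (t : ℝ) x, p (t • x) = |t| * p x := by
    intro t x
    rcases lt_trichotomy t 0 with ht | rfl | ht
    · rw [abs_of_neg ht, ← hppos _ _ (neg_pos.2 ht), neg_smul, hpneg]
    · simp [hp0]
    · rw [abs_of_pos ht, hppos _ _ ht]
  have hpup : ∀ x, p x ≤ C * ‖x‖ := by
    intro x
    have h1 : Tendsto (fun m : ℕ => C * ‖x‖ + C / m) atTop (𝓝 (C * ‖x‖ + 0)) :=
      tendsto_const_nhds.add (tendsto_const_div_atTop_nhds_zero_nat _)
    rw [add_zero] at h1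
    refine le_of_tendsto_of_tendsto (hp' x) h1 ?_
    filter_upwards [eventually_gt_atTop 0] with m hm
    have hm' : (0 : ℝ) < m := by exact_mod_cast hm
    rw [div_le_iff₀ hm', add_mul, div_mul_cancel₀ _ hm'.ne']
    refine (hup _).trans ?_
    have h2 : ‖icast (ifloor ((m : ℝ) • x))‖ ≤ ‖x‖ * m + 1 := by
      have h3 := norm_sub_le ((m : ℝ) • x) ((m : ℝ) • x - icast (ifloor ((m : ℝ) • x)))
      rw [sub_sub_cancel, norm_smul, Real.norm_natCast] at h3
      linarith [floor_err ((m : ℝ) • x)]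
    linarith [mul_le_mul_of_nonneg_left h2 hC]
  have hplow : ∀ x, M⁻¹ * ‖x‖ ≤ p x := by
    intro x
    have h1 : Tendsto (fun m : ℕ => D (ifloor ((m : ℝ) • x)) / m + (M⁻¹ * (M' + 1)) / m) atTop
        (𝓝 (p x + 0)) :=
      (hp' x).add (tendsto_const_div_atTop_nhds_zero_nat _)
    rw [add_zero] at h1
    refine ge_of_tendsto h1 ?_
    filter_upwards [eventually_gt_atTop 0] with m hm
    have hm' : (0 : ℝ) < m := by exact_mod_cast hm
    rw [← add_div, le_div_iff₀ hm', mul_assoc, inv_mul_le_iff₀ hM, mul_add,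
      mul_inv_cancel_left₀ hM.ne']
    have h2 := hlow (ifloor ((m : ℝ) • x))
    have h3 := norm_add_le ((m : ℝ) • x - icast (ifloor ((m : ℝ) • x))) (icast (ifloor ((m : ℝ) • x)))
    rw [sub_add_cancel, norm_smul, Real.norm_natCast] at h3
    linarith [floor_err ((m : ℝ) • x)]
  have hpD : ∀ a, p (icast a) ≤ D a := by
    intro a
    have h1 := hp (icast a) (fun m => m • a) 0 (by intro m; rw [icast_nsmul]; simp)
    refine le_of_tendsto h1 ?_
    filter_upwards [eventually_gt_atTop 0] with m hm
    have hm' : (0 : ℝ) < m := by exact_mod_cast hm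
    rw [div_le_iff₀ hm']
    clear hm hm'
    induction m with
    | zero => simp [h0]
    | succ m ih =>
      rw [succ_nsmul]
      have := hadd (m • a) a
      push_cast
      linarith
  refine ⟨p, M⁻¹, C, hpadd, hpsmul, inv_pos.2 hM, hplow, hpup, ?_, ?_⟩
  · intro ι _ x hx
    -- slack
    obtain ⟨δ, hδ0, hδ1, hδ⟩ : ∃ δ : ℝ, 0 < δ ∧ δ < 1 ∧ ∀ i j, p (x i - x j) < 2 - 3 * δ := by
      have h1 : Tendsto (fun δ : ℝ => 2 - 3 * δ) (𝓝[>] 0) (𝓝 2) := by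
        have : Tendsto (fun δ : ℝ => 2 - 3 * δ) (𝓝 0) (𝓝 (2 - 3 * 0)) :=
          (continuous_const.sub (continuous_const.mul continuous_id)).tendsto 0
        simp only [mul_zero, sub_zero] at this
        exact this.mono_left nhdsWithin_le_nhds
      have h2 : ∀ᶠ δ : ℝ in 𝓝[>] 0, ∀ i j, p (x i - x j) < 2 - 3 * δ := by
        rw [eventually_all]; intro i
        rw [eventually_all]; intro j
        exact h1.eventually_const_lt (hx i j)
      have h3 : ∀ᶠ δ : ℝ in 𝓝[>] 0, δ < 1 :=
        nhdsWithin_le_nhds (gt_mem_nhds zero_lt_one)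
      obtain ⟨δ, ha, hb, hc⟩ := (h2.and (h3.and self_mem_nhdsWithin)).exists
      exact ⟨δ, hc, hb, ha⟩
    let F : ℕ → ι → (Fin n → ℤ) := fun m i => ifloor ((m : ℝ) • x i)
    have hev : ∀ᶠ m : ℕ in atTop, ∀ i j, D (F m i - F m j) / m < 2 - 3 * δ := by
      rw [eventually_all]; intro i
      rw [eventually_all]; intro j
      refine (hp (x i - x j) (fun m => F m i - F m j) 2 (fun m => ?_)).eventually_lt_const (hδ i j)
      have : (m : ℝ) • (x i - x j) - icast (F m i - F m j) =
        ((m : ℝ) • x i - icast (F m i)) - ((m : ℝ) • x j - icast (F m j)) := by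
        rw [icast_sub]; module
      rw [this]
      refine (norm_sub_le _ _).trans ?_
      linarith [floor_err ((m : ℝ) • x i), floor_err ((m : ℝ) • x j)]
    have hbig : ∀ᶠ m : ℕ in atTop, max 2 (R + C) < δ * (m : ℝ) :=
      (tendsto_natCast_atTop_atTop.const_mul_atTop hδ0).eventually_gt_atTop _
    obtain ⟨m, hm1, hm2, hm3⟩ := (hev.and (hbig.and (eventually_gt_atTop 0))).exists
    have hm' : (0 : ℝ) < m := by exact_mod_cast hm3
    have hm2a := lt_of_le_of_lt (le_max_left _ _) hm2
    have hm2b := lt_of_le_of_lt (le_max_right _ _) hm2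
    have hr0 : 0 ≤ (1 - δ) * m := mul_nonneg (by linarith) hm'.le
    obtain ⟨b, hb⟩ := hH (F m) ⌊(1 - δ) * m⌋₊ (by
      intro i j
      have h1 := hm1 i j
      rw [div_lt_iff₀ hm'] at h1
      have h2 := Nat.lt_floor_add_one ((1 - δ) * m)
      nlinarith)
    refine ⟨(m : ℝ)⁻¹ • icast b, fun i => ?_⟩
    have h1 := hb i
    have h2 := Nat.floor_le hr0
    have h3 := hpD (F m i - b)
    have h4 : x i - (m : ℝ)⁻¹ • icast b =
        (m : ℝ)⁻¹ • (((m : ℝ) • x i - icast (F m i)) + icast (F m i - b)) := by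
      rw [icast_sub, sub_add_sub_cancel, smul_sub, smul_smul, inv_mul_cancel₀ hm'.ne', one_smul]
    rw [h4, hppos _ _ (inv_pos.2 hm'), inv_mul_lt_iff₀ hm']
    have h5 := hpadd ((m : ℝ) • x i - icast (F m i)) (icast (F m i - b))
    have h6 := hpup ((m : ℝ) • x i - icast (F m i))
    have h7 := mul_le_mul_of_nonneg_left (floor_err ((m : ℝ) • x i)) hC
    have h8 : p ((m : ℝ) • x i - icast (F m i)) ≤ C := by
      refine h6.trans (h7.trans (by simp))
    linarith
  · intro T K hT x
    have hTc : ∀ a, (T.map (Int.castRingHom ℝ)).mulVec (icast a) = icast (T.mulVec a) := by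
      intro a
      ext i
      simp [Matrix.mulVec, dotProduct, icast]
    let L := LinearMap.toContinuousLinearMap (Matrix.mulVecLin (T.map (Int.castRingHom ℝ)))
    have hL : ∀ v, L v = (T.map (Int.castRingHom ℝ)).mulVec v := fun v => rfl
    rw [← hL]
    have h1 := hp (L x) (fun m => T.mulVec (ifloor ((m : ℝ) • x))) ‖L‖ (by
      intro m
      rw [← hTc, ← hL, ← map_smul, ← map_sub]
      refine (L.le_opNorm _).trans ?_
      exact mul_le_of_le_one_right (norm_nonneg _) (floor_err _))
    have h2 : Tendsto (fun m : ℕ => D (ifloor ((m : ℝ) • x)) / m + K / m) atTop (𝓝 (p x + 0)) :=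
      (hp' x).add (tendsto_const_div_atTop_nhds_zero_nat _)
    rw [add_zero] at h2
    refine le_of_tendsto_of_tendsto' h1 h2 fun m => ?_
    rw [← add_div]
    gcongr
    exact hT _

end asymp

section graph

lemma act_dist {G : Type*} [Group G] {V : Type} {Γ : SimpleGraph V} {act : G →* Equiv.Perm V}
    (hconn : Γ.Connected)
    (hadj : ∀ (g : G) (u v : V), Γ.Adj u v → Γ.Adj (act g u) (act g v)) (g : G) (u v : V) :
    Γ.dist (act g u) (act g v) = Γ.dist u v := by
  have key : ∀ (g : G) (u v : V), Γ.dist (act g u) (act g v) ≤ Γ.dist u v := by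
    intro g u v
    obtain ⟨w, hw⟩ := hconn.exists_walk_length_eq_dist u v
    let f : Γ →g Γ := ⟨act g, fun h => hadj g _ _ h⟩
    rw [← hw, ← SimpleGraph.Walk.length_map f w]
    exact SimpleGraph.dist_le _
  apply le_antisymm (key g u v)
  have := key g⁻¹ (act g u) (act g v)
  rw [← Equiv.Perm.mul_apply, ← Equiv.Perm.mul_apply, ← map_mul, inv_mul_cancel, map_one] at this
  simpa using this

end graph

/-- If a virtually `ℤⁿ` group is Helly, then its point group can be conjugated into the
group of linear isometries of `ℝⁿ` with the supremum norm. -/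
theorem helly_point_group_conj_into_linfty_isometries
    {G : Type*} [Group G] (n : ℕ) (A : Subgroup G) (hA : A.Normal)
    (hFI : A.FiniteIndex) (e : A ≃* Multiplicative (Fin n → ℤ))
    (ρ : G →* Matrix.GeneralLinearGroup (Fin n) ℤ)
    (hρ : ∀ (g : G) (a : A),
      Multiplicative.toAdd (e ⟨g * (a : G) * g⁻¹, hA.conj_mem (a : G) a.2 g⟩) =
        Matrix.mulVec (ρ g : Matrix (Fin n) (Fin n) ℤ) (Multiplicative.toAdd (e a)))
    (hHelly : IsHellyGroup G) :
    ∃ φ : Matrix.GeneralLinearGroup (Fin n) ℝ,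
      ∀ (g : G) (x : Fin n → ℝ),
        ‖Matrix.mulVec ((φ * Matrix.GeneralLinearGroup.map (Int.castRingHom ℝ) (ρ g) * φ⁻¹ :
            Matrix.GeneralLinearGroup (Fin n) ℝ) : Matrix (Fin n) (Fin n) ℝ) x‖ = ‖x‖ := by
  classical
  obtain ⟨V, Γ, act, ⟨hconn, hballs⟩, hadj, hproper, S, hS⟩ := hHelly
  have hiso := act_dist hconn hadj
  have htri : ∀ u v w, Γ.dist u w ≤ Γ.dist u v + Γ.dist v w := fun u v w => hconn.dist_triangle
  obtain ⟨v0⟩ := hconn.nonempty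
  let τ : (Fin n → ℤ) → G := fun a => (e.symm (Multiplicative.ofAdd a) : A)
  have hτadd : ∀ a b, τ (a + b) = τ a * τ b := fun a b => by simp [τ]
  have hτ0 : τ 0 = 1 := by simp [τ]
  have hτneg : ∀ a, τ (-a) = (τ a)⁻¹ := fun a => by simp [τ]
  have hτinj : Function.Injective τ := by
    intro a b h
    simpa [τ] using h
  have hτsurj : ∀ g ∈ A, ∃ a, τ a = g := by
    intro g hg
    exact ⟨Multiplicative.toAdd (e ⟨g, hg⟩), by simp [τ]⟩
  let D : (Fin n → ℤ) → ℕ := fun a => Γ.dist v0 (act (τ a) v0)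
  have hDdist : ∀ a b, Γ.dist (act (τ a) v0) (act (τ b) v0) = D (b - a) := by
    intro a b
    have h : τ b = τ a * τ (b - a) := by rw [← hτadd, add_sub_cancel]
    rw [h, map_mul, Equiv.Perm.mul_apply, hiso]
  have hD0 : D 0 = 0 := by simp [D, hτ0]
  have hDneg : ∀ a, D (-a) = D a := by
    intro a
    have h1 := hDdist a 0
    have h2 := hDdist 0 a
    rw [zero_sub] at h1
    rw [sub_zero] at h2
    rw [← h1, ← h2, SimpleGraph.dist_comm]
  have hDadd : ∀ a b, D (a + b) ≤ D a + D b := by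
    intro a b
    have h1 := hDdist a (a + b)
    rw [add_sub_cancel_left] at h1
    have h2 := htri v0 (act (τ a) v0) (act (τ (a + b)) v0)
    rw [h1] at h2
    exact h2
  -- cocompactness of `A`
  obtain ⟨R, hR⟩ : ∃ R : ℕ, ∀ w : V, ∃ a, Γ.dist w (act (τ a) v0) ≤ R := by
    have : Finite (G ⧸ A) := inferInstance
    obtain ⟨R, hR⟩ := Finite.exists_le
      (fun q : (G ⧸ A) × S => Γ.dist (act (Quotient.out q.1) (q.2 : V)) v0)
    refine ⟨R, fun w => ?_⟩
    obtain ⟨g, hg⟩ := hS w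
    let t : G := Quotient.out (g⁻¹ : G ⧸ A)
    have ht : g⁻¹ * t⁻¹ ∈ A := by
      have h1 : t⁻¹ * g⁻¹ ∈ A := QuotientGroup.eq.1 (QuotientGroup.out_eq' (g⁻¹ : G ⧸ A))
      have h2 := hA.conj_mem _ h1 t
      simpa [mul_assoc] using h2
    obtain ⟨a, ha⟩ := hτsurj _ ht
    refine ⟨a, ?_⟩
    have h3 : w = act (τ a) (act t (act g w)) := by
      rw [ha, ← Equiv.Perm.mul_apply, ← Equiv.Perm.mul_apply, ← map_mul, ← map_mul]
      simp
    have h4 : Γ.dist w (act (τ a) v0) = Γ.dist (act t (act g w)) v0 := by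
      conv_lhs => rw [h3]
      rw [hiso]
    rw [h4]
    exact hR (((g⁻¹ : G) : G ⧸ A), ⟨act g w, hg⟩)
  -- properness
  obtain ⟨M, hM0, hM⟩ : ∃ M : ℝ, 0 < M ∧ ∀ a, D a ≤ 2 * R + 1 → ‖icast a‖ ≤ M := by
    have h1 : {a | D a ≤ 2 * R + 1}.Finite :=
      (hproper v0 (2 * R + 1)).preimage (f := τ) hτinj.injOn
    obtain ⟨M, hM⟩ := (h1.image (fun a => ‖icast a‖)).bddAbove
    exact ⟨max M 1, lt_max_of_lt_right one_pos,
      fun a ha => (hM ⟨a, ha, rfl⟩).trans (le_max_left _ _)⟩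
  choose β hβ using hR
  have hadjβ : ∀ u w, Γ.Adj u w → ‖icast (β u) - icast (β w)‖ ≤ M := by
    intro u w h
    rw [← icast_sub]
    apply hM
    rw [← hDdist]
    have h1 := htri (act (τ (β w)) v0) w (act (τ (β u)) v0)
    have h2 := htri w u (act (τ (β u)) v0)
    have h3 := hβ u
    have h4 := hβ w
    rw [SimpleGraph.dist_comm] at h4
    have h5 := SimpleGraph.dist_eq_one_iff_adj.2 h.symm
    omega
  have hwalk : ∀ u w (q : Γ.Walk u w), ‖icast (β u) - icast (β w)‖ ≤ M * q.length := by
    intro u w q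
    induction q with
    | nil => simp
    | @cons u v w h q ih =>
      have h1 := hadjβ _ _ h
      have h2 := norm_sub_le_norm_sub_add_norm_sub (icast (β u)) (icast (β v)) (icast (β w))
      rw [SimpleGraph.Walk.length_cons]
      push_cast
      linarith
  have hlow : ∀ a, ‖icast a‖ ≤ M * (D a : ℝ) + 2 * M := by
    intro a
    obtain ⟨q, hq⟩ := hconn.exists_walk_length_eq_dist v0 (act (τ a) v0)
    have h1 := hwalk _ _ q
    rw [hq] at h1
    have h2 : ‖icast (β v0)‖ ≤ M := by
      apply hM
      have := hβ v0
      change D (β v0) ≤ R at this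
      omega
    have h3 : ‖icast (β (act (τ a) v0)) - icast a‖ ≤ M := by
      rw [← icast_sub]
      apply hM
      rw [← hDdist]
      have := hβ (act (τ a) v0)
      omega
    have h4 : icast a = icast (β v0) - (icast (β v0) - icast (β (act (τ a) v0)))
      - (icast (β (act (τ a) v0)) - icast a) := by abel
    have h5 := norm_sub_le (icast (β v0) - (icast (β v0) - icast (β (act (τ a) v0))))
      (icast (β (act (τ a) v0)) - icast a)
    have h6 := norm_sub_le (icast (β v0)) (icast (β v0) - icast (β (act (τ a) v0)))
    rw [← h4] at h5
    change _ ≤ M * (D a : ℝ) at h1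
    linarith
  obtain ⟨p, c, C, hpadd, hpsmul, hc, hplow, hpup, hpH, hpinv⟩ :=
    exists_asymp (D := fun a => (D a : ℝ)) (R := (R : ℝ)) (M := M) (M' := 2 * M)
      (fun a b => by exact_mod_cast hDadd a b) (fun a => by simp only [hDneg])
      (by simp only [hD0, Nat.cast_zero]) hM0 hlow (by
        intro ι _ a r har
        obtain ⟨w, hw⟩ := hballs (fun i => act (τ (a i)) v0) (fun _ => r) (by
          intro i j
          rw [hDdist]
          have := har j i
          have h2 : D (a j - a i) ≤ 2 * r := by exact_mod_cast this
          omega)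
        refine ⟨β w, fun i => ?_⟩
        have h1 := hDdist (β w) (a i)
        have h2 := htri (act (τ (β w)) v0) w (act (τ (a i)) v0)
        have h3 := hβ w
        rw [SimpleGraph.dist_comm] at h3
        have h4 := hw i
        have h5 : D (a i - β w) ≤ r + R := by omega
        exact_mod_cast h5)
  obtain ⟨φ, hφ⟩ := exists_linfty hpadd hpsmul hc hplow hpup hpH
  have hinv1 : ∀ (g : G) x,
      p (((ρ g : Matrix (Fin n) (Fin n) ℤ).map (Int.castRingHom ℝ)).mulVec x) ≤ p x := by
    intro g x
    refine hpinv (ρ g) (2 * (Γ.dist (act g⁻¹ v0) v0 : ℝ)) (fun a => ?_) x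
    have h1 : τ (Matrix.mulVec (ρ g : Matrix (Fin n) (Fin n) ℤ) a) = g * τ a * g⁻¹ := by
      have := hρ g (e.symm (Multiplicative.ofAdd a))
      simp only [MulEquiv.apply_symm_apply, toAdd_ofAdd] at this
      simp only [τ]
      rw [← this]
      simp
    have h2 : D (Matrix.mulVec (ρ g : Matrix (Fin n) (Fin n) ℤ) a)
        = Γ.dist (act g⁻¹ v0) (act (τ a) (act g⁻¹ v0)) := by
      simp only [D]
      rw [h1, ← hiso g (act g⁻¹ v0)]
      simp only [← Equiv.Perm.mul_apply, ← map_mul, mul_assoc, mul_inv_cancel, map_one,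
        Equiv.Perm.one_apply]
    have h3 := htri (act g⁻¹ v0) v0 (act (τ a) (act g⁻¹ v0))
    have h4 := htri v0 (act (τ a) v0) (act (τ a) (act g⁻¹ v0))
    rw [hiso, SimpleGraph.dist_comm (u := v0) (v := act g⁻¹ v0)] at h4
    have h5 : D (Matrix.mulVec (ρ g : Matrix (Fin n) (Fin n) ℤ) a)
      ≤ D a + 2 * Γ.dist (act g⁻¹ v0) v0 := by
      rw [h2]
      simp only [D]
      omega
    exact_mod_cast h5
  let σ : G →* Matrix.GeneralLinearGroup (Fin n) ℝ :=
    (Matrix.GeneralLinearGroup.map (Int.castRingHom ℝ)).comp ρ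
  have hinv2 : ∀ (g : G) x, p ((σ g : Matrix (Fin n) (Fin n) ℝ).mulVec x) ≤ p x := hinv1
  have hinv : ∀ (g : G) x, p ((σ g : Matrix (Fin n) (Fin n) ℝ).mulVec x) = p x := by
    intro g x
    apply le_antisymm (hinv2 g x)
    have := hinv2 g⁻¹ ((σ g : Matrix (Fin n) (Fin n) ℝ).mulVec x)
    rwa [Matrix.mulVec_mulVec, ← Units.val_mul, ← map_mul, inv_mul_cancel, map_one, Units.val_one,
      Matrix.one_mulVec] at this
  refine ⟨φ, fun g x => ?_⟩
  change ‖Matrix.mulVec ((φ * σ g * φ⁻¹ : Matrix.GeneralLinearGroup (Fin n) ℝ) :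
    Matrix (Fin n) (Fin n) ℝ) x‖ = ‖x‖
  rw [Units.val_mul, Units.val_mul, ← Matrix.mulVec_mulVec, ← Matrix.mulVec_mulVec, hφ, hinv, ← hφ,
    Matrix.mulVec_mulVec, ← Units.val_mul, mul_inv_cancel, Units.val_one, Matrix.one_mulVec]
end

section
/- Let G be a group with a normal subgroup A of finite index and a fixed group isomorphism between A and ℤⁿ, and let ρ : G → GL(n, ℤ) be the conjugation action. Suppose there exists φ ∈ GL(n, ℝ) such that φ ρ(g) φ⁻¹ is a linear isometry of (Fin n → ℝ, ‖·‖∞) for every g ∈ G. Then there is a homomorphism from G to the group of (affine) isometries of (Fin n → ℝ, ‖·‖∞) whose induced action is proper (for every R ≥ 0 the set {g ∈ G : ‖g·0‖∞ ≤ R} is finite) and cocompact (there exists R ≥ 0 such that every point of ℝⁿ lies within ‖·‖∞-distance R of the orbit of 0). -/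
open Classical in
/-- The integer crossed homomorphism obtained by averaging over the cosets. -/
theorem exists_crossed_hom
    {G : Type*} [Group G] (n : ℕ) (A : Subgroup G) (hA : A.Normal)
    (hFI : A.FiniteIndex) (e : A ≃* Multiplicative (Fin n → ℤ))
    (ρ : G →* Matrix.GeneralLinearGroup (Fin n) ℤ)
    (hρ : ∀ (g : G) (a : A),
      Multiplicative.toAdd (e ⟨g * (a : G) * g⁻¹, hA.conj_mem (a : G) a.2 g⟩) =
        Matrix.mulVec (ρ g : Matrix (Fin n) (Fin n) ℤ) (Multiplicative.toAdd (e a))) :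
    ∃ (m : ℕ) (C : G → Fin n → ℤ), 0 < m ∧
      (∀ g h, C (g * h) = Matrix.mulVec (ρ g : Matrix (Fin n) (Fin n) ℤ) (C h) + C g) ∧
      (∀ a : A, C a = m • Multiplicative.toAdd (e a)) := by
  have : Fintype (G ⧸ A) := Fintype.ofFinite _
  let s : G ⧸ A → G := Quotient.out
  have hs : ∀ q : G ⧸ A, ((s q : G) : G ⧸ A) = q := fun q => QuotientGroup.out_eq' q
  have hb : ∀ (g : G) (q : G ⧸ A), g * s q * (s ((g : G ⧸ A) * q))⁻¹ ∈ A := by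
    intro g q
    rw [← QuotientGroup.eq_one_iff]
    simp [hs]
  let b : G → G ⧸ A → A := fun g q => ⟨_, hb g q⟩
  refine ⟨Fintype.card (G ⧸ A), fun g => ∑ q, Multiplicative.toAdd (e (b g q)),
    Fintype.card_pos, ?_, ?_⟩
  · intro g h
    have key : ∀ q, Multiplicative.toAdd (e (b (g * h) q)) =
        Matrix.mulVec (ρ g : Matrix (Fin n) (Fin n) ℤ) (Multiplicative.toAdd (e (b h q))) +
          Multiplicative.toAdd (e (b g ((h : G ⧸ A) * q))) := by
      intro q
      rw [← hρ, ← toAdd_mul, ← map_mul]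
      congr 2
      apply Subtype.ext
      simp [b, mul_assoc]
    simp only [key, Finset.sum_add_distrib]
    congr 1
    · exact (map_sum (Matrix.mulVecLin (ρ g : Matrix (Fin n) (Fin n) ℤ)) _ _).symm
    · exact Fintype.sum_equiv (Equiv.mulLeft (h : G ⧸ A)) _ _ (fun q => rfl)
  · intro a
    have : ∀ q, b a q = a := by
      intro q
      apply Subtype.ext
      have h1 : ((a : G) : G ⧸ A) = 1 := (QuotientGroup.eq_one_iff _).2 a.2
      simp [b, h1]
    simp [this]

/-- Integer vectors of bounded size form a finite set. -/
theorem finite_int_vec (n : ℕ) (K : ℝ) :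
    {v : Fin n → ℤ | ‖(fun i => (v i : ℝ))‖ ≤ K}.Finite := by
  refine Set.Finite.subset ((isCompact_closedBall (0 : Fin n → ℤ) K).finite_of_discrete) ?_
  intro v hv
  have hK : 0 ≤ K := (norm_nonneg _).trans hv
  rw [mem_closedBall_zero_iff, pi_norm_le_iff_of_nonneg hK]
  intro i
  have := (pi_norm_le_iff_of_nonneg hK).1 hv i
  rw [← Int.norm_cast_real]; exact this

/-- If the point group of a virtually `ℤⁿ` group can be conjugated into the group of linear
isometries of `ℝⁿ` with the supremum norm, then the group acts properly and cocompactly by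
(affine) isometries on `ℝⁿ` with the supremum norm. -/
theorem proper_cocompact_linfty_action_of_point_group_conj
    {G : Type*} [Group G] (n : ℕ) (A : Subgroup G) (hA : A.Normal)
    (hFI : A.FiniteIndex) (e : A ≃* Multiplicative (Fin n → ℤ))
    (ρ : G →* Matrix.GeneralLinearGroup (Fin n) ℤ)
    (hρ : ∀ (g : G) (a : A),
      Multiplicative.toAdd (e ⟨g * (a : G) * g⁻¹, hA.conj_mem (a : G) a.2 g⟩) =
        Matrix.mulVec (ρ g : Matrix (Fin n) (Fin n) ℤ) (Multiplicative.toAdd (e a)))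
    (hφ : ∃ φ : Matrix.GeneralLinearGroup (Fin n) ℝ,
      ∀ (g : G) (x : Fin n → ℝ),
        ‖Matrix.mulVec ((φ * Matrix.GeneralLinearGroup.map (Int.castRingHom ℝ) (ρ g) * φ⁻¹ :
            Matrix.GeneralLinearGroup (Fin n) ℝ) : Matrix (Fin n) (Fin n) ℝ) x‖ = ‖x‖) :
    ∃ f : G →* ((Fin n → ℝ) ≃ᵢ ((Fin n) → ℝ)),
      (∀ R : ℝ, 0 ≤ R → {g : G | ‖(f g) 0‖ ≤ R}.Finite) ∧
      (∃ R : ℝ, 0 ≤ R ∧ ∀ x : Fin n → ℝ, ∃ g : G, ‖x - (f g) 0‖ ≤ R) := by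
  obtain ⟨φ, hφ⟩ := hφ
  obtain ⟨m, C, hm, hC, hCA⟩ := exists_crossed_hom n A hA hFI e ρ hρ
  have hm' : (m : ℝ) ≠ 0 := by positivity
  let M : G →* Matrix.GeneralLinearGroup (Fin n) ℝ :=
    { toFun := fun g => φ * Matrix.GeneralLinearGroup.map (Int.castRingHom ℝ) (ρ g) * φ⁻¹
      map_one' := by simp
      map_mul' := by intro g h; simp [mul_assoc] }
  let Φ : Matrix (Fin n) (Fin n) ℝ := φ
  let Ψ : Matrix (Fin n) (Fin n) ℝ := (φ⁻¹ : Matrix.GeneralLinearGroup (Fin n) ℝ)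
  have hΦΨ : Φ * Ψ = 1 := by
    have := congrArg Units.val (mul_inv_cancel φ)
    exact this
  have hΨΦ : Ψ * Φ = 1 := by
    have := congrArg Units.val (inv_mul_cancel φ)
    exact this
  let c : G → Fin n → ℝ := fun g => (m : ℝ)⁻¹ • (fun i => (C g i : ℝ))
  let P : G → Matrix (Fin n) (Fin n) ℝ := fun g =>
    (ρ g : Matrix (Fin n) (Fin n) ℤ).map (Int.castRingHom ℝ)
  have hM : ∀ g, (M g : Matrix (Fin n) (Fin n) ℝ) = Φ * P g * Ψ := fun g => rfl
  have hc : ∀ g h, c (g * h) = Matrix.mulVec (P g) (c h) + c g := by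
    intro g h
    simp only [c, Matrix.mulVec_smul, ← smul_add]
    congr 1
    ext i
    simp [hC, P, Matrix.mulVec, dotProduct]
  have hcA : ∀ a : A, c a = fun i => ((Multiplicative.toAdd (e a) i : ℤ) : ℝ) := by
    intro a
    ext i
    simp [c, hCA, hm']
  let F : G → (Fin n → ℝ) → (Fin n → ℝ) := fun g x =>
    Matrix.mulVec (M g : Matrix (Fin n) (Fin n) ℝ) x + Matrix.mulVec Φ (c g)
  have hFmul : ∀ g h x, F (g * h) x = F g (F h x) := by
    intro g h x
    have h1 : Matrix.mulVec (M g : Matrix (Fin n) (Fin n) ℝ) (Matrix.mulVec Φ (c h)) =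
        Matrix.mulVec Φ (Matrix.mulVec (P g) (c h)) := by
      rw [hM, Matrix.mulVec_mulVec, Matrix.mulVec_mulVec, Matrix.mul_assoc, hΨΦ, Matrix.mul_one]
    simp only [F, hc, Matrix.mulVec_add, h1, map_mul, Units.val_mul, ← Matrix.mulVec_mulVec]
    abel
  have hc1 : c 1 = 0 := by
    have := hcA 1
    ext i; simpa using congrFun this i
  have hF1 : ∀ x, F 1 x = x := by
    intro x
    simp [F, hc1]
  have hFiso : ∀ g, Isometry (F g) := by
    intro g
    refine Isometry.of_dist_eq fun x y => ?_
    simp only [F, dist_eq_norm]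
    rw [add_sub_add_right_eq_sub, ← Matrix.mulVec_sub]
    exact hφ g _
  let f : G →* ((Fin n → ℝ) ≃ᵢ ((Fin n) → ℝ)) :=
    { toFun := fun g => IsometryEquiv.mk' (F g) (F g⁻¹)
        (fun x => by rw [← hFmul, mul_inv_cancel, hF1]) (hFiso g)
      map_one' := by ext1 x; exact hF1 x
      map_mul' := by intro g h; ext1 x; exact hFmul g h x }
  have hf0 : ∀ g, f g 0 = Matrix.mulVec Φ (c g) := by
    intro g
    change F g 0 = _
    simp [F]
  let LΦ : (Fin n → ℝ) →L[ℝ] (Fin n → ℝ) := LinearMap.toContinuousLinearMap (Matrix.mulVecLin Φ)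
  let LΨ : (Fin n → ℝ) →L[ℝ] (Fin n → ℝ) := LinearMap.toContinuousLinearMap (Matrix.mulVecLin Ψ)
  have hLΦ : ∀ x, ‖Matrix.mulVec Φ x‖ ≤ ‖LΦ‖ * ‖x‖ := fun x => LΦ.le_opNorm x
  have hLΨ : ∀ x, ‖Matrix.mulVec Ψ x‖ ≤ ‖LΨ‖ * ‖x‖ := fun x => LΨ.le_opNorm x
  refine ⟨f, ?_, ?_⟩
  · intro R hR
    have hfin : ((Set.univ : Set (G ⧸ A)) ×ˢ
        {v : Fin n → ℤ | ‖(fun i => (v i : ℝ))‖ ≤ m * (‖LΨ‖ * R)}).Finite :=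
      Set.finite_univ.prod (finite_int_vec n _)
    have hinj : Function.Injective (fun g : G => ((g : G ⧸ A), C g)) := by
      intro g h hgh
      simp only [Prod.mk.injEq] at hgh
      obtain ⟨h1, h2⟩ := hgh
      have hmem : g * h⁻¹ ∈ A := by
        rw [← QuotientGroup.eq_one_iff]
        simp [h1]
      have h8 : C (h * (h⁻¹ * (g * h⁻¹) * h)) = _ := hC h _
      have h9 : h⁻¹ * (g * h⁻¹) * h ∈ A := by
        simpa using hA.conj_mem _ hmem h⁻¹
      have h10 : C (h⁻¹ * (g * h⁻¹) * h) = 0 := by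
        have h11 : h * (h⁻¹ * (g * h⁻¹) * h) = g := by group
        rw [h11, h2, right_eq_add] at h8
        have h12 := congrArg (Matrix.mulVec ((ρ h)⁻¹ : Matrix.GeneralLinearGroup (Fin n) ℤ).1) h8
        rw [Matrix.mulVec_mulVec, Matrix.mulVec_zero] at h12
        have h13 := congrArg Units.val (inv_mul_cancel (ρ h))
        rw [Units.val_mul] at h13
        rw [h13] at h12
        simpa using h12
      have h14 := hCA ⟨_, h9⟩
      rw [h10] at h14
      have h15 : Multiplicative.toAdd (e ⟨_, h9⟩) = 0 :=
        (smul_eq_zero.1 h14.symm).resolve_left hm.ne'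
      have h16 : (⟨_, h9⟩ : A) = 1 := by
        apply e.injective
        rw [map_one]
        exact h15
      have h17 : h⁻¹ * (g * h⁻¹) * h = 1 := congrArg Subtype.val h16
      have h18 : h⁻¹ * g = 1 := by
        rw [← h17]; group
      exact (inv_mul_eq_one.1 h18).symm
    refine (hfin.preimage hinj.injOn).subset ?_
    intro g hg
    refine ⟨Set.mem_univ _, ?_⟩
    change ‖(fun i => (C g i : ℝ))‖ ≤ _
    have h1 : (fun i => (C g i : ℝ)) = (m : ℝ) • Matrix.mulVec Ψ (f g 0) := by
      rw [hf0, Matrix.mulVec_mulVec, hΨΦ, Matrix.one_mulVec]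
      simp only [c]
      rw [smul_inv_smul₀ hm']
    rw [h1, norm_smul, Real.norm_natCast]
    have hg' : ‖f g 0‖ ≤ R := hg
    have := hLΨ (f g 0)
    gcongr
    exact this.trans (by gcongr)
  · refine ⟨‖LΦ‖, norm_nonneg _, fun x => ?_⟩
    let y := Matrix.mulVec Ψ x
    let a : A := e.symm (Multiplicative.ofAdd (fun i => ⌊y i⌋))
    refine ⟨a, ?_⟩
    have hx : x = Matrix.mulVec Φ y := by
      simp only [y]
      rw [Matrix.mulVec_mulVec, hΦΨ, Matrix.one_mulVec]
    have hca : c a = fun i => ((⌊y i⌋ : ℤ) : ℝ) := by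
      rw [hcA]; simp [a]
    rw [hf0, hca, hx, ← Matrix.mulVec_sub]
    refine (hLΦ _).trans ?_
    refine mul_le_of_le_one_right (norm_nonneg _) ?_
    rw [pi_norm_le_iff_of_nonneg zero_le_one]
    intro i
    rw [Real.norm_eq_abs, Pi.sub_apply, abs_le]
    constructor
    · linarith [Int.floor_le (y i)]
    · linarith [Int.lt_floor_add_one (y i)]
end

section
/- Let G be a group acting properly and cocompactly by graph automorphisms on a Helly graph. If G has a nilpotent subgroup of finite index, then G has an abelian subgroup of finite index. -/
namespace HellyAux

/-- conjugate function -/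
noncomputable def star {V : Type*} (d : V → V → ℝ) (f : V → ℝ) (u : V) : ℝ := ⨆ v, (d u v - f v)

lemma le_star {V : Type*} {d : V → V → ℝ} {f : V → ℝ} (h : ∀ u v, d u v ≤ f u + f v) (u v : V) :
    d u v - f v ≤ star d f u := by
  refine le_ciSup (f := fun v => d u v - f v) ⟨f u, ?_⟩ v
  rintro _ ⟨w, rfl⟩
  have := h u w
  simp only
  linarith

lemma star_le {V : Type*} [Nonempty V] {d : V → V → ℝ} {f : V → ℝ} {u : V} {c : ℝ}
    (h : ∀ v, d u v - f v ≤ c) : star d f u ≤ c := ciSup_le h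

lemma iterate {V : Type*} [Nonempty V] {d : V → V → ℝ} (d0 : ∀ u, d u u = 0)
    (dsymm : ∀ u v, d u v = d v u)
    {f : V → ℝ} (h : ∀ u v, d u v ≤ f u + f v) (j : ℕ) :
    ∃ g : V → ℝ, (∀ u v, d u v ≤ g u + g v) ∧ (∀ u, g u ≤ f u) ∧
      (∀ u, g u - star d g u ≤ 2 * f u / 2 ^ j) ∧
      ∀ σ : V → V, Function.Surjective σ → (∀ u v, d (σ u) (σ v) = d u v) →
        (∀ u, |f (σ u) - f u| ≤ 1) → ∀ u, |g (σ u) - g u| ≤ 1 := by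
  induction j with
  | zero =>
    refine ⟨f, h, fun _ => le_rfl, fun u => ?_, fun _ _ _ h => h⟩
    have := le_star h u u
    rw [d0] at this
    simp
    linarith
  | succ j ih =>
    obtain ⟨g, g1, g2, g3, g4⟩ := ih
    have hs : ∀ u, star d g u ≤ g u := fun u => star_le fun v => by linarith [g1 u v]
    have hle : ∀ u, (g u + star d g u) / 2 ≤ g u := fun u => by linarith [hs u]
    have hD : ∀ u v, d u v ≤ (g u + star d g u) / 2 + (g v + star d g v) / 2 := by
      intro u v
      have h1 := le_star g1 u v
      have h2 := le_star g1 v u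
      rw [dsymm v u] at h2
      linarith
    refine ⟨fun u => (g u + star d g u) / 2, hD, fun u => (hle u).trans (g2 u), fun u => ?_, ?_⟩
    · have : star d g u ≤ star d (fun u => (g u + star d g u) / 2) u := by
        refine star_le fun v => ?_
        have := le_star hD u v
        linarith [hle v]
      have h3 := g3 u
      have : 2 * f u / 2 ^ (j + 1) = (2 * f u / 2 ^ j) / 2 := by rw [pow_succ]; field_simp
      rw [this]
      simp only
      linarith
    · intro σ hσ hi hf u
      have hg := g4 σ hσ hi hf
      have a1 : star d g (σ u) ≤ star d g u + 1 := by
        refine star_le fun v => ?_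
        obtain ⟨w, rfl⟩ := hσ v
        rw [hi]
        have := le_star g1 u w
        have := abs_le.1 (hg w)
        linarith
      have a2 : star d g u ≤ star d g (σ u) + 1 := by
        refine star_le fun w => ?_
        have := le_star g1 (σ u) (σ w)
        rw [hi] at this
        have := abs_le.1 (hg w)
        linarith
      have := abs_le.1 (hg u)
      simp only
      rw [abs_le]
      constructor <;> linarith

section action
variable {G : Type*} [Group G] {V : Type} {Γ : SimpleGraph V} {act : G →* Equiv.Perm V}

lemma dist_act (hc : Γ.Connected) (hA : ∀ (g : G) (u v : V), Γ.Adj u v → Γ.Adj (act g u) (act g v))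
    (g : G) (u v : V) : Γ.dist (act g u) (act g v) = Γ.dist u v := by
  have key : ∀ (g : G) (u v : V), Γ.dist (act g u) (act g v) ≤ Γ.dist u v := by
    intro g u v
    obtain ⟨w, hw⟩ := hc.exists_walk_length_eq_dist u v
    let φ : Γ →g Γ := ⟨act g, fun {a b} h => hA g a b h⟩
    have := SimpleGraph.dist_le (w.map φ)
    rw [SimpleGraph.Walk.length_map, hw] at this
    exact this
  refine le_antisymm (key g u v) ?_
  simpa using key g⁻¹ (act g u) (act g v)

lemma core (hH : IsHellyGraph Γ) (hP : IsProperCocompactGraphAction Γ act) :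
    ∃ M : ℕ, ∀ (f : V → ℝ) (K : Set G), (∀ u v, (Γ.dist u v : ℝ) ≤ f u + f v) →
      (∀ u v, f u ≤ f v + Γ.dist u v) → (∀ k ∈ K, ∀ u, |f (act k u) - f u| ≤ 1) →
      K.Finite ∧ K.ncard ≤ M := by
  obtain ⟨hc, hh⟩ := hH
  obtain ⟨hA, hfin, S, hS⟩ := hP
  have hB : (⋃ s ∈ S, {g : G | Γ.dist s (act g s) ≤ 5}).Finite :=
    S.finite_toSet.biUnion fun s _ => hfin s 5
  refine ⟨(⋃ s ∈ S, {g : G | Γ.dist s (act g s) ≤ 5}).ncard, fun f K hD hL hK => ?_⟩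
  have := hc.nonempty
  obtain ⟨u₀⟩ := hc.nonempty
  obtain ⟨j, hj⟩ := pow_unbounded_of_one_lt (2 * (2 * f u₀ + 1)) (one_lt_two)
  obtain ⟨g, g1, g2, g3, g4⟩ := iterate (d := fun u v => (Γ.dist u v : ℝ)) (by simp)
    (fun u v => by rw [SimpleGraph.dist_comm]) hD j
  have g0 : ∀ u, 0 ≤ g u := fun u => by
    have := g1 u u
    simp at this
    linarith
  obtain ⟨x, hx⟩ := hh (fun v : V => v) (fun v => ⌈g v⌉₊) (by
    intro u v
    have h1 := g1 u v
    have h2 := Nat.le_ceil (g u)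
    have h3 := Nat.le_ceil (g v)
    have : (Γ.dist u v : ℝ) ≤ ((⌈g u⌉₊ + ⌈g v⌉₊ : ℕ) : ℝ) := by push_cast; linarith
    exact_mod_cast this)
  have hx' : ∀ v, (Γ.dist x v : ℝ) ≤ g v + 1 := fun v =>
    (Nat.cast_le.2 (hx v)).trans (Nat.ceil_lt_add_one (g0 v)).le
  have hst : star (fun u v => (Γ.dist u v : ℝ)) g x ≤ 1 :=
    star_le fun v => by linarith [hx' v]
  have hfx : 2 * f x / 2 ^ j ≤ 1 := by
    rw [div_le_one (by positivity)]
    have := hL x u₀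
    have := hx' u₀
    have := g2 u₀
    linarith
  have hgx : g x ≤ 2 := by linarith [g3 x]
  have hKx : ∀ k ∈ K, Γ.dist x (act k x) ≤ 5 := by
    intro k hk
    have h1 := abs_le.1 (g4 (act k) (act k).surjective
      (fun u v => by simp only [dist_act hc hA]) (hK k hk) x)
    have h2 := g1 x (act k x)
    have : (Γ.dist x (act k x) : ℝ) ≤ (5 : ℕ) := by push_cast; linarith
    exact_mod_cast this
  obtain ⟨a, ha⟩ := hS x
  have hmaps : ∀ k ∈ K, a * k * a⁻¹ ∈ (⋃ s ∈ S, {g : G | Γ.dist s (act g s) ≤ 5}) := by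
    intro k hk
    simp only [Set.mem_iUnion]
    refine ⟨act a x, ha, ?_⟩
    have : act (a * k * a⁻¹) (act a x) = act a (act k x) := by simp
    simp only [Set.mem_ofPred_eq, this, dist_act hc hA]
    exact hKx k hk
  have hinj : Function.Injective (fun k : G => a * k * a⁻¹) := fun k l h => by simpa using h
  exact ⟨Set.Finite.of_injOn hmaps hinj.injOn hB,
    Set.ncard_le_ncard_of_injOn _ hmaps hinj.injOn hB⟩

lemma finite_subgroups (hH : IsHellyGraph Γ) (hP : IsProperCocompactGraphAction Γ act) :
    ∃ M : ℕ, ∀ H : Subgroup G, Finite H → Nat.card H ≤ M := by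
  obtain ⟨M, hM⟩ := core hH hP
  have hc := hH.1
  have hA := hP.1
  obtain ⟨p⟩ := hc.nonempty
  refine ⟨M, fun H hfin => ?_⟩
  have := Fintype.ofFinite H
  have hpos : (0 : ℝ) < Fintype.card H := by exact_mod_cast Fintype.card_pos
  refine (hM (fun u => (∑ h : H, (Γ.dist (act h p) u : ℝ)) / Fintype.card H) (H : Set G)
    ?_ ?_ ?_).2
  · intro u v
    rw [← add_div, le_div_iff₀ hpos, ← Finset.sum_add_distrib, mul_comm, ← nsmul_eq_mul]
    refine Finset.card_nsmul_le_sum _ _ _ fun h _ => ?_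
    have := hc.dist_triangle (u := u) (v := act h p) (w := v)
    rw [SimpleGraph.dist_comm (u := u) (v := act h p)] at this
    exact_mod_cast this
  · intro u v
    rw [div_add' _ _ _ hpos.ne']
    gcongr
    have : (Γ.dist u v : ℝ) * Fintype.card H = ∑ h : H, (Γ.dist u v : ℝ) := by
      simp [mul_comm]
    rw [this, ← Finset.sum_add_distrib]
    refine Finset.sum_le_sum fun h _ => ?_
    have := hc.dist_triangle (u := act h p) (v := v) (w := u)
    rw [SimpleGraph.dist_comm (u := v) (v := u)] at this
    exact_mod_cast this
  · intro k hk u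
    have : ∑ h : H, (Γ.dist (act h p) (act k u) : ℝ) = ∑ h : H, (Γ.dist (act h p) u : ℝ) := by
      rw [← Equiv.sum_comp (Equiv.mulLeft (⟨k, hk⟩ : H))]
      refine Finset.sum_congr rfl fun h _ => ?_
      simp [dist_act hc hA]
    simp [this]

lemma torsion (hH : IsHellyGraph Γ) (hP : IsProperCocompactGraphAction Γ act) (p : V) (z : G)
    (hz : ∀ ε : ℝ, 0 < ε → ∃ n : ℕ, 0 < n ∧ (Γ.dist p (act (z ^ n) p) : ℝ) ≤ ε * n) :
    IsOfFinOrder z := by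
  obtain ⟨M, hM⟩ := core hH hP
  have hc := hH.1
  have hA := hP.1
  obtain ⟨n, hn, hzn⟩ := hz (1 / (M + 1)) (by positivity)
  have hpos : (0 : ℝ) < n := by exact_mod_cast hn
  let f : V → ℝ := fun u => (∑ i ∈ Finset.range n, (Γ.dist (act (z ^ i) p) u : ℝ)) / n
  have hstep : ∀ u, |f (act z u) - f u| ≤ 1 / (M + 1) := by
    intro u
    have e1 : ∀ i, Γ.dist (act (z ^ (i + 1)) p) (act z u) = Γ.dist (act (z ^ i) p) u := by
      intro i
      rw [pow_succ', map_mul, Equiv.Perm.mul_apply, dist_act hc hA]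
    have e2 := Finset.sum_range_succ (fun i => (Γ.dist (act (z ^ i) p) (act z u) : ℝ)) n
    rw [Finset.sum_range_succ'] at e2
    simp only [e1, pow_zero, map_one, Equiv.Perm.one_apply] at e2
    have t1 := hc.dist_triangle (u := p) (v := act (z ^ n) p) (w := act z u)
    have t2 := hc.dist_triangle (u := act (z ^ n) p) (v := p) (w := act z u)
    rw [SimpleGraph.dist_comm (u := act (z ^ n) p) (v := p)] at t2
    have t1' : (Γ.dist p (act z u) : ℝ) ≤ Γ.dist p (act (z ^ n) p) +
      Γ.dist (act (z ^ n) p) (act z u) := by exact_mod_cast t1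
    have t2' : (Γ.dist (act (z ^ n) p) (act z u) : ℝ) ≤ Γ.dist p (act (z ^ n) p) +
      Γ.dist p (act z u) := by exact_mod_cast t2
    simp only [f]
    rw [← sub_div, abs_div, abs_of_pos hpos, div_le_iff₀ hpos, abs_le]
    constructor <;> linarith
  have hk : ∀ k : ℕ, ∀ u, |f (act (z ^ k) u) - f u| ≤ k * (1 / (M + 1)) := by
    intro k
    induction k with
    | zero => simp
    | succ k ih =>
      intro u
      have h1 := hstep (act (z ^ k) u)
      have h2 := ih u
      rw [pow_succ', map_mul, Equiv.Perm.mul_apply]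
      push_cast
      have := abs_sub_le (f (act z (act (z ^ k) u))) (f (act (z ^ k) u)) (f u)
      linarith
  by_contra hinf
  have hinj : Function.Injective (fun k : ℕ => z ^ k) := by
    rwa [injective_pow_iff_not_isOfFinOrder]
  have := (hM f ((fun k : ℕ => z ^ k) '' Set.Iic M) ?_ ?_ ?_).2
  · rw [Set.ncard_image_of_injective _ hinj] at this
    rw [Set.ncard_eq_toFinset_card'] at this
    simp at this
  · intro u v
    simp only [f]
    rw [← add_div, le_div_iff₀ hpos, ← Finset.sum_add_distrib, mul_comm]
    have : (n : ℝ) * (Γ.dist u v : ℝ) = ∑ i ∈ Finset.range n, (Γ.dist u v : ℝ) := by simp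
    rw [this]
    refine Finset.sum_le_sum fun i _ => ?_
    have := hc.dist_triangle (u := u) (v := act (z ^ i) p) (w := v)
    rw [SimpleGraph.dist_comm (u := u) (v := act (z ^ i) p)] at this
    exact_mod_cast this
  · intro u v
    simp only [f]
    rw [div_add' _ _ _ hpos.ne']
    gcongr
    have : (Γ.dist u v : ℝ) * n = ∑ i ∈ Finset.range n, (Γ.dist u v : ℝ) := by
      simp [mul_comm]
    rw [this, ← Finset.sum_add_distrib]
    refine Finset.sum_le_sum fun h _ => ?_
    have := hc.dist_triangle (u := act (z ^ h) p) (v := v) (w := u)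
    rw [SimpleGraph.dist_comm (u := v) (v := u)] at this
    exact_mod_cast this
  · rintro _ ⟨k, hkM, rfl⟩ u
    refine (hk k u).trans ?_
    have : (k : ℝ) ≤ M := by exact_mod_cast hkM
    rw [mul_one_div, div_le_one (by positivity)]
    linarith

lemma fg (hc : Γ.Connected) (hP : IsProperCocompactGraphAction Γ act) : Group.FG G := by
  obtain ⟨hA, hfin, S, hS⟩ := hP
  obtain ⟨p⟩ := hc.nonempty
  let D := S.sup (fun s => Γ.dist p s)
  have hD : ∀ s ∈ S, Γ.dist p s ≤ D := fun s hs => Finset.le_sup (f := fun s => Γ.dist p s) hs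
  have hnear : ∀ v, ∃ g : G, Γ.dist (act g p) v ≤ D := by
    intro v
    obtain ⟨g, hg⟩ := hS v
    refine ⟨g⁻¹, ?_⟩
    rw [← dist_act hc hA g]
    simpa using hD _ hg
  let T := {g : G | Γ.dist p (act g p) ≤ 2 * D + 1}
  have key : ∀ (u v : V) (w : Γ.Walk u v) (g h : G), Γ.dist (act g p) u ≤ D →
      Γ.dist (act h p) v ≤ D → g⁻¹ * h ∈ Subgroup.closure T := by
    have one : ∀ (u v : V) (g h : G), Γ.dist u v ≤ 1 → Γ.dist (act g p) u ≤ D →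
      Γ.dist (act h p) v ≤ D → g⁻¹ * h ∈ Subgroup.closure T := by
      intro u v g h huv hg hh
      apply Subgroup.subset_closure
      change Γ.dist p (act (g⁻¹ * h) p) ≤ 2 * D + 1
      rw [← dist_act hc hA g]
      have : act g (act (g⁻¹ * h) p) = act h p := by simp
      rw [this]
      have t1 := hc.dist_triangle (u := act g p) (v := u) (w := act h p)
      have t2 := hc.dist_triangle (u := u) (v := v) (w := act h p)
      rw [SimpleGraph.dist_comm (u := v) (v := act h p)] at t2
      omega
    intro u v w
    induction w with
    | nil => intro g h hg hh; exact one _ _ g h (by simp) hg hh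
    | cons hadj w ih =>
      rename_i u v' v
      intro g h hg hh
      obtain ⟨m, hm⟩ := hnear v'
      have := mul_mem (one _ _ g m (SimpleGraph.dist_eq_one_iff_adj.2 hadj).le hg hm) (ih m h hm hh)
      simpa [mul_assoc] using this
  refine Group.fg_iff.2 ⟨T, ?_, hfin p _⟩
  rw [eq_top_iff]
  intro g _
  obtain ⟨w⟩ := hc p (act g p)
  simpa using key _ _ w 1 g (by simp) (by simp)

end action
end HellyAux

namespace HellyAux

open scoped commutatorElement

lemma comm_pow {Q : Type*} [Group Q] (a b : Q) (hc : ∀ x : Q, Commute ⁅a, b⁆ x) (m k : ℕ) :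
    ⁅a ^ m, b ^ k⁆ = ⁅a, b⁆ ^ (k * m) := by
  have h1 : a * b ^ k * a⁻¹ = ⁅a, b⁆ ^ k * b ^ k := by
    rw [← (hc b).mul_pow, ← conj_pow]
    congr 1
    simp [commutatorElement_def]
  have hcd : ∀ x : Q, Commute (⁅a, b⁆ ^ k) x := fun x => (hc x).pow_left k
  have h2 : (b ^ k)⁻¹ * a * (b ^ k)⁻¹⁻¹ = ⁅a, b⁆ ^ k * a := by
    have h3 : a * b ^ k = ⁅a, b⁆ ^ k * b ^ k * a := by rw [← h1]; group
    rw [inv_inv, mul_assoc, h3, (hcd (b ^ k)).eq]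
    simp [mul_assoc]
  have h4 : (b ^ k)⁻¹ * a ^ m * (b ^ k)⁻¹⁻¹ = ⁅a, b⁆ ^ (k * m) * a ^ m := by
    rw [← conj_pow, h2, (hcd a).mul_pow, ← pow_mul]
  have h5 : a ^ m * b ^ k = ⁅a, b⁆ ^ (k * m) * b ^ k * a ^ m := by
    have : a ^ m * b ^ k = b ^ k * ((b ^ k)⁻¹ * a ^ m * (b ^ k)⁻¹⁻¹) := by group
    rw [this, h4, ← mul_assoc, ((hc (b ^ k)).pow_left (k * m)).eq]
  rw [commutatorElement_def, h5]
  group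

lemma step {N : Type*} [Group N] (ℓ : N → ℝ) (hmul : ∀ a b, ℓ (a * b) ≤ ℓ a + ℓ b)
    (hinv : ∀ a, ℓ a⁻¹ = ℓ a)
    (h1 : ∀ z, (∀ ε : ℝ, 0 < ε → ∃ n : ℕ, 0 < n ∧ ℓ (z ^ n) ≤ ε * n) → IsOfFinOrder z)
    (M : ℕ) (h2 : ∀ H : Subgroup N, Finite H → Nat.card H ≤ M) (n : ℕ)
    (hfin : Finite ((⊤ : Subgroup N).lowerCentralSeries (n + 2))) :
    Finite ((⊤ : Subgroup N).lowerCentralSeries (n + 1)) := by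
  set F := (⊤ : Subgroup N).lowerCentralSeries (n + 2) with hF
  set L := (⊤ : Subgroup N).lowerCentralSeries (n + 1) with hL
  have hFL : ∀ z ∈ L, ∀ x : N, ⁅z, x⁆ ∈ F := fun z hz x =>
    Subgroup.commutator_mem_commutator hz (Subgroup.mem_top x)
  have hFn : F.Normal := by rw [hF]; infer_instance
  have hFle : F ≤ L := Subgroup.lowerCentralSeries_antitone ⊤ (by omega)
  -- commutators are torsion
  have hpow : ∀ (x : N) (m : ℕ), 0 < m → ℓ (x ^ m) ≤ m * ℓ x := by
    intro x m hm
    induction m, hm using Nat.le_induction with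
    | base => simp
    | succ m hm ih =>
      rw [pow_succ]
      push_cast
      linarith [hmul (x ^ m) x]
  have htors : ∀ a ∈ (⊤ : Subgroup N).lowerCentralSeries n, ∀ b : N, IsOfFinOrder ⁅a, b⁆ := by
    intro a ha b
    have hab : ⁅a, b⁆ ∈ L := Subgroup.commutator_mem_commutator ha (Subgroup.mem_top b)
    have hcen : ∀ x : N ⧸ F, Commute ⁅(a : N ⧸ F), (b : N ⧸ F)⁆ x := by
      intro x
      obtain ⟨x, rfl⟩ := QuotientGroup.mk_surjective x
      rw [← commutatorElement_eq_one_iff_commute]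
      exact (QuotientGroup.eq_one_iff _).2 (hFL _ hab x)
    obtain ⟨C, hC⟩ := (Set.finite_range (fun f : F => ℓ f)).bddAbove
    have hC' : ∀ f ∈ F, ℓ f ≤ C := fun f hf => hC ⟨⟨f, hf⟩, rfl⟩
    apply h1
    intro ε hε
    obtain ⟨m, hm⟩ := exists_nat_gt ((|C| + 2 * |ℓ a| + 2 * |ℓ b|) / ε)
    have hK : 0 ≤ |C| + 2 * |ℓ a| + 2 * |ℓ b| := by positivity
    have hm0 : (0 : ℝ) < m := lt_of_le_of_lt (by positivity) hm
    have hm0' : 0 < m := by exact_mod_cast hm0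
    have hm1 : (1 : ℝ) ≤ m := by exact_mod_cast hm0'
    refine ⟨m * m, Nat.mul_pos hm0' hm0', ?_⟩
    have hf : ⁅a, b⁆ ^ (m * m) * ⁅a ^ m, b ^ m⁆⁻¹ ∈ F := by
      rw [← QuotientGroup.eq_one_iff]
      have := comm_pow (a : N ⧸ F) (b : N ⧸ F) hcen m m
      have e : ((⁅a, b⁆ ^ (m * m) * ⁅a ^ m, b ^ m⁆⁻¹ : N) : N ⧸ F) =
        ⁅(a : N ⧸ F), (b : N ⧸ F)⁆ ^ (m * m) * ⁅(a : N ⧸ F) ^ m, (b : N ⧸ F) ^ m⁆⁻¹ := rfl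
      rw [e, this, mul_inv_cancel]
    have i1 := hC' _ hf
    have i2 := hmul (⁅a, b⁆ ^ (m * m) * ⁅a ^ m, b ^ m⁆⁻¹) ⁅a ^ m, b ^ m⁆
    rw [inv_mul_cancel_right] at i2
    have i3 : ℓ ⁅a ^ m, b ^ m⁆ ≤ 2 * (m * ℓ a) + 2 * (m * ℓ b) := by
      rw [commutatorElement_def]
      have j1 := hmul (a ^ m * b ^ m * (a ^ m)⁻¹) (b ^ m)⁻¹
      have j2 := hmul (a ^ m * b ^ m) (a ^ m)⁻¹
      have j3 := hmul (a ^ m) (b ^ m)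
      rw [hinv] at j1 j2
      linarith [hpow a m hm0', hpow b m hm0']
    rw [div_lt_iff₀ hε] at hm
    have k1 : (m : ℝ) * ℓ a ≤ m * |ℓ a| := by gcongr; exact le_abs_self _
    have k2 : (m : ℝ) * ℓ b ≤ m * |ℓ b| := by gcongr; exact le_abs_self _
    have k3 : C ≤ m * |C| := (le_abs_self C).trans (le_mul_of_one_le_left (abs_nonneg _) hm1)
    have k4 : (m : ℝ) * (|C| + 2 * |ℓ a| + 2 * |ℓ b|) ≤ m * (m * ε) := by gcongr
    push_cast
    nlinarith
  -- a maximal finite subgroup between `F` and `L`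
  let P : ℕ → Prop := fun c => ∃ H : Subgroup N, Finite H ∧ F ≤ H ∧ H ≤ L ∧ Nat.card H = c
  have hP0 : P (Nat.card F) := ⟨F, hfin, le_rfl, hFle, rfl⟩
  have hPM : ∀ c, P c → c ≤ M := by
    rintro c ⟨H, hH, -, -, rfl⟩
    exact h2 H hH
  classical
  obtain ⟨H, hHf, hFH, hHL, hHc⟩ := Nat.findGreatest_spec (P := P) (hPM _ hP0) hP0
  have hHn : H.Normal := by
    refine ⟨fun x hx g => ?_⟩
    have := hFH (hFL x (hHL hx) g)
    have h3 := inv_mem (mul_mem (inv_mem hx) this)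
    have h4 : (x⁻¹ * ⁅x, g⁆)⁻¹ = g * x * g⁻¹ := by simp [commutatorElement_def, mul_assoc]
    rwa [h4] at h3
  have hLH : L ≤ H := by
    rw [hL, Subgroup.lowerCentralSeries_succ, Subgroup.commutator_le]
    intro a ha b _
    have hz := htors a ha b
    have hzL : ⁅a, b⁆ ∈ L := Subgroup.commutator_mem_commutator ha (Subgroup.mem_top b)
    have hzf : (Subgroup.zpowers ⁅a, b⁆ : Set N).Finite := by
      rw [← Set.finite_coe_iff]
      exact finite_zpowers.2 hz
    have hfin' : ((H ⊔ Subgroup.zpowers ⁅a, b⁆ : Subgroup N) : Set N).Finite := by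
      rw [Subgroup.normal_mul]
      exact (Set.toFinite (H : Set N)).mul hzf
    have hF' : Finite (H ⊔ Subgroup.zpowers ⁅a, b⁆ : Subgroup N) := hfin'.to_subtype
    have hPn : P (Nat.card (H ⊔ Subgroup.zpowers ⁅a, b⁆ : Subgroup N)) :=
      ⟨_, hF', hFH.trans le_sup_left, sup_le hHL (by simpa using hzL), rfl⟩
    have hle := Nat.le_findGreatest (hPM _ hPn) hPn
    rw [← hHc] at hle
    have heq := Subgroup.eq_of_le_of_card_ge (le_sup_left : H ≤ H ⊔ Subgroup.zpowers ⁅a, b⁆) hle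
    rw [heq]
    exact (le_sup_right : _ ≤ H ⊔ Subgroup.zpowers ⁅a, b⁆) (Subgroup.mem_zpowers _)
  exact Finite.Set.subset (H : Set N) hLH

lemma center_finiteIndex {N : Type*} [Group N] [Group.FG N] (hN : Group.IsNilpotent N) (ℓ : N → ℝ)
    (hmul : ∀ a b, ℓ (a * b) ≤ ℓ a + ℓ b) (hinv : ∀ a, ℓ a⁻¹ = ℓ a)
    (h1 : ∀ z, (∀ ε : ℝ, 0 < ε → ∃ n : ℕ, 0 < n ∧ ℓ (z ^ n) ≤ ε * n) → IsOfFinOrder z)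
    (M : ℕ) (h2 : ∀ H : Subgroup N, Finite H → Nat.card H ≤ M) :
    (Subgroup.center N).FiniteIndex := by
  obtain ⟨n, hn⟩ := Subgroup.nilpotent_iff_lowerCentralSeries.1 hN
  have key : ∀ k, Finite ((⊤ : Subgroup N).lowerCentralSeries (k + 1)) →
      Finite ((⊤ : Subgroup N).lowerCentralSeries 1) := by
    intro k
    induction k with
    | zero => exact id
    | succ k ih => exact fun h => ih (step ℓ hmul hinv h1 M h2 k h)
  have hfin : Finite ((⊤ : Subgroup N).lowerCentralSeries 1) := by
    apply key n
    have : (⊤ : Subgroup N).lowerCentralSeries (n + 1) = ⊥ :=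
      le_bot_iff.1 ((Subgroup.lowerCentralSeries_antitone ⊤ (by omega)).trans hn.le)
    rw [this]
    infer_instance
  have : Finite (commutatorSet N) := by
    refine Finite.Set.subset ((⊤ : Subgroup N).lowerCentralSeries 1 : Set N) ?_
    rintro _ ⟨a, b, rfl⟩
    exact Subgroup.commutator_mem_commutator (Subgroup.mem_top a) (Subgroup.mem_top b)
  infer_instance

end HellyAux

/-- A virtually nilpotent group acting properly and cocompactly on a Helly graph is
virtually abelian. -/
theorem virtually_nilpotent_helly_is_virtually_abelian
    {G : Type*} [Group G]
    (hHelly : ∃ (V : Type) (Γ : SimpleGraph V) (act : G →* Equiv.Perm V),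
      IsHellyGraph Γ ∧ IsProperCocompactGraphAction Γ act)
    (hnilp : ∃ N : Subgroup G, N.FiniteIndex ∧ Group.IsNilpotent N) :
    ∃ A : Subgroup G, A.FiniteIndex ∧ ∀ a b : A, a * b = b * a := by
  obtain ⟨V, Γ, act, hH, hP⟩ := hHelly
  obtain ⟨N, hNi, hN⟩ := hnilp
  have hfg : Group.FG G := HellyAux.fg hH.1 hP
  obtain ⟨M, hM⟩ := HellyAux.finite_subgroups hH hP
  have hc := hH.1
  obtain ⟨p⟩ := hc.nonempty
  have hcen : (Subgroup.center N).FiniteIndex := by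
    refine HellyAux.center_finiteIndex hN (fun g : N => (Γ.dist p (act (g : G) p) : ℝ))
      ?_ ?_ ?_ M ?_
    · intro a b
      have := hc.dist_triangle (u := p) (v := act (a : G) p) (w := act ((a * b : N) : G) p)
      rw [Subgroup.coe_mul, map_mul, Equiv.Perm.mul_apply, HellyAux.dist_act hc hP.1] at this
      simp only [Subgroup.coe_mul, map_mul, Equiv.Perm.mul_apply]
      exact_mod_cast this
    · intro a
      have := HellyAux.dist_act hc hP.1 (a : G) p (act ((a⁻¹ : N) : G) p)
      rw [← this, SimpleGraph.dist_comm]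
      simp
    · intro z hz
      have := HellyAux.torsion hH hP p (z : G) (by simpa using hz)
      exact (Submonoid.isOfFinOrder_coe (x := z)).1 this
    · intro H hHf
      have e := Subgroup.equivMapOfInjective H N.subtype N.subtype_injective
      have := Finite.of_equiv _ e.toEquiv
      rw [Nat.card_congr e.toEquiv]
      exact hM _ this
  refine ⟨(Subgroup.center N).map N.subtype, ⟨?_⟩, ?_⟩
  · rw [Subgroup.index_map_subtype]
    exact mul_ne_zero hcen.index_ne_zero hNi.index_ne_zero
  · rintro ⟨_, a, ha, rfl⟩ ⟨_, b, hb, rfl⟩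
    have := Subgroup.mem_center_iff.1 hb a
    ext
    simpa using congrArg N.subtype this
end

section
/- Let Γ be a Helly graph with vertex set V and graph metric d, let 𝒰 be a nonprincipal ultrafilter on ℕ, let b : ℕ → V be a sequence of basepoints, and let s : ℕ → ℝ be a sequence of positive reals tending to infinity. For each i ∈ ℕ let xᵢ : ℕ → V be a sequence such that n ↦ d(xᵢ(n), b(n))/s(n) is bounded, and let rᵢ ≥ 0 be reals such that for all i, j ∈ ℕ there exists a real c(i,j) ≤ rᵢ + rⱼ with n ↦ d(xᵢ(n), xⱼ(n))/s(n) tending to c(i,j) along 𝒰. Then there exists a sequence x : ℕ → V with n ↦ d(x(n), b(n))/s(n) bounded such that for every i ∈ ℕ there exists a real cᵢ ≤ rᵢ with n ↦ d(x(n), xᵢ(n))/s(n) tending to cᵢ along 𝒰. (This expresses that every asymptotic cone of a Helly graph satisfies the countable ball-intersection property of countable hyperconvexity.) -/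
/-- Asymptotic cones of Helly graphs are countably hyperconvex: given countably many
closed balls of the asymptotic cone (with respect to a nonprincipal ultrafilter `𝒰`,
basepoints `b` and scaling factors `s → ∞`), represented by sequences `xᵢ` of vertices and
radii `rᵢ` such that the distance in the cone between `xᵢ` and `xⱼ` is at most `rᵢ + rⱼ`
for all `i, j`, there is a point of the cone, represented by a sequence `y`, lying in all
of the balls. -/
theorem helly_graph_asymptotic_cone_countably_hyperconvex
    {V : Type*} (Γ : SimpleGraph V) (hΓ : IsHellyGraph Γ)
    (𝒰 : Ultrafilter ℕ) (h𝒰 : ∀ a : ℕ, 𝒰 ≠ pure a)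
    (b : ℕ → V) (s : ℕ → ℝ) (hs_pos : ∀ n, 0 < s n)
    (hs : Filter.Tendsto s Filter.atTop Filter.atTop)
    (x : ℕ → ℕ → V)
    (hx : ∀ i, ∃ B : ℝ, ∀ n, (Γ.dist (x i n) (b n) : ℝ) / s n ≤ B)
    (r : ℕ → ℝ) (hr : ∀ i, 0 ≤ r i)
    (c : ℕ → ℕ → ℝ)
    (hc : ∀ i j, c i j ≤ r i + r j ∧
      Filter.Tendsto (fun n => (Γ.dist (x i n) (x j n) : ℝ) / s n) 𝒰 (nhds (c i j))) :
    ∃ y : ℕ → V,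
      (∃ B : ℝ, ∀ n, (Γ.dist (y n) (b n) : ℝ) / s n ≤ B) ∧
      ∀ i, ∃ ci : ℝ, ci ≤ r i ∧
        Filter.Tendsto (fun n => (Γ.dist (y n) (x i n) : ℝ) / s n) 𝒰 (nhds ci) := by
  classical
  obtain ⟨hconn, hH⟩ := hΓ
  have hU : (𝒰 : Filter ℕ) ≤ Filter.atTop := by
    rw [← Nat.cofinite_eq_atTop]
    rcases 𝒰.le_cofinite_or_eq_pure with h | ⟨a, ha⟩
    · exact h
    · exact absurd ha (h𝒰 a)
  let P : ℕ → ℕ → Prop := fun k n =>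
    (∀ i ≤ k, ∀ j ≤ k, (Γ.dist (x i n) (x j n) : ℝ) / s n ≤ r i + r j + 1 / ((k : ℝ) + 1)) ∧
      1 ≤ s n * (1 / ((k : ℝ) + 1))
  have hP : ∀ k, ∀ᶠ n in (𝒰 : Filter ℕ), P k n := by
    intro k
    have hk : (0 : ℝ) < 1 / ((k : ℝ) + 1) := by positivity
    refine Filter.Eventually.and ?_ ?_
    · have h1 : ∀ i j, ∀ᶠ n in (𝒰 : Filter ℕ),
          (Γ.dist (x i n) (x j n) : ℝ) / s n ≤ r i + r j + 1 / ((k : ℝ) + 1) := by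
        intro i j
        exact (hc i j).2.eventually_le_const (by linarith [(hc i j).1])
      have h2 := (Filter.eventually_all_finite (Set.finite_Iic k)).2
        (fun i (_ : i ∈ Set.Iic k) => (Filter.eventually_all_finite (Set.finite_Iic k)).2
          (fun j (_ : j ∈ Set.Iic k) => h1 i j))
      filter_upwards [h2] with n hn i hi j hj using hn i hi j hj
    · filter_upwards [hU (hs.eventually_ge_atTop ((k : ℝ) + 1))] with n hn
      rw [mul_one_div, le_div_iff₀ (by positivity)]
      linarith
  -- the Helly property at a fixed level
  have key : ∀ k n, P k n → ∃ y, ∀ i ≤ k,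
      (Γ.dist y (x i n) : ℝ) / s n ≤ r i + 2 * (1 / ((k : ℝ) + 1)) := by
    intro k n ⟨h1, h2⟩
    have hk : (0 : ℝ) < 1 / ((k : ℝ) + 1) := by positivity
    have hsn := hs_pos n
    obtain ⟨y, hy⟩ := hH (ι := Fin (k + 1)) (fun i => x i n)
      (fun i => ⌈s n * (r i + 1 / ((k : ℝ) + 1))⌉₊) (by
        intro i j
        have h := h1 i (by omega) j (by omega)
        rw [div_le_iff₀ hsn] at h
        have a1 := Nat.le_ceil (s n * (r i + 1 / ((k : ℝ) + 1)))
        have a2 := Nat.le_ceil (s n * (r j + 1 / ((k : ℝ) + 1)))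
        have a3 : 0 < s n * (1 / ((k : ℝ) + 1)) := by positivity
        have : (Γ.dist (x i n) (x j n) : ℝ) ≤ (⌈s n * (r i + 1 / ((k : ℝ) + 1))⌉₊ : ℝ)
            + (⌈s n * (r j + 1 / ((k : ℝ) + 1))⌉₊ : ℝ) := by nlinarith
        exact_mod_cast this)
    refine ⟨y, fun i hi => ?_⟩
    have h := hy ⟨i, by omega⟩
    have h' : (Γ.dist y (x i n) : ℝ) ≤ (⌈s n * (r i + 1 / ((k : ℝ) + 1))⌉₊ : ℝ) := by
      exact_mod_cast h
    have a1 := Nat.ceil_lt_add_one (a := s n * (r i + 1 / ((k : ℝ) + 1)))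
      (mul_nonneg hsn.le (add_nonneg (hr i) hk.le))
    rw [div_le_iff₀ hsn]
    nlinarith
  have tri : ∀ u v w n, (Γ.dist u w : ℝ) / s n ≤ Γ.dist u v / s n + Γ.dist v w / s n := by
    intro u v w n
    rw [← add_div]
    have : (Γ.dist u w : ℝ) ≤ Γ.dist u v + Γ.dist v w := by
      exact_mod_cast hconn.dist_triangle
    have := hs_pos n
    gcongr
  obtain ⟨B₀, hB₀⟩ := hx 0
  have main : ∀ n, ∃ y, (Γ.dist y (b n) : ℝ) / s n ≤ max 0 (r 0 + 2 + B₀) ∧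
      ∀ k ≤ n, P k n → ∀ i ≤ k,
        (Γ.dist y (x i n) : ℝ) / s n ≤ r i + 2 * (1 / ((k : ℝ) + 1)) := by
    intro n
    by_cases hn : ∃ k ≤ n, P k n
    · obtain ⟨k₀, hk₀, hPk₀⟩ := hn
      have hK : P (Nat.findGreatest (fun k => P k n) n) n :=
        Nat.findGreatest_spec (P := fun k => P k n) hk₀ hPk₀
      have hle : ∀ k ≤ n, P k n → k ≤ Nat.findGreatest (fun k => P k n) n :=
        fun k hk hp => Nat.le_findGreatest (P := fun k => P k n) hk hp
      generalize Nat.findGreatest (fun k => P k n) n = K at hK hle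
      obtain ⟨y, hy⟩ := key K n hK
      refine ⟨y, le_max_of_le_right ?_, ?_⟩
      · have h0 := hy 0 (Nat.zero_le _)
        have h1 : (1 : ℝ) / ((K : ℝ) + 1) ≤ 1 := by
          rw [div_le_one (by positivity)]
          have : (0 : ℝ) ≤ K := Nat.cast_nonneg K
          linarith
        linarith [tri y (x 0 n) (b n) n, hB₀ n]
      · intro k hk hp i hi
        have hkK := hle k hk hp
        have h1 : (1 : ℝ) / ((K : ℝ) + 1) ≤ 1 / ((k : ℝ) + 1) := by
          have : (k : ℝ) ≤ K := by exact_mod_cast hkK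
          gcongr
        linarith [hy i (hi.trans hkK)]
    · refine ⟨b n, by simp, fun k hk hp => absurd ⟨k, hk, hp⟩ hn⟩
  choose y hyb hy using main
  refine ⟨y, ⟨_, hyb⟩, fun i => ?_⟩
  obtain ⟨B, hB⟩ := hx i
  have hmem : ∀ n, (Γ.dist (y n) (x i n) : ℝ) / s n ∈
      Set.Icc (0 : ℝ) (max 0 (r 0 + 2 + B₀) + B) := by
    intro n
    refine ⟨div_nonneg (Nat.cast_nonneg _) (hs_pos n).le, ?_⟩
    have h1 := tri (y n) (b n) (x i n) n
    have h2 := hB n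
    rw [SimpleGraph.dist_comm] at h2
    linarith [hyb n]
  obtain ⟨ci, -, hci⟩ := (isCompact_Icc (a := (0 : ℝ))
    (b := max 0 (r 0 + 2 + B₀) + B)).ultrafilter_le_nhds
    (𝒰.map (fun n => (Γ.dist (y n) (x i n) : ℝ) / s n)) (by
      rw [Filter.le_principal_iff]
      exact Filter.mem_map.2 (Filter.univ_mem' hmem))
  have hci' : Filter.Tendsto (fun n => (Γ.dist (y n) (x i n) : ℝ) / s n) 𝒰 (nhds ci) := hci
  refine ⟨ci, ?_, hci'⟩
  have hlim : Filter.Tendsto (fun k : ℕ => r i + 2 * (1 / ((k : ℝ) + 1))) Filter.atTop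
      (nhds (r i + 2 * 0)) :=
    (tendsto_one_div_add_atTop_nhds_zero_nat.const_mul 2).const_add (r i)
  rw [mul_zero, add_zero] at hlim
  refine ge_of_tendsto hlim ?_
  filter_upwards [Filter.eventually_ge_atTop i] with k hk
  refine le_of_tendsto hci' ?_
  filter_upwards [hP k, hU (Filter.eventually_ge_atTop k)] with n hn hkn
  exact hy n k hkn hn i hk
end

section
/- Let d be a metric on ℤ and K ≥ 1, A ≥ 0, C ≥ 0 constants such that |m − n|/K − A ≤ d(m, n) ≤ K|m − n| + A for all m, n ∈ ℤ, and such that d(m, n) − C ≤ d(k + m, k + n) ≤ d(m, n) + C for all k, m, n ∈ ℤ. Then there exists L ∈ [1/K, K] such that d(0, n)/|n| tends to L as n tends to +∞ and also as n tends to −∞. -/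
/-- If `d` is a metric on `ℤ` such that the identity is a `(K, A)`-quasi-isometry from `ℤ`
with its standard metric to `(ℤ, d)`, and `d` is roughly translation-invariant with
constant `C`, then `d(0, n)/|n|` tends to a limit `L ∈ [1/K, K]` as `n → ±∞`. -/
theorem rough_invariant_metric_on_int_has_linear_growth_rate
    (d : ℤ → ℤ → ℝ)
    (hrefl : ∀ m : ℤ, d m m = 0)
    (hpos : ∀ m n : ℤ, m ≠ n → 0 < d m n)
    (hsymm : ∀ m n : ℤ, d m n = d n m)
    (htri : ∀ k m n : ℤ, d k n ≤ d k m + d m n)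
    (K A C : ℝ) (hK : 1 ≤ K) (hA : 0 ≤ A) (hC : 0 ≤ C)
    (hqi : ∀ m n : ℤ, (|m - n| : ℝ) / K - A ≤ d m n ∧ d m n ≤ K * (|m - n| : ℝ) + A)
    (hinv : ∀ k m n : ℤ, d m n - C ≤ d (k + m) (k + n) ∧ d (k + m) (k + n) ≤ d m n + C) :
    ∃ L : ℝ, 1 / K ≤ L ∧ L ≤ K ∧
      Filter.Tendsto (fun n : ℤ => d 0 n / |(n : ℝ)|) Filter.atTop (nhds L) ∧
      Filter.Tendsto (fun n : ℤ => d 0 n / |(n : ℝ)|) Filter.atBot (nhds L) := by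
  have hK0 : 0 < K := by linarith
  let u : ℕ → ℝ := fun n => d 0 n + C
  have hnn : ∀ m n, 0 ≤ d m n := by
    intro m n
    by_cases h : m = n
    · rw [h, hrefl]
    · exact (hpos m n h).le
  have hsub : Subadditive u := by
    intro m n
    have h1 := htri 0 m (m + n)
    have h2 := (hinv m 0 n).2
    simp only [add_zero] at h2
    simp only [u]
    push_cast
    linarith
  have hbdd : BddBelow (Set.range fun n => u n / n) := by
    refine ⟨0, ?_⟩
    rintro _ ⟨n, rfl⟩
    have := hnn 0 n
    simp only [u]
    positivity
  have hlim := hsub.tendsto_lim hbdd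
  have hz : ∀ c : ℝ, Filter.Tendsto (fun n : ℕ => c / (n : ℝ)) Filter.atTop (nhds 0) :=
    fun c => tendsto_const_div_atTop_nhds_zero_nat c
  have key : ∀ l : Filter ℤ, Filter.Tendsto Int.natAbs l Filter.atTop →
      Filter.Tendsto (fun n : ℤ => d 0 n / |(n : ℝ)|) l (nhds hsub.lim) := by
    intro l hl
    have hup := hlim.comp hl
    have hlo := (hlim.sub (hz (2 * C))).comp hl
    rw [sub_zero] at hlo
    have hb : ∀ n : ℤ, d 0 (n.natAbs : ℤ) - C ≤ d 0 n ∧ d 0 n ≤ d 0 (n.natAbs : ℤ) + C := by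
      intro n
      rcases Int.natAbs_eq n with h | h
      · rw [← h]; constructor <;> linarith
      · have h3 := hinv n.natAbs n 0
        rw [show (n.natAbs : ℤ) + n = 0 by omega, add_zero, hsymm n 0] at h3
        constructor <;> linarith [h3.1, h3.2]
    have hc : ∀ n : ℤ, |(n : ℝ)| = (n.natAbs : ℝ) := fun n => by
      rw [Nat.cast_natAbs]; simp
    refine tendsto_of_tendsto_of_tendsto_of_le_of_le hlo hup ?_ ?_
    · intro n
      simp only [Function.comp, hc, u, ← sub_div]
      gcongr
      linarith [(hb n).1]
    · intro n
      simp only [Function.comp, hc, u]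
      gcongr
      exact (hb n).2
  refine ⟨hsub.lim, ?_, ?_, key _ ?_, key _ ?_⟩
  · have h1 := (tendsto_const_nhds (x := 1 / K)).sub (hz A)
    rw [sub_zero] at h1
    refine le_of_tendsto_of_tendsto h1 hlim ?_
    filter_upwards [Filter.eventually_gt_atTop 0] with n hn
    have hn' : (0 : ℝ) < n := by exact_mod_cast hn
    have h2 := (hqi 0 n).1
    simp only [Int.cast_zero, zero_sub, abs_neg, Int.cast_natCast, Nat.abs_cast] at h2
    rw [le_div_iff₀ hn']
    have : (1 / K - A / n) * n = n / K - A := by field_simp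
    simp only [u]
    linarith
  · have h1 := (tendsto_const_nhds (x := K)).add (hz (A + C))
    rw [add_zero] at h1
    refine le_of_tendsto_of_tendsto hlim h1 ?_
    filter_upwards [Filter.eventually_gt_atTop 0] with n hn
    have hn' : (0 : ℝ) < n := by exact_mod_cast hn
    have h2 := (hqi 0 n).2
    simp only [Int.cast_zero, zero_sub, abs_neg, Int.cast_natCast, Nat.abs_cast] at h2
    rw [div_le_iff₀ hn']
    have : (K + (A + C) / n) * n = K * n + (A + C) := by field_simp
    simp only [u]
    linarith
  · rw [Filter.tendsto_atTop]
    intro b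
    filter_upwards [Filter.eventually_ge_atTop (b : ℤ)] with n hn
    omega
  · rw [Filter.tendsto_atTop]
    intro b
    filter_upwards [Filter.eventually_le_atBot (-(b : ℤ))] with n hn
    omega
end

section
/- Let d be a proper, left-invariant metric on the group ℤⁿ which is C₀-roughly geodesic for some C₀ > 0. Then there exist a norm N on ℝⁿ = (Fin n → ℝ) and a constant C ≥ 0 such that the inclusion ℤⁿ ↪ ℝⁿ is a C-rough isometry from (ℤⁿ, d) to (ℝⁿ, N). Moreover, for every ℤ-linear automorphism f of ℤⁿ which is a rough isometry of (ℤⁿ, d) (for some constant), the induced ℝ-linear automorphism of ℝⁿ is an isometry of (ℝⁿ, N), i.e., N(f(r)) = N(r) for all r ∈ ℝⁿ. -/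
open Classical in
noncomputable def zInd (P : Prop) : ZMod 2 := if P then 1 else 0

def zKey (a : ℕ → ℤ) (i : ℕ) : ℕ ×ₗ ℕ := toLex ((a i).natAbs, i)

def zAlt (a : ℕ → ℤ) (s : ℤ) (I : Finset ℕ) : Prop :=
  ∀ i ∈ I, 0 < s * (-1) ^ (I.filter (fun j => zKey a j < zKey a i)).card * a i

theorem zInd_congr {P Q : Prop} (h : P ↔ Q) : zInd P = zInd Q := by
  rw [propext h]

theorem zKey_inj (a : ℕ → ℤ) {i j : ℕ} (h : zKey a i = zKey a j) : i = j := by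
  have := congrArg (fun x => (ofLex x).2) h
  simpa [zKey] using this

theorem zKey_congr {a b : ℕ → ℤ} {i : ℕ} (h : a i = b i) : zKey a i = zKey b i := by
  simp [zKey, h]

theorem zAlt_congr {a b : ℕ → ℤ} {s : ℤ} {I : Finset ℕ} (h : ∀ i ∈ I, a i = b i) :
    zAlt a s I ↔ zAlt b s I := by
  have key : ∀ i ∈ I, (I.filter (fun j => zKey a j < zKey a i))
      = (I.filter (fun j => zKey b j < zKey b i)) := by
    intro i hi
    apply Finset.filter_congr
    intro j hj
    rw [zKey_congr (h i hi), zKey_congr (h j hj)]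
  constructor
  · intro H i hi
    have := H i hi
    rwa [key i hi, h i hi] at this
  · intro H i hi
    have := H i hi
    rwa [← key i hi, ← h i hi] at this

theorem zAlt_neg {a b : ℕ → ℤ} {s : ℤ} {I : Finset ℕ} (h : ∀ i ∈ I, a i = - b i) :
    zAlt a s I ↔ zAlt b (-s) I := by
  have key : ∀ i ∈ I, (I.filter (fun j => zKey a j < zKey a i))
      = (I.filter (fun j => zKey b j < zKey b i)) := by
    intro i hi
    apply Finset.filter_congr
    intro j hj
    simp [zKey, h i hi, h j hj]
  constructor
  · intro H i hi
    have := H i hi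
    rw [key i hi, h i hi] at this
    linarith
  · intro H i hi
    have := H i hi
    rw [← key i hi] at this
    rw [h i hi]
    linarith

theorem zAlt_insert {a : ℕ → ℤ} {s : ℤ} {I : Finset ℕ} {M : ℕ}
    (h : ∀ j ∈ I, zKey a j < zKey a M) :
    zAlt a s (insert M I) ↔ (zAlt a s I ∧ 0 < s * (-1) ^ I.card * a M) := by
  have h1 : (insert M I).filter (fun j => zKey a j < zKey a M) = I := by
    rw [Finset.filter_insert, if_neg (lt_irrefl _), Finset.filter_true_of_mem h]
  have h2 : ∀ i ∈ I, (insert M I).filter (fun j => zKey a j < zKey a i)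
      = I.filter (fun j => zKey a j < zKey a i) := by
    intro i hi
    rw [Finset.filter_insert, if_neg (not_lt.2 (h i hi).le)]
  constructor
  · intro H
    refine ⟨fun i hi => ?_, ?_⟩
    · have := H i (Finset.mem_insert_of_mem hi)
      rwa [h2 i hi] at this
    · have := H M (Finset.mem_insert_self _ _)
      rwa [h1] at this
  · rintro ⟨H1, H2⟩ i hi
    rcases Finset.mem_insert.1 hi with rfl | hi
    · rwa [h1]
    · rw [h2 i hi]; exact H1 i hi

theorem zAlt_boundary (a : ℕ → ℤ) (I : Finset ℕ) (h0 : ∀ i ∈ I, a i ≠ 0) :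
    ∑ i ∈ I, zInd (zAlt a 1 (I.erase i)) = zInd (zAlt a 1 I) + zInd (zAlt a (-1) I) := by
  induction I using Finset.induction_on_max_value (zKey a) with
  | empty => simp [zAlt, zInd]; decide
  | insert M I hM hmax ih =>
    have hlt : ∀ j ∈ I, zKey a j < zKey a M := by
      intro j hj
      refine lt_of_le_of_ne (hmax j hj) ?_
      intro he
      exact hM (zKey_inj a he ▸ hj)
    have ih := ih (fun i hi => h0 i (Finset.mem_insert_of_mem hi))
    have hM0 := h0 M (Finset.mem_insert_self _ _)
    rw [Finset.sum_insert hM, Finset.erase_insert hM, zInd_congr (zAlt_insert hlt),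
      zInd_congr (zAlt_insert (s := -1) hlt)]
    have e1 : ∀ i ∈ I, zInd (zAlt a 1 ((insert M I).erase i))
        = zInd (zAlt a 1 (I.erase i)) * zInd (0 < (-1) ^ I.card * -(a M)) := by
      intro i hi
      have hne : M ≠ i := fun h => hM (h ▸ hi)
      rw [Finset.erase_insert_of_ne hne, zInd_congr (zAlt_insert
        (fun j hj => hlt j (Finset.mem_of_mem_erase hj)))]
      have hc : (I.erase i).card + 1 = I.card := Finset.card_erase_add_one hi
      have : (0 < 1 * (-1) ^ (I.erase i).card * a M) ↔ (0 < (-1) ^ I.card * -(a M)) := by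
        rw [← hc, pow_succ]; ring_nf
      rw [this]
      by_cases hx : zAlt a 1 (I.erase i) <;> by_cases hy : (0 < (-1) ^ I.card * -(a M)) <;>
        simp [zInd, hx, hy]
    rw [Finset.sum_congr rfl e1, ← Finset.sum_mul, ih]
    have hx : (-1 : ℤ) ^ I.card * a M ≠ 0 := mul_ne_zero (by positivity) hM0
    rcases lt_or_gt_of_ne hx with hx | hx
    · have g1 : ¬ (0 < 1 * (-1 : ℤ) ^ I.card * a M) := by linarith
      have g2 : (0 < -1 * (-1 : ℤ) ^ I.card * a M) := by linarith
      have g3 : (0 < (-1 : ℤ) ^ I.card * -(a M)) := by linarith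
      simp only [g1, g2, g3, and_false, and_true]
      simp only [zInd]
      by_cases u : zAlt a 1 I <;> by_cases v : zAlt a (-1) I <;> simp [u, v] <;> decide
    · have g1 : (0 < 1 * (-1 : ℤ) ^ I.card * a M) := by linarith
      have g2 : ¬ (0 < -1 * (-1 : ℤ) ^ I.card * a M) := by linarith
      have g3 : ¬ (0 < (-1 : ℤ) ^ I.card * -(a M)) := by linarith
      simp only [g1, g2, g3, and_false, and_true]
      simp [zInd]

/-- sign vector of the flag -/
def zVec {m : ℕ} (x : Equiv.Perm (Fin m) × (Fin m → Bool)) (i : ℕ) : Fin m → ℤ :=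
  fun j => if (x.1 j : ℕ) ≤ i then (if x.2 j then 1 else -1) else 0

theorem zVec_ne {m : ℕ} (x : Equiv.Perm (Fin m) × (Fin m → Bool)) (i : ℕ) (hi : i < m) :
    zVec x i ≠ 0 := by
  intro h
  have := congrFun h (x.1.symm ⟨i, hi⟩)
  simp [zVec] at this
  split_ifs at this <;> simp at this

def zX (m d : ℕ) : Finset (Equiv.Perm (Fin m) × (Fin m → Bool)) :=
  Finset.univ.filter (fun x => ∀ j : Fin m, d ≤ (j : ℕ) → x.1 j = j ∧ x.2 j = true)

theorem z_add_self (x : ZMod 2) : x + x = 0 := CharTwo.add_self_eq_zero x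

theorem zX_le {m d : ℕ} {x : Equiv.Perm (Fin m) × (Fin m → Bool)} (hx : x ∈ zX m d)
    {j : Fin m} (h : (x.1 j : ℕ) < d) : (j : ℕ) < d := by
  by_contra hj
  have := ((Finset.mem_filter.1 hx).2 j (not_lt.1 hj)).1
  rw [this] at h
  exact hj h

theorem zQ_step {m : ℕ} (lam : (Fin m → ℤ) → ℤ)
    (hanti : ∀ A, A ≠ 0 → lam (-A) = - lam A) (hne : ∀ A, A ≠ 0 → lam A ≠ 0)
    (d : ℕ) (hd : d < m) :
    ∑ x ∈ zX m (d+1), zInd (zAlt (fun i => lam (zVec x i)) 1 (Finset.range (d+1)))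
    = ∑ x ∈ zX m d, zInd (zAlt (fun i => lam (zVec x i)) 1 (Finset.range d)) := by
  classical
  set D : Fin m := ⟨d, hd⟩ with hD
  set Y := (zX m (d+1)).filter (fun x => x.2 D = true) with hY
  have s1 : ∑ x ∈ zX m (d+1), zInd (zAlt (fun i => lam (zVec x i)) 1 (Finset.range (d+1)))
      = ∑ x ∈ Y, (zInd (zAlt (fun i => lam (zVec x i)) 1 (Finset.range (d+1)))
        + zInd (zAlt (fun i => lam (zVec x i)) (-1) (Finset.range (d+1)))) := by
    rw [Finset.sum_add_distrib, ← Finset.sum_filter_add_sum_filter_not (zX m (d+1))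
      (fun x => x.2 D = true)]
    congr 1
    let θ : Equiv.Perm (Fin m) × (Fin m → Bool) → Equiv.Perm (Fin m) × (Fin m → Bool) :=
      fun x => (x.1, fun j => if (j : ℕ) < d + 1 then !(x.2 j) else x.2 j)
    have hθX : ∀ x ∈ zX m (d+1), θ x ∈ zX m (d+1) := by
      intro x hx
      rw [zX, Finset.mem_filter] at hx ⊢
      refine ⟨Finset.mem_univ _, fun j hj => ?_⟩
      have := hx.2 j hj
      have h2 : ¬ ((j : ℕ) < d + 1) := by omega
      simp [θ, h2, this]
    have hθθ : ∀ x, θ (θ x) = x := by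
      intro x
      ext j
      · rfl
      · by_cases h : (j : ℕ) < d + 1 <;> simp [θ, h]
    refine Finset.sum_nbij' θ θ ?_ ?_ (fun x _ => hθθ x) (fun x _ => hθθ x) ?_
    · intro x hx
      rw [Finset.mem_filter] at hx
      rw [hY, Finset.mem_filter]
      refine ⟨hθX x hx.1, ?_⟩
      have := hx.2
      simp [θ, D] at this ⊢
      exact this
    · intro x hx
      rw [hY, Finset.mem_filter] at hx
      rw [Finset.mem_filter]
      refine ⟨hθX x hx.1, ?_⟩
      have := hx.2
      simp [θ, D] at this ⊢
      exact this
    · intro x hx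
      rw [Finset.mem_filter] at hx
      apply zInd_congr
      rw [zAlt_neg (b := fun i => lam (zVec (θ x) i))]
      intro i hi
      rw [Finset.mem_range] at hi
      have : zVec x i = - zVec (θ x) i := by
        funext j
        simp only [zVec, θ, Pi.neg_apply]
        by_cases hj : (x.1 j : ℕ) ≤ i
        · have h3 : (j : ℕ) < d + 1 := zX_le hx.1 (by omega)
          simp only [hj, h3, if_true]
          cases x.2 j <;> simp
        · simp [hj]
      rw [this, hanti _ (zVec_ne _ _ (by omega))]
  rw [s1]
  have s2 : ∀ x ∈ Y, (zInd (zAlt (fun i => lam (zVec x i)) 1 (Finset.range (d+1)))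
        + zInd (zAlt (fun i => lam (zVec x i)) (-1) (Finset.range (d+1))))
      = ∑ i ∈ Finset.range (d+1), zInd (zAlt (fun i => lam (zVec x i)) 1
          ((Finset.range (d+1)).erase i)) := by
    intro x _
    rw [zAlt_boundary]
    intro i hi
    rw [Finset.mem_range] at hi
    exact hne _ (zVec_ne _ _ (by omega))
  rw [Finset.sum_congr rfl s2, Finset.sum_comm, Finset.sum_range_succ]
  have s3 : ∀ i ∈ Finset.range d, ∑ x ∈ Y, zInd (zAlt (fun i => lam (zVec x i)) 1
          ((Finset.range (d+1)).erase i)) = 0 := by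
    intro i hi
    rw [Finset.mem_range] at hi
    let a : Fin m := ⟨i, by omega⟩
    let b : Fin m := ⟨i+1, by omega⟩
    have hab : a ≠ b := by simp [a, b]
    refine Finset.sum_involution (fun x _ => (Equiv.swap a b * x.1, x.2)) ?_ ?_ ?_ ?_
    · intro x hx
      have : zInd (zAlt (fun i => lam (zVec x i)) 1 ((Finset.range (d+1)).erase i)) =
          zInd (zAlt (fun i => lam (zVec (Equiv.swap a b * x.1, x.2) i)) 1
            ((Finset.range (d+1)).erase i)) := by
        apply zInd_congr
        apply zAlt_congr
        intro k hk
        have hki : k ≠ i := Finset.ne_of_mem_erase hk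
        have : zVec x k = zVec (Equiv.swap a b * x.1, x.2) k := by
          funext j
          simp only [zVec, Equiv.Perm.mul_apply]
          have : ((x.1 j : ℕ) ≤ k) ↔ ((Equiv.swap a b (x.1 j) : ℕ) ≤ k) := by
            rw [Equiv.swap_apply_def]
            split_ifs with h1 h2
            · rw [h1]; simp only [a, b]; omega
            · rw [h2]; simp only [a, b]; omega
            · rfl
          exact if_congr this rfl rfl
        simp only [this]
      rw [← this, z_add_self]
    · intro x hx _ h
      have := congrArg Prod.fst h
      simp at this
      exact hab this
    · intro x hx
      rw [hY, Finset.mem_filter] at hx ⊢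
      refine ⟨?_, hx.2⟩
      have hx := hx.1
      rw [zX, Finset.mem_filter] at hx ⊢
      refine ⟨Finset.mem_univ _, fun j hj => ?_⟩
      have := hx.2 j hj
      refine ⟨?_, this.2⟩
      rw [Equiv.Perm.mul_apply, this.1]
      apply Equiv.swap_apply_of_ne_of_ne
      · intro h; rw [h] at hj; simp [a] at hj; omega
      · intro h; rw [h] at hj; simp [b] at hj; omega
    · intro x hx
      simp [← mul_assoc]
  rw [Finset.sum_eq_zero s3, zero_add]
  have er : (Finset.range (d+1)).erase d = Finset.range d := by
    ext k; simp; omega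
  rw [er, ← Finset.sum_filter_add_sum_filter_not Y (fun x => x.1 D = D)]
  have eX : Y.filter (fun x => x.1 D = D) = zX m d := by
    ext x
    simp only [hY, zX, Finset.mem_filter, Finset.mem_univ, true_and]
    constructor
    · rintro ⟨⟨h1, h2⟩, h3⟩ j hj
      by_cases hjd : (j : ℕ) = d
      · have : j = D := Fin.ext hjd
        rw [this]; exact ⟨h3, h2⟩
      · exact h1 j (by omega)
    · intro h
      exact ⟨⟨fun j hj => h j (by omega), (h D (le_refl _)).2⟩, (h D (le_refl _)).1⟩
  rw [eX]
  have s4 : ∑ x ∈ Y.filter (fun x => ¬ x.1 D = D), zInd (zAlt (fun i => lam (zVec x i)) 1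
          (Finset.range d)) = 0 := by
    refine Finset.sum_involution
      (fun x _ => (x.1, Function.update x.2 (x.1.symm D) (!(x.2 (x.1.symm D))))) ?_ ?_ ?_ ?_
    · intro x hx
      have : zInd (zAlt (fun i => lam (zVec x i)) 1 (Finset.range d)) =
          zInd (zAlt (fun i => lam (zVec (x.1, Function.update x.2 (x.1.symm D)
            (!(x.2 (x.1.symm D)))) i)) 1 (Finset.range d)) := by
        apply zInd_congr
        apply zAlt_congr
        intro k hk
        rw [Finset.mem_range] at hk
        have : zVec x k = zVec (x.1, Function.update x.2 (x.1.symm D)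
            (!(x.2 (x.1.symm D)))) k := by
          funext j
          simp only [zVec]
          by_cases hj : j = x.1.symm D
          · subst hj
            simp [D]
            omega
          · simp only [Function.update_of_ne hj]
        simp only [this]
      rw [← this, z_add_self]
    · intro x hx _ h
      have := congrFun (congrArg Prod.snd h) (x.1.symm D)
      simp at this
    · intro x hx
      rw [Finset.mem_filter, hY, Finset.mem_filter] at hx ⊢
      obtain ⟨⟨h1, h2⟩, h3⟩ := hx
      have hs : x.1.symm D ≠ D := by
        intro h
        apply h3
        rw [Equiv.symm_apply_eq] at h
        exact h.symm
      have hlt : ((x.1.symm D : Fin m) : ℕ) < d + 1 := zX_le h1 (by simp [D])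
      refine ⟨⟨?_, ?_⟩, h3⟩
      · rw [zX, Finset.mem_filter] at h1 ⊢
        refine ⟨Finset.mem_univ _, fun j hj => ?_⟩
        have := h1.2 j hj
        refine ⟨this.1, ?_⟩
        have hne : j ≠ x.1.symm D := by
          intro h; rw [h] at hj; omega
        simp only
        rw [Function.update_of_ne hne]
        exact this.2
      · simp only
        rw [Function.update_of_ne hs.symm]
        exact h2
    · intro x hx
      simp
  rw [s4, add_zero]

theorem zQ_one {m : ℕ} (lam : (Fin m → ℤ) → ℤ)
    (hanti : ∀ A, A ≠ 0 → lam (-A) = - lam A) (hne : ∀ A, A ≠ 0 → lam A ≠ 0)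
    (d : ℕ) (hd : d ≤ m) :
    ∑ x ∈ zX m d, zInd (zAlt (fun i => lam (zVec x i)) 1 (Finset.range d)) = 1 := by
  induction d with
  | zero =>
    have : zX m 0 = {(1, fun _ => true)} := by
      ext x
      simp only [zX, Finset.mem_filter, Finset.mem_univ, true_and, Finset.mem_singleton]
      constructor
      · intro h
        ext j
        · simp [(h j (Nat.zero_le _)).1]
        · simp [(h j (Nat.zero_le _)).2]
      · rintro rfl j _
        simp
    rw [this, Finset.sum_singleton]
    simp [zAlt, zInd]
  | succ d ih =>
    rw [zQ_step lam hanti hne d (by omega), ih (by omega)]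

/-- Octahedral Tucker lemma. -/
theorem z_tucker {m : ℕ} (lam : (Fin m → ℤ) → ℤ)
    (hanti : ∀ A, A ≠ 0 → lam (-A) = - lam A) (hne : ∀ A, A ≠ 0 → lam A ≠ 0)
    (hlt : ∀ A, A ≠ 0 → (lam A).natAbs < m) (hm : 0 < m) :
    ∃ A B : Fin m → ℤ, A ≠ 0 ∧ B ≠ 0 ∧ (∀ j, A j = 0 ∨ A j = B j) ∧ lam A = - lam B := by
  have h1 := zQ_one lam hanti hne m le_rfl
  have : ∃ x ∈ zX m m, zAlt (fun i => lam (zVec x i)) 1 (Finset.range m) := by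
    by_contra hcon
    push Not at hcon
    rw [Finset.sum_eq_zero] at h1
    · exact absurd h1 (by decide)
    · intro x hx
      simp [zInd, hcon x hx]
  obtain ⟨x, -, hx⟩ := this
  set a : ℕ → ℤ := fun i => lam (zVec x i) with ha
  have hpig : ∃ i ∈ Finset.range m, ∃ j ∈ Finset.range m, i ≠ j ∧
      (a i).natAbs = (a j).natAbs := by
    apply Finset.exists_ne_map_eq_of_card_lt_of_maps_to (t := Finset.Ico 1 m)
    · simp; omega
    · intro i hi
      simp only [Finset.coe_range, Set.mem_Iio, Finset.coe_Ico, Set.mem_Ico] at hi ⊢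
      have hz := zVec_ne x i hi
      exact ⟨Int.natAbs_pos.2 (hne _ hz), hlt _ hz⟩
  have hpig2 : ∃ i j, i < j ∧ j < m ∧ (a i).natAbs = (a j).natAbs := by
    obtain ⟨i, hi, j, hj, hij, h⟩ := hpig
    rw [Finset.mem_range] at hi hj
    rcases lt_or_gt_of_ne hij with h' | h'
    · exact ⟨i, j, h', hj, h⟩
    · exact ⟨j, i, h', hi, h.symm⟩
  obtain ⟨i, hex⟩ := hpig2
  classical
  obtain ⟨hij, hj, hab⟩ := Nat.find_spec hex
  have hmin := fun k hk => Nat.find_min hex (m := k) hk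
  set j := Nat.find hex
  have hfil : (Finset.range m).filter (fun k => zKey a k < zKey a j)
      = insert i ((Finset.range m).filter (fun k => zKey a k < zKey a i)) := by
    ext k
    simp only [Finset.mem_filter, Finset.mem_insert, Finset.mem_range, zKey, Prod.Lex.toLex_lt_toLex]
    constructor
    · rintro ⟨hk, h | ⟨h, h'⟩⟩
      · right; exact ⟨hk, Or.inl (by omega)⟩
      · by_cases hki : k = i
        · left; exact hki
        · right
          refine ⟨hk, Or.inr ⟨by omega, ?_⟩⟩
          by_contra hc
          exact hmin k h' ⟨by omega, hk, by omega⟩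
    · rintro (rfl | ⟨hk, h | ⟨h, h'⟩⟩)
      · exact ⟨by omega, Or.inr ⟨hab, hij⟩⟩
      · exact ⟨hk, Or.inl (by omega)⟩
      · exact ⟨hk, Or.inr ⟨by omega, by omega⟩⟩
  have hi1 := hx i (Finset.mem_range.2 (by omega))
  have hj1 := hx j (Finset.mem_range.2 hj)
  rw [hfil, Finset.card_insert_of_notMem (by simp), pow_succ] at hj1
  have hsum : a i = - a j := by
    rcases Int.natAbs_eq_natAbs_iff.1 hab with h | h
    · rw [h] at hi1; linarith
    · exact h
  refine ⟨zVec x i, zVec x j, zVec_ne _ _ (by omega), zVec_ne _ _ hj, ?_, hsum⟩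
  intro k
  simp only [zVec]
  by_cases hk : (x.1 k : ℕ) ≤ i
  · right
    have hk2 : (x.1 k : ℕ) ≤ j := by omega
    simp only [hk, hk2, if_true]
  · left; rw [if_neg hk]

def zal (A : ℕ → ℤ) : ℕ → ℤ → ℕ
  | 0, _ => 0
  | k+1, s => if 0 < s * A k then zal A k (-s) + 1 else zal A k s

theorem zal_succ (A : ℕ → ℤ) (k : ℕ) (s : ℤ) :
    zal A (k+1) s = if 0 < s * A k then zal A k (-s) + 1 else zal A k s := rfl

theorem zal_le (A : ℕ → ℤ) (k : ℕ) : ∀ s, zal A k s ≤ zal A k (-s) + 1 := by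
  induction k with
  | zero => intro s; simp [zal]
  | succ k ih =>
    intro s
    rw [zal_succ, zal_succ, neg_neg]
    have := ih s
    split_ifs with h1 h2 h2
    · exfalso; linarith
    · omega
    · omega
    · omega

theorem zal_mono (A B : ℕ → ℤ) (h : ∀ j, A j = 0 ∨ A j = B j) (k : ℕ) :
    ∀ s, zal A k s ≤ zal B k s := by
  induction k with
  | zero => intro s; simp [zal]
  | succ k ih =>
    intro s
    rw [zal_succ, zal_succ]
    have h1 := ih s
    have h2 := ih (-s)
    have h3 := zal_le B k s
    by_cases hA : 0 < s * A k
    · have : A k = B k := by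
        rcases h k with h | h
        · rw [h] at hA; simp at hA
        · exact h
      rw [if_pos hA, if_pos (this ▸ hA)]
      omega
    · rw [if_neg hA]
      split_ifs <;> omega

theorem zal_ne (A : ℕ → ℤ) (k : ℕ) (h : ∃ j < k, A j ≠ 0) : zal A k 1 ≠ zal A k (-1) := by
  induction k with
  | zero => obtain ⟨j, hj, _⟩ := h; omega
  | succ k ih =>
    rw [zal_succ, zal_succ]
    simp only [neg_neg]
    rcases lt_trichotomy (A k) 0 with h1 | h1 | h1
    · rw [if_neg (by linarith), if_pos (by linarith)]; omega
    · rw [if_neg (by linarith), if_neg (by linarith)]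
      apply ih
      obtain ⟨j, hj, hj'⟩ := h
      refine ⟨j, ?_, hj'⟩
      rcases Nat.lt_succ_iff_lt_or_eq.1 hj with h | h
      · exact h
      · exact absurd (h ▸ h1) hj'
    · rw [if_pos (by linarith), if_neg (by linarith)]; omega

theorem zal_neg (A : ℕ → ℤ) (k : ℕ) : ∀ s, zal (-A) k s = zal A k (-s) := by
  induction k with
  | zero => intro s; simp [zal]
  | succ k ih =>
    intro s
    rw [zal_succ, zal_succ, ih, ih]
    simp

theorem zal_card (A : ℕ → ℤ) (k : ℕ) :
    ∀ s, zal A k s ≤ ((Finset.range k).filter (fun j => A j ≠ 0)).card := by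
  induction k with
  | zero => intro s; simp [zal]
  | succ k ih =>
    intro s
    rw [zal_succ, Finset.range_add_one, Finset.filter_insert]
    have h1 := ih s
    have h2 := ih (-s)
    split_ifs with h3 h4 h4
    · rw [Finset.card_insert_of_notMem (by simp)]; omega
    · push Not at h4; rw [h4] at h3; simp at h3
    · rw [Finset.card_insert_of_notMem (by simp)]; omega
    · exact h1

open Classical in
noncomputable def zchg (p : ℕ → Prop) (k : ℕ) : ℕ :=
  ((Finset.range k).filter (fun j => ¬ (p j ↔ p (j+1)))).card

open Classical in
theorem zchg_succ (p : ℕ → Prop) (k : ℕ) :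
    zchg p (k+1) = zchg p k + if (p k ↔ p (k+1)) then 0 else 1 := by
  unfold zchg
  rw [Finset.range_add_one, Finset.filter_insert]
  split_ifs with h1 h2 h2
  · rfl
  · rw [Finset.card_insert_of_notMem (by simp)]

theorem z_tri (x : ℤ) : (x < 0 ∧ ¬ 0 < x ∧ ¬ x = 0) ∨ (¬ x < 0 ∧ ¬ 0 < x ∧ x = 0) ∨
    (¬ x < 0 ∧ 0 < x ∧ ¬ x = 0) := by omega

theorem zchg_bound (A : ℕ → ℤ) (k : ℕ) :
    zchg (fun j => 0 < (-1) ^ j * A j) k + (if A k = 0 then 1 else 0)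
      + 2 * max (zal A (k+1) 1) (zal A (k+1) (-1)) ≤ 2 * (k+1) := by
  induction k with
  | zero =>
    simp only [zal, zchg]
    rcases lt_trichotomy (A 0) 0 with h1 | h1 | h1
    · simp [h1, h1.ne, h1.le, not_lt.2 h1.le]
    · simp [h1]
    · simp [h1, h1.ne', not_lt.2 h1.le]
  | succ k ih =>
    rw [zchg_succ, zal_succ A (k+1), zal_succ A (k+1), neg_neg]
    rw [zal_succ, zal_succ, neg_neg] at ih
    rw [zal_succ, zal_succ, neg_neg]
    have g1 := zal_le A k 1
    have g2 := zal_le A k (-1)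
    rw [neg_neg] at g2
    have hp : (-1 : ℤ) ^ (k+1) = - (-1) ^ k := by rw [pow_succ]; ring
    rcases z_tri (A k) with ⟨h1, h1', h1''⟩ | ⟨h1, h1', h1''⟩ | ⟨h1, h1', h1''⟩ <;>
      rcases z_tri (A (k+1)) with ⟨h2, h2', h2''⟩ | ⟨h2, h2', h2''⟩ | ⟨h2, h2', h2''⟩ <;>
      rcases neg_one_pow_eq_or ℤ k with h3 | h3 <;>
      simp only [hp, h3, h1, h2, h1', h1'', h2', h2'', if_true, if_false, one_mul,
        neg_mul, neg_neg, Left.neg_pos_iff, iff_self, mul_zero, neg_zero, lt_irrefl,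
        iff_true, iff_false, not_true, not_false_iff] at ih ⊢ <;>
      (try split_ifs) <;> omega

open Classical in
theorem z_split (N m : ℕ) (w : ℕ → ℕ → ℝ) (W : ℝ) (hW : 0 ≤ W)
    (hw : ∀ i < N, ∀ j < m, 0 ≤ w i j ∧ w i j ≤ W) :
    ∃ p : ℕ → Prop, zchg p (m-1) ≤ 2 * N ∧ ∀ i < N,
      |∑ j ∈ (Finset.range m).filter p, w i j - (∑ j ∈ Finset.range m, w i j) / 2| ≤ N * W := by
  by_cases hmN : m ≤ N
  · refine ⟨fun _ => False, by simp [zchg], fun i hi => ?_⟩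
    simp only [Finset.filter_false, Finset.sum_empty, zero_sub, abs_neg]
    have h1 : 0 ≤ ∑ j ∈ Finset.range m, w i j :=
      Finset.sum_nonneg fun j hj => (hw i hi j (Finset.mem_range.1 hj)).1
    have h2 : ∑ j ∈ Finset.range m, w i j ≤ m * W := by
      have := Finset.sum_le_card_nsmul (Finset.range m) (w i) W
        (fun j hj => (hw i hi j (Finset.mem_range.1 hj)).2)
      simpa using this
    have h3 : (m : ℝ) * W ≤ N * W := by gcongr
    rw [abs_of_nonneg (by positivity)]
    linarith
  push Not at hmN
  let tot : ℕ → ℝ := fun i => ∑ j ∈ Finset.range m, w i j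
  let pw : (ℕ → ℤ) → ℕ → ℝ := fun A i =>
    ∑ j ∈ (Finset.range m).filter (fun j => 0 < (-1) ^ j * A j), w i j
  have hpair : ∀ A B : ℕ → ℤ, (∀ j, A j = 0 ∨ A j = B j) → ∀ i < N, pw A i + pw (-B) i ≤ tot i := by
    intro A B hAB i hi
    simp only [pw, tot]
    rw [← Finset.sum_union]
    · apply Finset.sum_le_sum_of_subset_of_nonneg
      · intro j hj
        rcases Finset.mem_union.1 hj with hj | hj <;> exact (Finset.mem_filter.1 hj).1
      · intro j hj _
        exact (hw i hi j (Finset.mem_range.1 hj)).1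
    · rw [Finset.disjoint_filter]
      intro j _ h1 h2
      rcases hAB j with h | h
      · rw [h] at h1; simp at h1
      · rw [h] at h1
        simp only [Pi.neg_apply] at h2
        linarith
  have hpair' : ∀ A B : ℕ → ℤ, (∀ j, A j = 0 ∨ A j = B j) → ∀ i < N, pw (-A) i + pw B i ≤ tot i := by
    intro A B hAB i hi
    have := hpair (-A) (-B) (fun j => by
      rcases hAB j with h | h
      · left; simp [h]
      · right; simp [h]) i hi
    rwa [neg_neg] at this
  let maj : (ℕ → ℤ) → ℕ → Prop := fun A i => i < N ∧ (tot i / 2 < pw A i ∨ tot i / 2 < pw (-A) i)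
  have hmajneg : ∀ A, maj (-A) = maj A := by
    intro A
    funext i
    simp only [maj, neg_neg]
    rw [or_comm]
  by_contra hcon
  push Not at hcon
  -- non-majority vectors have few alternations
  have hfew : ∀ A : ℕ → ℤ, (¬ ∃ i, maj A i) → max (zal A m 1) (zal A m (-1)) + N < m := by
    intro A hA
    by_contra hlt
    push Not at hlt
    obtain ⟨i, hi, hbad⟩ := hcon (fun j => 0 < (-1) ^ j * A j) (by
      have := zchg_bound A (m-1)
      have hm1 : m - 1 + 1 = m := by omega
      rw [hm1] at this
      omega)
    apply absurd hbad
    push Not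
    push Not at hA
    have hA := hA i
    simp only [maj, not_and, not_or, not_lt] at hA
    obtain ⟨hA1, hA2⟩ := hA hi
    have hz : ((Finset.range m).filter (fun j => A j = 0)).card ≤ N := by
      have h1 := zal_card A m 1
      have h2 := zal_card A m (-1)
      have h3 := Finset.card_filter_add_card_filter_not (s := Finset.range m) (fun j => A j = 0)
      rw [Finset.card_range] at h3
      simp only [ne_eq] at h1 h2
      omega
    have hzw : ∑ j ∈ (Finset.range m).filter (fun j => A j = 0), w i j ≤ N * W := by
      have := Finset.sum_le_card_nsmul ((Finset.range m).filter (fun j => A j = 0)) (w i) W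
        (fun j hj => (hw i hi j (Finset.mem_range.1 (Finset.mem_filter.1 hj).1)).2)
      rw [nsmul_eq_mul] at this
      refine this.trans ?_
      gcongr
    have htot : tot i = pw A i + pw (-A) i
        + ∑ j ∈ (Finset.range m).filter (fun j => A j = 0), w i j := by
      simp only [tot, pw, Finset.sum_filter]
      rw [← Finset.sum_add_distrib, ← Finset.sum_add_distrib]
      apply Finset.sum_congr rfl
      intro j _
      simp only [Pi.neg_apply]
      rcases z_tri (A j) with ⟨h1, h1', h1''⟩ | ⟨h1, h1', h1''⟩ | ⟨h1, h1', h1''⟩ <;>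
        rcases neg_one_pow_eq_or ℤ j with h3 | h3 <;>
        simp [h3, h1, h1', h1'', -not_lt]
    have hNW : 0 ≤ (N : ℝ) * W := by positivity
    have key : |pw A i - tot i / 2| ≤ N * W := by
      rw [abs_le]
      constructor <;> linarith
    refine le_trans (le_of_eq ?_) key
    simp only [pw, tot]
    congr!
  let lam : (ℕ → ℤ) → ℤ := fun A =>
    if ∃ i, maj A i then
      (if tot (sInf {i | maj A i}) / 2 < pw A (sInf {i | maj A i})
        then ((sInf {i | maj A i} : ℕ) : ℤ) + 1 else -(((sInf {i | maj A i} : ℕ) : ℤ) + 1))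
    else (if zal A m (-1) < zal A m 1 then ((N + zal A m 1 : ℕ) : ℤ)
      else -((N + zal A m (-1) : ℕ) : ℤ))
  have hself : ∀ A : ℕ → ℤ, ∀ j, A j = 0 ∨ A j = A j := fun A j => Or.inr rfl
  have hspec : ∀ A, (∃ i, maj A i) → maj A (sInf {i | maj A i}) := by
    intro A h
    exact Nat.sInf_mem (s := {i | maj A i}) h
  have hanti : ∀ A : ℕ → ℤ, (∃ j < m, A j ≠ 0) → lam (-A) = - lam A := by
    intro A hA
    simp only [lam, hmajneg]
    by_cases h : ∃ i, maj A i
    · have hs := hspec A h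
      rw [if_pos h, if_pos h]
      generalize sInf {i | maj A i} = i at hs
      have hp := hpair A A (hself A) i hs.1
      rcases hs.2 with h1 | h1
      · rw [if_pos h1, if_neg (by linarith)]
      · rw [if_pos h1, if_neg (by linarith)]; ring
    · rw [if_neg h, if_neg h, zal_neg, zal_neg, neg_neg]
      have := zal_ne A m hA
      rcases lt_or_gt_of_ne this with h | h
      · rw [if_pos h, if_neg (by omega)]; ring
      · rw [if_neg (by omega), if_pos h]
  have hne : ∀ A : ℕ → ℤ, (∃ j < m, A j ≠ 0) → lam A ≠ 0 := by
    intro A hA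
    simp only [lam]
    have := zal_ne A m hA
    split_ifs with h1 h2 h3
    · omega
    · omega
    · omega
    · omega
  have hlt : ∀ A : ℕ → ℤ, (∃ j < m, A j ≠ 0) → (lam A).natAbs < m := by
    intro A hA
    simp only [lam]
    by_cases h : ∃ i, maj A i
    · have := (hspec A h).1
      rw [if_pos h]
      split_ifs <;> omega
    · have := hfew A h
      rw [if_neg h]
      split_ifs <;> omega
  let ex : (Fin m → ℤ) → (ℕ → ℤ) := fun A j => if h : j < m then A ⟨j, h⟩ else 0
  have hex : ∀ A, A ≠ 0 → ∃ j < m, ex A j ≠ 0 := by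
    intro A hA
    obtain ⟨j, hj⟩ := Function.ne_iff.1 hA
    exact ⟨j, j.2, by simpa [ex] using hj⟩
  have hexn : ∀ A, ex (-A) = - ex A := by
    intro A; funext j; by_cases h : j < m <;> simp [ex, h]
  obtain ⟨A', B', hA', hB', hAB', hl⟩ := z_tucker (fun A => lam (ex A))
    (fun A hA => by simp only [hexn]; exact hanti _ (hex A hA))
    (fun A hA => hne _ (hex A hA)) (fun A hA => hlt _ (hex A hA)) (by omega)
  have hAB : ∀ j, ex A' j = 0 ∨ ex A' j = ex B' j := by
    intro j
    by_cases h : j < m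
    · simp only [ex, h, dif_pos]; exact hAB' _
    · simp [ex, h]
  have hA := hex A' hA'
  have hB := hex B' hB'
  generalize ex A' = A at *
  generalize ex B' = B at *
  have hm1 := zal_mono A B hAB m 1
  have hm2 := zal_mono A B hAB m (-1)
  have hn1 := zal_ne A m hA
  have hn2 := zal_ne B m hB
  simp only [lam] at hl
  by_cases h1 : ∃ i, maj A i
  · have hs := hspec A h1
    by_cases h2 : ∃ i, maj B i
    · have hs2 := hspec B h2
      rw [if_pos h1, if_pos h2] at hl
      generalize sInf {i | maj A i} = i at *
      generalize sInf {i | maj B i} = i' at *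
      have hii : i = i' := by split_ifs at hl <;> omega
      subst hii
      have q1 := hpair A B hAB i hs.1
      have q2 := hpair' A B hAB i hs.1
      have q3 := hs.2
      have q4 := hs2.2
      split_ifs at hl with g1 g2 g2
      · omega
      · rcases q4 with q4 | q4
        · exact g2 q4
        · linarith
      · rcases q3 with q3 | q3
        · exact g1 q3
        · linarith
      · omega
    · rw [if_pos h1, if_neg h2] at hl
      have := hs.1
      split_ifs at hl <;> omega
  · by_cases h2 : ∃ i, maj B i
    · have := (hspec B h2).1
      rw [if_neg h1, if_pos h2] at hl
      split_ifs at hl <;> omega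
    · rw [if_neg h1, if_neg h2] at hl
      split_ifs at hl <;> omega

open Classical in
noncomputable def zS {n : ℕ} (g : ℕ → Fin n → ℤ) (p : ℕ → Prop) (k : ℕ) : Fin n → ℤ :=
  ∑ j ∈ Finset.range k, if p j then g (j+1) - g j else 0

open Classical in
noncomputable def zC (p : ℕ → Prop) (k : ℕ) : ℝ :=
  ∑ j ∈ Finset.range k, if p j then (1 : ℝ) else 0

theorem z_seg {n : ℕ} (g : ℕ → Fin n → ℤ) (p : ℕ → Prop) (a r : ℕ) (har : a ≤ r)
    (hp : ∀ j, a ≤ j → j < r → p j) :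
    zS g p r = zS g p a + (g r - g a) ∧ zC p r = zC p a + ((r : ℝ) - a) := by
  induction r, har using Nat.le_induction with
  | base => simp
  | succ r har ih =>
    obtain ⟨i1, i2⟩ := ih (fun j h1 h2 => hp j h1 (by omega))
    have := hp r har (by omega)
    constructor
    · rw [zS, Finset.sum_range_succ, ← zS, i1, if_pos this]; abel
    · rw [zC, Finset.sum_range_succ, ← zC, i2, if_pos this]; push_cast; ring

theorem z_seg_not {n : ℕ} (g : ℕ → Fin n → ℤ) (p : ℕ → Prop) (a r : ℕ) (har : a ≤ r)
    (hp : ∀ j, a ≤ j → j < r → ¬ p j) :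
    zS g p r = zS g p a ∧ zC p r = zC p a := by
  induction r, har using Nat.le_induction with
  | base => simp
  | succ r har ih =>
    obtain ⟨i1, i2⟩ := ih (fun j h1 h2 => hp j h1 (by omega))
    have := hp r har (by omega)
    constructor
    · rw [zS, Finset.sum_range_succ, ← zS, i1, if_neg this]; abel
    · rw [zC, Finset.sum_range_succ, ← zC, i2, if_neg this]; ring

theorem z_path {n : ℕ} (l : (Fin n → ℤ) → ℝ) (h0 : l 0 = 0)
    (hsub : ∀ x y, l (x + y) ≤ l x + l y) (g : ℕ → Fin n → ℤ) (C : ℝ) (hC : 0 ≤ C) (m : ℕ)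
    (hg : ∀ a b, a ≤ b → b ≤ m → l (g b - g a) ≤ (b : ℝ) - a + C) (p : ℕ → Prop) :
    l (zS g p m) ≤ zC p m + C * (zchg p (m-1) + 1) := by
  classical
  have hstep : ∀ a r, a ≤ r → r ≤ m → (∀ j, a ≤ j → j < r → (p j ↔ p a)) →
      l (zS g p r) ≤ l (zS g p a) + (zC p r - zC p a) + C := by
    intro a r har hrm hp
    by_cases hpa : p a
    · obtain ⟨e1, e2⟩ := z_seg g p a r har (fun j h1 h2 => (hp j h1 h2).2 hpa)
      have := hsub (zS g p a) (g r - g a)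
      have := hg a r har hrm
      rw [e1, e2]
      linarith
    · obtain ⟨e1, e2⟩ := z_seg_not g p a r har (fun j h1 h2 h => hpa ((hp j h1 h2).1 h))
      rw [e1, e2]
      linarith
  have hmain : ∀ k, k < m → ∃ a ≤ k, (∀ j, a ≤ j → j ≤ k → (p j ↔ p a)) ∧
      l (zS g p a) ≤ zC p a + C * zchg p k := by
    intro k hk
    induction k with
    | zero =>
      refine ⟨0, le_rfl, fun j h1 h2 => ?_, ?_⟩
      · have : j = 0 := by omega
        rw [this]
      · simp [zS, zC, h0, zchg]
    | succ k ih =>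
      obtain ⟨a, hak, hp, hl⟩ := ih (by omega)
      by_cases hpk : p k ↔ p (k+1)
      · refine ⟨a, by omega, fun j h1 h2 => ?_, ?_⟩
        · rcases Nat.lt_or_ge k j with h | h
          · have : j = k + 1 := by omega
            rw [this, ← hpk]
            exact hp k hak le_rfl
          · exact hp j h1 h
        · rw [zchg_succ, if_pos hpk]; simpa using hl
      · refine ⟨k+1, le_rfl, fun j h1 h2 => ?_, ?_⟩
        · have : j = k + 1 := by omega
          rw [this]
        · rw [zchg_succ, if_neg hpk]
          have := hstep a (k+1) (by omega) (by omega) (fun j h1 h2 => hp j h1 (by omega))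
          push_cast
          linarith
  rcases Nat.eq_zero_or_pos m with hm | hm
  · subst hm
    simp [zS, zC, h0, zchg, hC]
  · obtain ⟨a, hak, hp, hl⟩ := hmain (m-1) (by omega)
    have := hstep a m (by omega) le_rfl (fun j h1 h2 => hp j h1 (by omega))
    linarith

theorem z_chg_not (p : ℕ → Prop) (k : ℕ) : zchg (fun j => ¬ p j) k = zchg p k := by
  classical
  unfold zchg
  congr 1
  ext j
  simp only [Finset.mem_filter, not_iff_not]

theorem z_box {n : ℕ} (l : (Fin n → ℤ) → ℝ) (K : ℤ) :
    ∃ C : ℝ, 0 ≤ C ∧ ∀ z : Fin n → ℤ, (∀ i, |z i| ≤ K) → l z ≤ C := by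
  have hf : (Set.Icc (fun _ : Fin n => -K) (fun _ => K)).Finite := Set.finite_Icc _ _
  obtain ⟨C, hC⟩ := (hf.image l).bddAbove
  refine ⟨max C 0, le_max_right _ _, fun z hz => le_trans (hC ⟨z, ?_, rfl⟩) (le_max_left _ _)⟩
  exact ⟨fun i => (abs_le.1 (hz i)).1, fun i => (abs_le.1 (hz i)).2⟩

theorem z_fin_bound {n : ℕ} (s : Set (Fin n → ℤ)) (hs : s.Finite) :
    ∃ K : ℕ, ∀ z ∈ s, ∀ i, |z i| ≤ K := by
  obtain ⟨K, hK⟩ := (hs.image (fun z => ∑ i, (z i).natAbs)).bddAbove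
  refine ⟨K, fun z hz i => ?_⟩
  have h1 : ∑ i, (z i).natAbs ≤ K := hK ⟨z, hz, rfl⟩
  have h2 : (z i).natAbs ≤ ∑ i, (z i).natAbs :=
    Finset.single_le_sum (f := fun i => (z i).natAbs) (fun _ _ => Nat.zero_le _) (Finset.mem_univ i)
  rw [Int.abs_eq_natAbs]
  omega

theorem z_double {n : ℕ} (l : (Fin n → ℤ) → ℝ) (h0 : l 0 = 0) (hneg : ∀ x, l (-x) = l x)
    (hsub : ∀ x y, l (x + y) ≤ l x + l y)
    (hfin : ∀ R : ℝ, {z | l z ≤ R}.Finite) (C : ℝ) (hC : 0 ≤ C)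
    (hgeo : ∀ z, ∃ (g : ℕ → Fin n → ℤ) (m : ℕ), g 0 = 0 ∧ g m = z ∧ (m : ℝ) ≤ l z + 1 ∧
      ∀ a b, a ≤ b → b ≤ m → l (g b - g a) ≤ (b : ℝ) - a + C) :
    ∃ D : ℝ, 0 ≤ D ∧ ∀ z, 2 * l z ≤ l (2 • z) + D := by
  classical
  obtain ⟨K, hK⟩ := z_fin_bound _ (hfin (1 + C))
  -- number of colours `n + 1`, weights at most `2 K + 1`
  set W : ℝ := 2 * K + 1 with hW
  set E : ℝ := ((n + 1 : ℕ) : ℝ) * W with hE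
  have hW0 : 0 ≤ W := by positivity
  have hE0 : 0 ≤ E := by positivity
  obtain ⟨C1, hC1, hbox⟩ := z_box (n := n) l ⌈E + K * E⌉
  refine ⟨1 + 2 * (C * (2 * (n + 1) + 1)) + 2 * C1, by positivity, fun z => ?_⟩
  obtain ⟨g, m, hg0, hgm, hml, hg⟩ := hgeo (2 • z)
  have hv : ∀ j < m, ∀ i, |g (j+1) i - g j i| ≤ K := by
    intro j hj i
    have := hg j (j+1) (by omega) (by omega)
    exact hK (g (j+1) - g j) (by simp only [Set.mem_setOf_eq]; push_cast at this; linarith) i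
  let w : ℕ → ℕ → ℝ := fun i j =>
    if h : i < n then (K : ℝ) + ((g (j+1) ⟨i, h⟩ - g j ⟨i, h⟩ : ℤ) : ℝ) else 1
  obtain ⟨p, hp1, hp2⟩ := z_split (n+1) m w W hW0 (by
    intro i hi j hj
    simp only [w]
    split_ifs with h
    · have := abs_le.1 (hv j hj ⟨i, h⟩)
      have t1 : (-(K:ℤ) : ℝ) ≤ ((g (j+1) ⟨i, h⟩ - g j ⟨i, h⟩ : ℤ) : ℝ) := by exact_mod_cast this.1
      have t2 : ((g (j+1) ⟨i, h⟩ - g j ⟨i, h⟩ : ℤ) : ℝ) ≤ ((K:ℤ) : ℝ) := by exact_mod_cast this.2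
      rw [Int.cast_natCast] at t1 t2
      constructor <;> linarith
    · constructor
      · norm_num
      · have : (0 : ℝ) ≤ K := by positivity
        linarith)
  have hcount : |zC p m - m / 2| ≤ E := by
    have := hp2 n (by omega)
    simp only [w, lt_irrefl, dif_neg, not_false_iff, Finset.sum_filter] at this
    simp only [Finset.sum_const, Finset.card_range, nsmul_eq_mul, mul_one] at this
    exact this
  have htel : ∀ i, ∑ j ∈ Finset.range m, (g (j+1) i - g j i) = 2 * z i := by
    intro i
    rw [Finset.sum_range_sub (fun j => g j i), hgm, hg0]
    simp
  have hcoord : ∀ i, |(zS g p m - z) i| ≤ ⌈E + K * E⌉ := by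
    intro i
    have := hp2 i (by omega)
    simp only [w, i.2, dif_pos, Finset.sum_filter] at this
    have e1 : ∑ j ∈ Finset.range m, (if p j then (K : ℝ) + ((g (j+1) i - g j i : ℤ) : ℝ) else 0)
        = K * zC p m + ((zS g p m i : ℤ) : ℝ) := by
      simp only [zS, zC, Finset.mul_sum, Finset.sum_apply]
      push_cast
      rw [← Finset.sum_add_distrib]
      apply Finset.sum_congr rfl
      intro j _
      split_ifs <;> simp
    have e2 : ∑ j ∈ Finset.range m, ((K : ℝ) + ((g (j+1) i - g j i : ℤ) : ℝ))
        = K * m + 2 * (z i : ℝ) := by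
      rw [Finset.sum_add_distrib, ← Int.cast_sum, htel]
      simp; ring
    simp only [Fin.eta] at this
    rw [e1, e2] at this
    have t1 := abs_le.1 this
    have t2 := abs_le.1 hcount
    have hK0 : (0:ℝ) ≤ K := by positivity
    have t3 := mul_le_mul_of_nonneg_left t2.1 hK0
    have t4 := mul_le_mul_of_nonneg_left t2.2 hK0
    have t5 : |((zS g p m i - z i : ℤ) : ℝ)| ≤ E + K * E := by
      push_cast
      rw [abs_le]
      constructor <;> linarith [t1.1, t1.2]
    have t6 : ((|zS g p m i - z i| : ℤ) : ℝ) ≤ (⌈E + K * E⌉ : ℝ) := by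
      push_cast
      push_cast at t5
      exact t5.trans (Int.le_ceil _)
    exact_mod_cast t6
  have hsum : zS g p m + zS g (fun j => ¬ p j) m = 2 • z := by
    simp only [zS]
    rw [← Finset.sum_add_distrib]
    funext i
    rw [Finset.sum_apply]
    rw [show (2 • z) i = 2 * z i by simp, ← htel]
    apply Finset.sum_congr rfl
    intro j _
    by_cases h : p j <;> simp [h]
  have hcsum : zC p m + zC (fun j => ¬ p j) m = m := by
    simp only [zC]
    rw [← Finset.sum_add_distrib]
    rw [Finset.sum_congr rfl (g := fun _ => (1 : ℝ))]
    · simp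
    · intro j _
      by_cases h : p j <;> simp [h]
  have q1 := z_path l h0 hsub g C hC m hg p
  have q2 := z_path l h0 hsub g C hC m hg (fun j => ¬ p j)
  rw [z_chg_not] at q2
  have q3 := hbox _ hcoord
  have q4 : l z ≤ l (zS g p m) + C1 := by
    have := hsub (zS g p m) (-(zS g p m - z))
    rw [hneg] at this
    rw [show zS g p m + -(zS g p m - z) = z by abel] at this
    linarith
  have q5 : l z ≤ l (zS g (fun j => ¬ p j) m) + C1 := by
    have := hsub (zS g (fun j => ¬ p j) m) (zS g p m - z)
    rw [show zS g (fun j => ¬ p j) m + (zS g p m - z) = z by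
      have : zS g (fun j => ¬ p j) m + (zS g p m - z)
        = (zS g p m + zS g (fun j => ¬ p j) m) - z := by abel
      rw [this, hsum, two_smul]; abel] at this
    linarith
  have q6 : (zchg p (m-1) : ℝ) ≤ 2 * (n + 1) := by exact_mod_cast hp1
  have q7 : C * ((zchg p (m-1) : ℝ) + 1) ≤ C * (2 * (n + 1) + 1) := by gcongr
  linarith

theorem z_stable {E : Type*} [AddCommGroup E] [Module ℝ E] (G : E → ℝ) (c : ℝ)
    (h2 : ∀ x, |G ((2:ℝ) • x) - 2 * G x| ≤ c) (hadd : ∀ x y, G (x + y) ≤ G x + G y + c)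
    (hneg : ∀ x, G (-x) ≤ G x + c) (hnn : ∀ x, 0 ≤ G x)
    (hbd : ∀ x, ∃ B, ∀ t : ℝ, 0 ≤ t → t ≤ 1 → G (t • x) ≤ B) :
    ∃ N : E → ℝ, (∀ x, 0 ≤ N x) ∧ (∀ (a : ℝ) x, N (a • x) = |a| * N x) ∧
      (∀ x y, N (x + y) ≤ N x + N y) ∧ ∀ x, |N x - G x| ≤ c := by
  have hd : ∀ x k, dist (G ((2:ℝ)^k • x) / 2^k) (G ((2:ℝ)^(k+1) • x) / 2^(k+1)) ≤ c / 2 / 2^k := by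
    intro x k
    have := h2 ((2:ℝ)^k • x)
    rw [smul_smul, ← pow_succ'] at this
    rw [dist_comm, Real.dist_eq]
    have e : G ((2:ℝ)^(k+1) • x) / 2^(k+1) - G ((2:ℝ)^k • x) / 2^k
        = (G ((2:ℝ)^(k+1) • x) - 2 * G ((2:ℝ)^k • x)) / 2^(k+1) := by
      rw [pow_succ]; field_simp
    rw [e, abs_div, abs_of_pos (by positivity : (0:ℝ) < 2^(k+1)), div_div, ← pow_succ']
    gcongr
  have hex : ∀ x, ∃ L, Filter.Tendsto (fun k : ℕ => G ((2:ℝ)^k • x) / 2^k) Filter.atTop (nhds L) :=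
    fun x => cauchySeq_tendsto_of_complete (cauchySeq_of_le_geometric_two (hd x))
  choose N hN using hex
  have hclose : ∀ x, |N x - G x| ≤ c := by
    intro x
    have := dist_le_of_le_geometric_two_of_tendsto₀ (hd x) (hN x)
    rw [dist_comm, Real.dist_eq] at this
    simpa using this
  have hN0 : ∀ x, 0 ≤ N x := fun x =>
    ge_of_tendsto' (hN x) (fun k => div_nonneg (hnn _) (by positivity))
  have hcz : Filter.Tendsto (fun k : ℕ => c / (2:ℝ)^k) Filter.atTop (nhds 0) := by
    have := (tendsto_pow_atTop_nhds_zero_of_lt_one (r := (1/2 : ℝ)) (by norm_num) (by norm_num)).const_mul c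
    simp only [mul_zero] at this
    refine this.congr fun k => ?_
    rw [div_pow, one_pow]; ring
  have hNadd : ∀ x y, N (x + y) ≤ N x + N y := by
    intro x y
    have := ((hN x).add (hN y)).add hcz
    rw [add_zero] at this
    refine le_of_tendsto_of_tendsto' (hN (x+y)) this fun k => ?_
    have := hadd ((2:ℝ)^k • x) ((2:ℝ)^k • y)
    rw [← smul_add] at this
    rw [← add_div, ← add_div]
    gcongr
  have hNneg' : ∀ x, N (-x) ≤ N x := by
    intro x
    have := (hN x).add hcz
    rw [add_zero] at this
    refine le_of_tendsto_of_tendsto' (hN (-x)) this fun k => ?_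
    have := hneg ((2:ℝ)^k • x)
    rw [← smul_neg] at this
    rw [← add_div]
    gcongr
  have hNneg : ∀ x, N (-x) = N x := fun x =>
    le_antisymm (hNneg' x) (by simpa using hNneg' (-x))
  have hNpow : ∀ (k : ℕ) x, N ((2:ℝ)^k • x) = 2^k * N x := by
    intro k x
    have h1 := (hN x).comp (Filter.tendsto_add_atTop_nat k)
    have h2 := (hN ((2:ℝ)^k • x)).div_const ((2:ℝ)^k)
    have : N ((2:ℝ)^k • x) / 2^k = N x := by
      refine tendsto_nhds_unique h2 (h1.congr fun j => ?_)
      simp only [Function.comp, smul_smul]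
      rw [← pow_add, div_div, ← pow_add]
    field_simp at this
    linarith
  have hNnat : ∀ (k : ℕ) x, N ((k:ℝ) • x) ≤ k * N x := by
    intro k x
    induction k with
    | zero =>
      have := hNpow 1 (0:E)
      simp at this
      have : N 0 = 0 := by linarith
      simp [this]
    | succ k ih =>
      push_cast
      rw [add_smul, one_smul]
      linarith [hNadd ((k:ℝ) • x) x]
  have hle : ∀ (a : ℝ), 0 ≤ a → ∀ x, N (a • x) ≤ a * N x := by
    intro a ha x
    obtain ⟨B, hB⟩ := hbd x
    have hr : ∀ b : ℝ, 0 ≤ b → N (b • x) ≤ b * N x + (B + c) := by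
      intro b hb
      have e : b • x = (⌊b⌋₊ : ℝ) • x + (b - ⌊b⌋₊) • x := by rw [← add_smul]; congr 1; ring
      have f1 := Nat.floor_le hb
      have f2 := Nat.lt_floor_add_one b
      have t1 := hB (b - ⌊b⌋₊) (by linarith) (by linarith)
      have t2 := (abs_le.1 (hclose ((b - ⌊b⌋₊) • x))).2
      have t3 := hNadd ((⌊b⌋₊ : ℝ) • x) ((b - ⌊b⌋₊) • x)
      have t4 := hNnat ⌊b⌋₊ x
      have t5 : (⌊b⌋₊ : ℝ) * N x ≤ b * N x := mul_le_mul_of_nonneg_right f1 (hN0 x)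
      rw [e]
      linarith
    have hBz : Filter.Tendsto (fun k : ℕ => a * N x + (B + c) / (2:ℝ)^k) Filter.atTop
        (nhds (a * N x)) := by
      have := (tendsto_pow_atTop_nhds_zero_of_lt_one (r := (1/2 : ℝ)) (by norm_num)
        (by norm_num)).const_mul (B + c)
      have := this.const_add (a * N x)
      simp only [mul_zero, add_zero] at this
      refine this.congr fun k => ?_
      rw [div_pow, one_pow]; ring
    refine ge_of_tendsto' hBz fun k => ?_
    have := hr (2^k * a) (by positivity)
    rw [← smul_smul, hNpow] at this
    have hp : (0:ℝ) < 2^k := by positivity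
    have e : a * N x + (B + c) / 2^k = (2^k * a * N x + (B + c)) / 2^k := by field_simp
    rw [e, le_div_iff₀ hp]
    linarith
  have heq : ∀ (a : ℝ), 0 ≤ a → ∀ x, N (a • x) = a * N x := by
    intro a ha x
    refine le_antisymm (hle a ha x) ?_
    rcases ha.eq_or_lt with h | h
    · rw [← h]; simpa using hN0 0
    · have := hle a⁻¹ (by positivity) (a • x)
      rw [smul_smul, inv_mul_cancel₀ h.ne', one_smul] at this
      calc a * N x ≤ a * (a⁻¹ * N (a • x)) := by gcongr
        _ = N (a • x) := by field_simp
  refine ⟨N, hN0, fun a x => ?_, hNadd, hclose⟩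
  rcases le_total 0 a with h | h
  · rw [abs_of_nonneg h, heq a h]
  · rw [abs_of_nonpos h, ← heq (-a) (by linarith), neg_smul, hNneg]

theorem z_eq_of_close {E : Type*} [AddCommGroup E] [Module ℝ E] (N N' : E → ℝ)
    (h : ∀ (a : ℝ) x, N (a • x) = |a| * N x) (h' : ∀ (a : ℝ) x, N' (a • x) = |a| * N' x)
    (D : ℝ) (hD : ∀ x, |N x - N' x| ≤ D) (x : E) : N x = N' x := by
  by_contra hne
  have hpos : 0 < |N x - N' x| := abs_pos.2 (sub_ne_zero.2 hne)
  obtain ⟨k, hk⟩ := exists_nat_gt (D / |N x - N' x|)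
  have := hD ((k:ℝ) • x)
  rw [h, h', ← mul_sub, abs_mul, abs_abs, abs_of_nonneg (by positivity : (0:ℝ) ≤ k)] at this
  rw [div_lt_iff₀ hpos] at hk
  linarith


/-- Every proper, roughly geodesic, left-invariant metric `d` on `ℤⁿ` is roughly isometric,
via the inclusion `ℤⁿ ↪ ℝⁿ`, to a norm `N` on `ℝⁿ`; moreover every `ℤ`-linear automorphism
of `ℤⁿ` which is a rough isometry of `(ℤⁿ, d)` induces a linear isometry of `(ℝⁿ, N)`. -/
theorem proper_roughly_geodesic_invariant_metric_on_zn_roughly_isometric_to_norm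
    (n : ℕ) (d : (Fin n → ℤ) → (Fin n → ℤ) → ℝ)
    (hrefl : ∀ z, d z z = 0)
    (hpos : ∀ z w, z ≠ w → 0 < d z w)
    (hsymm : ∀ z w, d z w = d w z)
    (htri : ∀ z w u, d z u ≤ d z w + d w u)
    (hinv : ∀ k z w, d (k + z) (k + w) = d z w)
    (hproper : ∀ (z : Fin n → ℤ) (R : ℝ), {w : Fin n → ℤ | d z w ≤ R}.Finite)
    (C₀ : ℝ) (hC₀ : 0 < C₀)
    (hgeo : ∀ z w : Fin n → ℤ, ∃ f : ℝ → (Fin n → ℤ), f 0 = z ∧ f (d z w) = w ∧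
      ∀ t t' : ℝ, t ∈ Set.Icc 0 (d z w) → t' ∈ Set.Icc 0 (d z w) →
        |t - t'| - C₀ ≤ d (f t) (f t') ∧ d (f t) (f t') ≤ |t - t'| + C₀) :
    ∃ N : (Fin n → ℝ) → ℝ,
      -- `N` is a norm on `ℝⁿ`
      (∀ x, N x = 0 ↔ x = 0) ∧
      (∀ (a : ℝ) (x), N (a • x) = |a| * N x) ∧
      (∀ x y, N (x + y) ≤ N x + N y) ∧
      -- the inclusion `ℤⁿ ↪ ℝⁿ` is a rough isometry from `(ℤⁿ, d)` to `(ℝⁿ, N)`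
      (∃ C : ℝ, 0 ≤ C ∧
        (∀ z w : Fin n → ℤ,
          |d z w - N ((fun i => (z i : ℝ)) - fun i => (w i : ℝ))| ≤ C) ∧
        (∀ x : Fin n → ℝ, ∃ z : Fin n → ℤ, N (x - fun i => (z i : ℝ)) ≤ C)) ∧
      -- rough isometries of `(ℤⁿ, d)` in `GL(n, ℤ)` induce isometries of `(ℝⁿ, N)`
      (∀ f : (Fin n → ℤ) ≃ₗ[ℤ] (Fin n → ℤ),
        (∃ C' : ℝ, ∀ z w : Fin n → ℤ, |d (f z) (f w) - d z w| ≤ C') →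
        ∀ fR : (Fin n → ℝ) ≃ₗ[ℝ] (Fin n → ℝ),
          (∀ z : Fin n → ℤ, fR (fun i => (z i : ℝ)) = fun i => ((f z) i : ℝ)) →
          ∀ x : Fin n → ℝ, N (fR x) = N x) := by

  classical
  set l : (Fin n → ℤ) → ℝ := fun z => d 0 z with hl
  have hd : ∀ z w, d z w = l (w - z) := by
    intro z w
    have := hinv (-z) z w
    rw [neg_add_cancel] at this
    rw [← this]
    simp only [hl]
    congr 1
    abel
  have h0 : l 0 = 0 := hrefl 0
  have hneg : ∀ x, l (-x) = l x := by
    intro x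
    have h1 := hd x 0
    have h2 := hsymm x 0
    rw [zero_sub] at h1
    rw [← h1, h2]
  have hsub : ∀ x y, l (x + y) ≤ l x + l y := by
    intro x y
    have h1 := htri 0 x (x + y)
    rw [hd x (x+y), add_sub_cancel_left] at h1
    exact h1
  have hnn : ∀ x, 0 ≤ l x := by
    intro x
    have h1 := hsub x (-x)
    rw [add_neg_cancel, h0, hneg] at h1
    linarith
  have hfin : ∀ R : ℝ, {z | l z ≤ R}.Finite := fun R => hproper 0 R
  have hgeo' : ∀ z, ∃ (g : ℕ → Fin n → ℤ) (m : ℕ), g 0 = 0 ∧ g m = z ∧ (m : ℝ) ≤ l z + 1 ∧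
      ∀ a b, a ≤ b → b ≤ m → l (g b - g a) ≤ (b : ℝ) - a + C₀ := by
    intro z
    obtain ⟨f, hf0, hf1, hf⟩ := hgeo 0 z
    change f (l z) = z at hf1
    have hT := hnn z
    refine ⟨fun k => f (min (k : ℝ) (l z)), ⌈l z⌉₊, ?_, ?_, (Nat.ceil_lt_add_one hT).le, ?_⟩
    · simp [hT, hf0]
    · simp only
      rw [min_eq_right (Nat.le_ceil _), hf1]
    · intro a b hab _
      have hab' : (a : ℝ) ≤ b := by exact_mod_cast hab
      have ha0 : (0:ℝ) ≤ a := by positivity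
      have hb0 : (0:ℝ) ≤ b := by positivity
      have := (hf (min a (l z)) (min b (l z)) ⟨le_min ha0 hT, min_le_right _ _⟩
        ⟨le_min hb0 hT, min_le_right _ _⟩).2
      rw [hd] at this
      refine this.trans ?_
      have : |min (a:ℝ) (l z) - min (b:ℝ) (l z)| ≤ (b:ℝ) - a := by
        have h := abs_min_sub_min_le_max (a:ℝ) (l z) b (l z)
        rw [sub_self, abs_zero, max_eq_left (abs_nonneg _), abs_sub_comm,
          abs_sub_comm (a:ℝ) b, abs_of_nonneg (by linarith : (0:ℝ) ≤ (b:ℝ) - a)] at h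
        rw [abs_sub_comm]; exact h
      linarith
  obtain ⟨D, hD0, hD⟩ := z_double l h0 hneg hsub hfin C₀ hC₀.le hgeo'
  let fl : (Fin n → ℝ) → (Fin n → ℤ) := fun x i => ⌊x i⌋
  obtain ⟨B, hB0, hB⟩ := z_box (n := n) l 2
  have hclose : ∀ x y : Fin n → ℤ, (∀ i, |x i - y i| ≤ 2) → l x ≤ l y + B := by
    intro x y h
    have h1 := hsub y (x - y)
    rw [add_sub_cancel] at h1
    have := hB (x - y) h
    linarith
  have hfl : ∀ (z : Fin n → ℤ), fl (fun i => (z i : ℝ)) = z := by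
    intro z; funext i; simp [fl]
  obtain ⟨N, hN0, hNs, hNadd, hNG⟩ := z_stable (fun x : Fin n → ℝ => l (fl x)) (D + B)
    (by
      intro x
      have hc : ∀ i, |fl ((2:ℝ) • x) i - (2 • fl x) i| ≤ 2 := by
        intro i
        simp only [fl, Pi.smul_apply, smul_eq_mul, nsmul_eq_mul, Nat.cast_ofNat]
        have f1 := Int.floor_le (x i)
        have f2 := Int.lt_floor_add_one (x i)
        have f3 := Int.floor_le (2 * x i)
        have f4 := Int.lt_floor_add_one (2 * x i)
        have g1 : (⌊2 * x i⌋ : ℝ) < 2 * ⌊x i⌋ + 2 := by linarith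
        have g2 : (2 * ⌊x i⌋ : ℝ) < ⌊2 * x i⌋ + 1 := by linarith
        have g1' : ⌊2 * x i⌋ < 2 * ⌊x i⌋ + 2 := by exact_mod_cast g1
        have g2' : 2 * ⌊x i⌋ < ⌊2 * x i⌋ + 1 := by exact_mod_cast g2
        rw [abs_le]; constructor <;> linarith
      have t1 := hclose _ _ hc
      have t2 := hclose (2 • fl x) (fl ((2:ℝ) • x)) (fun i => by rw [abs_sub_comm]; exact hc i)
      have t3 := hD (fl x)
      have t4 := hsub (fl x) (fl x)
      rw [← two_smul ℕ (fl x)] at t4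
      rw [abs_le]
      constructor <;> linarith)
    (by
      intro x y
      have hc : ∀ i, |fl (x + y) i - (fl x + fl y) i| ≤ 2 := by
        intro i
        simp only [fl, Pi.add_apply]
        have f1 := Int.le_floor_add (x i) (y i)
        have f2 := Int.le_floor_add_floor (x i) (y i)
        rw [abs_le]; constructor <;> linarith
      have t1 := hclose _ _ hc
      have t2 := hsub (fl x) (fl y)
      linarith)
    (by
      intro x
      have hc : ∀ i, |fl (-x) i - (- fl x) i| ≤ 2 := by
        intro i
        simp only [fl, Pi.neg_apply]
        have f1 := Int.floor_le (x i)
        have f2 := Int.lt_floor_add_one (x i)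
        have f3 := Int.floor_le (- x i)
        have f4 := Int.lt_floor_add_one (- x i)
        have g1 : ((⌊- x i⌋ + ⌊x i⌋ : ℤ) : ℝ) < ((1 : ℤ) : ℝ) := by push_cast; linarith
        have g2 : ((-2 : ℤ) : ℝ) < ((⌊- x i⌋ + ⌊x i⌋ : ℤ) : ℝ) := by push_cast; linarith
        have g1' := Int.cast_lt.1 g1
        have g2' := Int.cast_lt.1 g2
        rw [abs_le]; constructor <;> linarith
      have t1 := hclose _ _ hc
      rw [hneg] at t1
      linarith)
    (fun x => hnn _)
    (by
      intro x
      obtain ⟨B', _, hB'⟩ := z_box (n := n) l (∑ i, (⌈|x i|⌉ + 1))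
      refine ⟨B', fun t ht0 ht1 => hB' _ fun i => ?_⟩
      have h1 : ⌈|x i|⌉ + 1 ≤ ∑ i, (⌈|x i|⌉ + 1) :=
        Finset.single_le_sum (f := fun i => ⌈|x i|⌉ + 1)
          (fun j _ => by have := Int.ceil_nonneg (abs_nonneg (x j)); linarith) (Finset.mem_univ i)
      refine le_trans ?_ h1
      simp only [fl, Pi.smul_apply, smul_eq_mul]
      have h2 : |t * x i| ≤ |x i| := by
        rw [abs_mul, abs_of_nonneg ht0]
        exact mul_le_of_le_one_left (abs_nonneg _) ht1
      have h3 := abs_le.1 (h2.trans (Int.le_ceil |x i|))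
      have f3 := Int.floor_le (t * x i)
      have f4 := Int.lt_floor_add_one (t * x i)
      have g1 : ((⌊t * x i⌋ : ℤ) : ℝ) ≤ ((⌈|x i|⌉ + 1 : ℤ) : ℝ) := by push_cast; linarith [h3.2]
      have g2 : ((-(⌈|x i|⌉ + 1) : ℤ) : ℝ) ≤ ((⌊t * x i⌋ : ℤ) : ℝ) := by push_cast; linarith [h3.1]
      rw [abs_le]
      exact ⟨Int.cast_le.1 g2, Int.cast_le.1 g1⟩)
  have hNz : ∀ z : Fin n → ℤ, |N (fun i => (z i : ℝ)) - l z| ≤ D + B := by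
    intro z
    have := hNG (fun i => (z i : ℝ))
    simp only [hfl] at this
    exact this
  have hNneg : ∀ x, N (-x) = N x := by
    intro x
    have := hNs (-1) x
    simpa using this
  have hN00 : N 0 = 0 := by
    have := hNs 0 0
    simpa using this
  have hfr : ∀ x : Fin n → ℝ, fl (x - fun i => (fl x i : ℝ)) = 0 := by
    intro x; funext i; simp [fl]
  refine ⟨N, fun x => ⟨fun hx => ?_, fun hx => hx ▸ hN00⟩, hNs, hNadd,
    ⟨D + B, by positivity, ?_, ?_⟩, ?_⟩
  · obtain ⟨K, hK⟩ := z_fin_bound _ (hfin (D + B))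
    by_contra hne
    obtain ⟨i, hi⟩ := Function.ne_iff.1 hne
    simp only [Pi.zero_apply] at hi
    have hall := hK (fl (((K + 2 : ℝ) / x i) • x)) (by
      have := (abs_le.1 (hNG (((K + 2 : ℝ) / x i) • x))).1
      rw [hNs, hx, mul_zero] at this
      simp only [Set.mem_setOf_eq]
      linarith) i
    simp only [fl, Pi.smul_apply, smul_eq_mul] at hall
    rw [div_mul_cancel₀ _ hi] at hall
    have : ⌊(K:ℝ) + 2⌋ = (K:ℤ) + 2 := by
      have : (K:ℝ) + 2 = (((K:ℤ) + 2 : ℤ) : ℝ) := by push_cast; ring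
      rw [this, Int.floor_intCast]
    rw [this] at hall
    have := le_abs_self ((K:ℤ) + 2)
    linarith
  · intro z w
    have h1 := hNz (z - w)
    rw [hsymm, hd, abs_sub_comm]
    convert h1 using 4
    funext i
    simp
  · intro x
    refine ⟨fl x, ?_⟩
    have := (abs_le.1 (hNG (x - fun i => (fl x i : ℝ)))).2
    simp only [hfr, h0] at this
    linarith
  · rintro f ⟨C', hf⟩ fR hfR
    have hfl' : ∀ z, |l (f z) - l z| ≤ C' := by
      intro z
      have := hf 0 z
      rw [hd, hd, map_zero, sub_zero, sub_zero] at this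
      exact this
    have hsum : ∀ (s : Finset (Fin n)) (v : Fin n → Fin n → ℝ),
        N (∑ i ∈ s, v i) ≤ ∑ i ∈ s, N (v i) := by
      intro s v
      exact Finset.le_sum_of_subadditive N hN00.le hNadd s v
    set R : ℝ := ∑ i, N (fR (Pi.single i 1)) with hR
    have hbdd : ∀ r : Fin n → ℝ, (∀ i, |r i| ≤ 1) → N (fR r) ≤ R := by
      intro r hr
      have e : fR r = ∑ i, r i • fR (Pi.single i 1) := by
        conv_lhs => rw [pi_eq_sum_univ' r]
        rw [map_sum]
        apply Finset.sum_congr rfl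
        intro i _
        rw [map_smul]
      rw [e]
      refine (hsum _ _).trans (Finset.sum_le_sum fun i _ => ?_)
      rw [hNs]
      exact mul_le_of_le_one_left (hN0 _) (hr i)
    intro x
    refine z_eq_of_close (fun x => N (fR x)) N (fun a x => by simp only [map_smul, hNs]) hNs
      (R + C' + 3 * (D + B)) (fun x => ?_) x
    set y : Fin n → ℝ := fun i => (fl x i : ℝ) with hy
    set r := x - y with hr
    have hx : x = y + r := by rw [hr]; abel
    have hr1 : N (fR r) ≤ R := by
      apply hbdd
      intro i
      simp only [hr, hy, Pi.sub_apply, fl]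
      rw [Int.self_sub_floor, abs_of_nonneg (Int.fract_nonneg _)]
      exact (Int.fract_lt_one _).le
    have hr2 : N r ≤ D + B := by
      have := (abs_le.1 (hNG r)).2
      simp only [hr, hy, hfr, h0] at this
      simp only [hr, hy]
      linarith
    have a1 := abs_le.1 (hNz (fl x))
    have a2 := abs_le.1 (hNz (f (fl x)))
    rw [← hfR] at a2
    have a3 := abs_le.1 (hfl' (fl x))
    have b1 := hNadd y r
    have b2 := hNadd (fR y) (fR r)
    have b3 := hNadd (y + r) (-r)
    have b4 := hNadd (fR y + fR r) (-(fR r))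
    rw [hNneg, add_neg_cancel_right] at b3 b4
    have c1 : N (fR x) = N (fR y + fR r) := by rw [← map_add, ← hx]
    have c2 : N x = N (y + r) := by rw [← hx]
    rw [c1, c2, abs_le]
    change _ ≤ N y - _ ∧ N y - _ ≤ _ at a1
    change _ ≤ N (fR y) - _ ∧ N (fR y) - _ ≤ _ at a2
    obtain ⟨a11, a12⟩ := a1
    obtain ⟨a21, a22⟩ := a2
    obtain ⟨a31, a32⟩ := a3
    constructor <;> linarith
end

section
/- Let G be a finitely generated group having a subgroup of finite index isomorphic to ℤⁿ. Then there exist a finite normal subgroup K of G and an injective homomorphism from the quotient G/K into the isometry group of n-dimensional Euclidean space (EuclideanSpace ℝ (Fin n)) such that the induced action of G/K is proper (for every R ≥ 0 the set of elements moving the origin by at most R is finite) and cocompact (there exists R ≥ 0 such that every point of Euclidean space lies within distance R of the orbit of the origin). That is, G has a quotient by a finite normal subgroup that is a crystallographic group. -/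
/-- The inclusion of the integer lattice in Euclidean space. -/
noncomputable def latInc (n : ℕ) (z : Fin n → ℤ) : EuclideanSpace ℝ (Fin n) :=
  WithLp.toLp 2 (fun i => (z i : ℝ))

theorem latInc_add (n : ℕ) (z w : Fin n → ℤ) : latInc n (z + w) = latInc n z + latInc n w := by
  ext i; simp [latInc]

theorem latInc_nsmul (n k : ℕ) (z : Fin n → ℤ) : latInc n (k • z) = (k : ℝ) • latInc n z := by
  ext i; simp [latInc]

theorem latInc_single (n : ℕ) (i : Fin n) :
    latInc n (Pi.single i 1) = EuclideanSpace.single i (1 : ℝ) := by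
  ext j
  by_cases h : j = i
  · subst h; simp [latInc]
  · simp [latInc, h]

/-- Additive maps out of a finite-index lattice extend linearly. -/
theorem lat_ext {n : ℕ} {M : Type*} [Group M] (φ : M → Fin n → ℤ)
    (hφ : ∀ a b, φ (a * b) = φ a + φ b) (hinj : Function.Injective φ)
    (k : ℕ) (hk : 0 < k) (hsur : ∀ z, ∃ a, φ a = k • z)
    (ψ : M → EuclideanSpace ℝ (Fin n)) (hψ : ∀ a b, ψ (a * b) = ψ a + ψ b) :
    ∃ L : EuclideanSpace ℝ (Fin n) →ₗ[ℝ] EuclideanSpace ℝ (Fin n),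
      ∀ a, L (latInc n (φ a)) = ψ a := by
  choose σ hσ using hsur
  have hσadd : ∀ z w, σ (z + w) = σ z * σ w := by
    intro z w
    apply hinj
    rw [hφ, hσ, hσ, hσ, smul_add]
  let ν : (Fin n → ℤ) →+ EuclideanSpace ℝ (Fin n) :=
    AddMonoidHom.mk' (fun z => ψ (σ z)) (fun z w => by rw [hσadd, hψ])
  have hν : ∀ z, ν z = ψ (σ z) := fun z => rfl
  have hsum : ∀ z, ν z = ∑ i, (z i : ℝ) • ν (Pi.single i 1) := by
    intro z
    conv_lhs => rw [← Finset.univ_sum_single z]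
    rw [map_sum]
    refine Finset.sum_congr rfl fun i _ => ?_
    have : (Pi.single i (z i) : Fin n → ℤ) = z i • Pi.single i 1 := by
      rw [← Pi.single_smul]; simp
    rw [this, map_zsmul, Int.cast_smul_eq_zsmul]
  have hk' : (k : ℝ) ≠ 0 := by positivity
  let L : EuclideanSpace ℝ (Fin n) →ₗ[ℝ] EuclideanSpace ℝ (Fin n) :=
    { toFun := fun v => (k : ℝ)⁻¹ • ∑ i, v i • ν (Pi.single i 1)
      map_add' := by
        intro v w
        simp only [PiLp.add_apply, add_smul, Finset.sum_add_distrib, smul_add]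
      map_smul' := by
        intro r v
        simp only [PiLp.smul_apply, smul_eq_mul, mul_smul, ← Finset.smul_sum, RingHom.id_apply]
        rw [smul_comm] }
  refine ⟨L, fun a => ?_⟩
  have h1 : L (latInc n (φ a)) = (k : ℝ)⁻¹ • ν (φ a) := by
    rw [hsum]; rfl
  have hpow : ∀ m : ℕ, 0 < m → φ (a ^ m) = m • φ a ∧ ψ (a ^ m) = m • ψ a := by
    intro m hm
    induction m, hm using Nat.le_induction with
    | base => simp
    | succ m hm ih => rw [pow_succ, hφ, hψ, ih.1, ih.2, succ_nsmul, succ_nsmul]; simp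
  have h2 : σ (φ a) = a ^ k := hinj (by rw [hσ, (hpow k hk).1])
  rw [h1, hν, h2, (hpow k hk).2, ← Nat.cast_smul_eq_nsmul ℝ, smul_smul, inv_mul_cancel₀ hk',
    one_smul]

theorem lat_unique {n : ℕ} {M : Type*} (φ : M → Fin n → ℤ)
    (k : ℕ) (hk : 0 < k) (hsur : ∀ z, ∃ a, φ a = k • z)
    (L L' : EuclideanSpace ℝ (Fin n) →ₗ[ℝ] EuclideanSpace ℝ (Fin n))
    (h : ∀ a, L (latInc n (φ a)) = L' (latInc n (φ a))) : L = L' := by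
  refine (EuclideanSpace.basisFun (Fin n) ℝ).toBasis.ext fun i => ?_
  have hk' : (k : ℝ) ≠ 0 := by positivity
  obtain ⟨a, ha⟩ := hsur (Pi.single i 1)
  have := h a
  rw [ha, latInc_nsmul, map_smul, map_smul, latInc_single] at this
  simpa using smul_right_injective _ hk' this

/-- Averaged norms are Euclidean. -/
theorem exists_avg {n : ℕ} {ι : Type*} [Fintype ι]
    (ρ : ι → EuclideanSpace ℝ (Fin n) →ₗ[ℝ] EuclideanSpace ℝ (Fin n))
    (i₀ : ι) (h0 : ρ i₀ = LinearMap.id) :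
    ∃ P : EuclideanSpace ℝ (Fin n) ≃ₗ[ℝ] EuclideanSpace ℝ (Fin n),
      ∀ v, ‖P v‖ ^ 2 = ∑ i, ‖ρ i v‖ ^ 2 := by
  let T : EuclideanSpace ℝ (Fin n) →ₗ[ℝ] PiLp 2 (fun _ : ι => EuclideanSpace ℝ (Fin n)) :=
    { toFun := fun v => WithLp.toLp 2 (fun i => ρ i v)
      map_add' := by intro v w; ext i; simp
      map_smul' := by intro r v; ext i; simp }
  have hT : ∀ v, ‖T v‖ ^ 2 = ∑ i, ‖ρ i v‖ ^ 2 := fun v => by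
    rw [PiLp.norm_sq_eq_of_L2]; rfl
  have hinj : Function.Injective T := by
    intro v w hvw
    have := congrArg (fun x : PiLp 2 (fun _ : ι => EuclideanSpace ℝ (Fin n)) => x i₀) hvw
    simpa [T, h0] using this
  let e := LinearEquiv.ofInjective T hinj
  have hd : Module.finrank ℝ (LinearMap.range T) = n := by
    rw [← e.finrank_eq]; simp
  let b := (stdOrthonormalBasis ℝ (LinearMap.range T)).reindex (finCongr hd)
  refine ⟨e.trans b.repr.toLinearEquiv, fun v => ?_⟩
  rw [← hT]
  congr 1
  show ‖b.repr (e v)‖ = _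
  rw [LinearIsometryEquiv.norm_map]
  rfl

theorem norm_le_sum_coord {n : ℕ} (v : EuclideanSpace ℝ (Fin n)) (C : ℝ)
    (h : ∀ i, |v i| ≤ C) : ‖v‖ ≤ n * C := by
  have : v = ∑ i, v i • EuclideanSpace.single i (1 : ℝ) := by
    ext j; simp [Finset.sum_apply, Pi.single_apply]
  rw [this]
  refine (norm_sum_le _ _).trans ?_
  have : ∀ i ∈ Finset.univ, ‖v i • EuclideanSpace.single i (1 : ℝ)‖ ≤ C := by
    intro i _
    rw [norm_smul]; simpa using h i
  simpa using Finset.sum_le_sum this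

theorem lat_finite {n : ℕ} (P : EuclideanSpace ℝ (Fin n) ≃ₗ[ℝ] EuclideanSpace ℝ (Fin n))
    (w : EuclideanSpace ℝ (Fin n)) (R : ℝ) :
    {z : Fin n → ℤ | ‖P (latInc n z + w)‖ ≤ R}.Finite := by
  obtain ⟨C, hC⟩ : ∃ C : ℝ, ∀ v, ‖P.symm v‖ ≤ C * ‖v‖ :=
    ⟨‖LinearMap.toContinuousLinearMap P.symm.toLinearMap‖, fun v =>
      (LinearMap.toContinuousLinearMap P.symm.toLinearMap).le_opNorm v⟩
  let D : ℤ := ⌈|C| * R + ‖w‖⌉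
  refine (Set.finite_Icc (fun _ => -D : Fin n → ℤ) (fun _ => D)).subset ?_
  intro z hz
  have h1 : ‖latInc n z + w‖ ≤ |C| * R := by
    have := hC (P (latInc n z + w))
    rw [LinearEquiv.symm_apply_apply] at this
    refine this.trans ?_
    refine (mul_le_mul_of_nonneg_right (le_abs_self C) (norm_nonneg _)).trans ?_
    exact mul_le_mul_of_nonneg_left hz (abs_nonneg _)
  have h2 : ‖latInc n z‖ ≤ |C| * R + ‖w‖ := by
    have := norm_sub_le (latInc n z + w) w
    rw [add_sub_cancel_right] at this
    linarith
  have h3 : ∀ i, |z i| ≤ D := by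
    intro i
    have : |(z i : ℝ)| ≤ ‖latInc n z‖ := by
      simpa [latInc] using PiLp.norm_apply_le (latInc n z) i
    have h4 : |(z i : ℝ)| ≤ (D : ℝ) := (this.trans h2).trans (Int.le_ceil _)
    exact_mod_cast h4
  exact ⟨fun i => (abs_le.mp (h3 i)).1, fun i => (abs_le.mp (h3 i)).2⟩

/-- The affine isometric action, from a finite-index normal lattice. -/
theorem exists_action {G : Type*} [Group G] {n : ℕ} (N : Subgroup G) [N.Normal] [N.FiniteIndex]
    (φ : N → Fin n → ℤ) (hφ : ∀ a b, φ (a * b) = φ a + φ b) (hinj : Function.Injective φ)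
    (k : ℕ) (hk : 0 < k) (hsur : ∀ z, ∃ a, φ a = k • z) :
    ∃ (F : G →* (EuclideanSpace ℝ (Fin n) ≃ᵢ EuclideanSpace ℝ (Fin n)))
      (P : EuclideanSpace ℝ (Fin n) ≃ₗ[ℝ] EuclideanSpace ℝ (Fin n))
      (c : G → EuclideanSpace ℝ (Fin n)),
      (∀ g, F g 0 = P (c g)) ∧ (∀ a : N, c a = latInc n (φ a)) ∧
      (∀ (a : N) g, c (a * g) = latInc n (φ a) + c g) := by
  classical
  -- linear part
  let cj : G → N → N := fun g a => ⟨g * a * g⁻¹, Subgroup.Normal.conj_mem inferInstance _ a.2 g⟩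
  have hcj : ∀ g a b, cj g (a * b) = cj g a * cj g b := by
    intro g a b; ext; simp [cj]
  have hcjm : ∀ g h a, cj (g * h) a = cj g (cj h a) := by
    intro g h a; ext; simp [cj, mul_assoc]
  have hex := fun g => lat_ext φ hφ hinj k hk hsur (fun a => latInc n (φ (cj g a)))
    (fun a b => by rw [hcj, hφ, latInc_add])
  choose ρ0 hρ0 using hex
  let ρ1 : G →* Module.End ℝ (EuclideanSpace ℝ (Fin n)) :=
    { toFun := ρ0
      map_one' := by
        apply lat_unique φ k hk hsur
        intro a
        rw [hρ0]
        have : cj 1 a = a := by ext; simp [cj]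
        rw [this]; rfl
      map_mul' := by
        intro g h
        apply lat_unique φ k hk hsur
        intro a
        rw [hρ0, Module.End.mul_apply, hρ0, hρ0, hcjm] }
  have hρ1 : ∀ g a, ρ1 g (latInc n (φ a)) = latInc n (φ (cj g a)) := hρ0
  have hcomm : ∀ a b : N, a * b = b * a := fun a b => hinj (by rw [hφ, hφ, add_comm])
  have hker : N ≤ ρ1.ker := by
    intro g hg
    rw [MonoidHom.mem_ker]
    apply lat_unique φ k hk hsur
    intro a
    rw [hρ1]
    have : cj g a = a := by
      have := congrArg Subtype.val (hcomm ⟨g, hg⟩ a)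
      ext
      simp only [Subgroup.coe_mul] at this
      simp [cj, this]
    rw [this]; rfl
  let ρ : G ⧸ N →* Module.End ℝ (EuclideanSpace ℝ (Fin n)) := QuotientGroup.lift N ρ1 hker
  have hρ : ∀ (g : G) a, ρ (g : G ⧸ N) (latInc n (φ a)) = latInc n (φ (cj g a)) := hρ1
  haveI : Finite (G ⧸ N) := inferInstance
  letI : Fintype (G ⧸ N) := Fintype.ofFinite _
  obtain ⟨P, hP⟩ := exists_avg (fun q => ρ q) 1 (map_one ρ)
  have hPinv : ∀ q v, ‖P (ρ q v)‖ = ‖P v‖ := by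
    intro q v
    have : ‖P (ρ q v)‖ ^ 2 = ‖P v‖ ^ 2 := by
      rw [hP, hP]
      rw [← Equiv.sum_comp (Equiv.mulRight q) (fun r => ‖ρ r v‖ ^ 2)]
      refine Finset.sum_congr rfl fun r _ => ?_
      simp
    exact (sq_eq_sq₀ (norm_nonneg _) (norm_nonneg _)).mp this
  -- cocycle
  let s : G ⧸ N → G := Quotient.out
  have hs : ∀ q, (s q : G ⧸ N) = q := fun q => QuotientGroup.out_eq' q
  have ht : ∀ (q : G ⧸ N) (g : G), s q * g * (s (q * g))⁻¹ ∈ N := by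
    intro q g
    rw [← QuotientGroup.eq_one_iff]
    simp [hs]
  let t : G ⧸ N → G → N := fun q g => ⟨_, ht q g⟩
  have htm : ∀ q (g h : G), t q (g * h) = t q g * t (q * g) h := by
    intro q g h; ext; simp [t, mul_assoc]
  let m : ℝ := Fintype.card (G ⧸ N)
  have hm : m ≠ 0 := by
    have : 0 < Fintype.card (G ⧸ N) := Fintype.card_pos
    simp [m]
  let c : G → EuclideanSpace ℝ (Fin n) :=
    fun g => m⁻¹ • ∑ q, ρ q⁻¹ (latInc n (φ (t q g)))
  have hc : ∀ g h : G, c (g * h) = c g + ρ g (c h) := by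
    intro g h
    simp only [c]
    rw [map_smul, ← smul_add, map_sum]
    congr 1
    rw [← Equiv.sum_comp (Equiv.mulRight (g : G ⧸ N))
      (fun q => ρ g (ρ q⁻¹ (latInc n (φ (t q h))))), ← Finset.sum_add_distrib]
    refine Finset.sum_congr rfl fun q _ => ?_
    rw [htm, hφ, latInc_add, map_add]
    congr 1
    rw [← Module.End.mul_apply, ← map_mul]
    simp
  have hcN : ∀ a : N, c a = latInc n (φ a) := by
    intro a
    have ha : ((a : G) : G ⧸ N) = 1 := (QuotientGroup.eq_one_iff _).mpr a.2
    have h1 : ∀ q : G ⧸ N, ρ q⁻¹ (latInc n (φ (t q a))) = latInc n (φ a) := by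
      intro q
      have h2 : t q a = cj (s q) a := by ext; simp [t, cj, ha]
      rw [h2, ← hρ, hs, ← Module.End.mul_apply, ← map_mul]
      simp
    simp only [c]
    rw [Finset.sum_congr rfl fun q _ => h1 q, Finset.sum_const, Finset.card_univ,
      ← Nat.cast_smul_eq_nsmul ℝ, smul_smul, inv_mul_cancel₀ hm, one_smul]
  have hcNg : ∀ (a : N) g, c (a * g) = latInc n (φ a) + c g := by
    intro a g
    have ha : ((a : G) : G ⧸ N) = 1 := (QuotientGroup.eq_one_iff _).mpr a.2
    rw [hc, hcN, ha, map_one]; rfl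
  have hc1 : c 1 = 0 := by
    have := hc 1 1
    rw [mul_one, QuotientGroup.mk_one, map_one, Module.End.one_apply] at this
    simpa using this
  let f0 : G → EuclideanSpace ℝ (Fin n) → EuclideanSpace ℝ (Fin n) :=
    fun g x => P (ρ g (P.symm x) + c g)
  have f0one : ∀ x, f0 1 x = x := by
    intro x; simp [f0, hc1]
  have f0mul : ∀ g h x, f0 (g * h) x = f0 g (f0 h x) := by
    intro g h x
    simp only [f0, LinearEquiv.symm_apply_apply, hc, QuotientGroup.mk_mul, map_mul,
      Module.End.mul_apply, map_add]
    abel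
  have f0iso : ∀ g, Isometry (f0 g) := by
    intro g
    refine Isometry.of_dist_eq fun x y => ?_
    rw [dist_eq_norm, dist_eq_norm]
    simp only [f0]
    rw [← map_sub, add_sub_add_right_eq_sub, ← map_sub, hPinv, ← map_sub,
      LinearEquiv.apply_symm_apply]
  let F : G →* (EuclideanSpace ℝ (Fin n) ≃ᵢ EuclideanSpace ℝ (Fin n)) :=
    { toFun := fun g => IsometryEquiv.mk'  (f0 g) (f0 g⁻¹)
        (fun x => by rw [← f0mul, mul_inv_cancel, f0one]) (f0iso g)
      map_one' := by ext1 x; exact f0one x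
      map_mul' := by intro g h; ext1 x; exact f0mul g h x }
  refine ⟨F, P, c, fun g => ?_, hcN, hcNg⟩
  show P (ρ g (P.symm 0) + c g) = _
  simp

theorem action_good {G : Type*} [Group G] {n : ℕ} (N : Subgroup G) [N.Normal] [N.FiniteIndex]
    (φ : N → Fin n → ℤ) (hφ : ∀ a b, φ (a * b) = φ a + φ b) (hinj : Function.Injective φ)
    (k : ℕ) (hk : 0 < k) (hsur : ∀ z, ∃ a, φ a = k • z) :
    ∃ (F : G →* (EuclideanSpace ℝ (Fin n) ≃ᵢ EuclideanSpace ℝ (Fin n))),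
      (∀ R : ℝ, {g : G | dist (F g 0) 0 ≤ R}.Finite) ∧
      ∃ R : ℝ, 0 ≤ R ∧ ∀ x, ∃ g, dist x (F g 0) ≤ R := by
  obtain ⟨F, P, c, hF, hcN, hcNg⟩ := exists_action N φ hφ hinj k hk hsur
  refine ⟨F, fun R => ?_, ?_⟩
  · let s : G ⧸ N → G := Quotient.out
    have hs : ∀ q, (s q : G ⧸ N) = q := fun q => QuotientGroup.out_eq' q
    have hfin : (⋃ q : G ⧸ N, (fun a : N => (a : G) * s q) ''
        (φ ⁻¹' {z | ‖P (latInc n z + c (s q))‖ ≤ R})).Finite := by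
      refine Set.finite_iUnion fun q => Set.Finite.image _ ?_
      exact (lat_finite P (c (s q)) R).preimage hinj.injOn
    refine hfin.subset fun g hg => ?_
    have hmem : g * (s (g : G ⧸ N))⁻¹ ∈ N := by
      rw [← QuotientGroup.eq_one_iff]
      simp [hs]
    refine Set.mem_iUnion.mpr ⟨(g : G ⧸ N), ⟨_, hmem⟩, ?_, by simp⟩
    simp only [Set.mem_preimage, Set.mem_setOf_eq]
    rw [← hcNg]
    simpa [hF] using hg
  · let Q := LinearMap.toContinuousLinearMap P.toLinearMap
    refine ⟨‖Q‖ * (n * k), by positivity, fun x => ?_⟩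
    let y := P.symm x
    obtain ⟨a, ha⟩ := hsur (fun i => ⌊y i / k⌋)
    refine ⟨a, ?_⟩
    have hx : x = P y := (P.apply_symm_apply x).symm
    rw [hF, hcN, ha, dist_eq_norm]
    conv_lhs => rw [hx]
    rw [← map_sub]
    refine (Q.le_opNorm _).trans (mul_le_mul_of_nonneg_left ?_ (norm_nonneg _))
    refine norm_le_sum_coord _ _ fun i => ?_
    have hk' : (0 : ℝ) < k := by positivity
    have e1 : (y - latInc n (k • fun i => ⌊y i / k⌋)) i = k * Int.fract (y i / k) := by
      rw [latInc_nsmul, ← Int.self_sub_floor]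
      simp only [latInc, PiLp.sub_apply, PiLp.smul_apply, smul_eq_mul]
      field_simp
    rw [e1, abs_of_nonneg (mul_nonneg hk'.le (Int.fract_nonneg _))]
    exact mul_le_of_le_one_right hk'.le (Int.fract_lt_one _).le

/-- Zassenhaus: a finitely generated group with a finite-index subgroup isomorphic to `ℤⁿ`
has a finite normal subgroup `K` such that `G/K` embeds in the isometry group of
`n`-dimensional Euclidean space, acting properly and cocompactly; that is, `G/K` is a
crystallographic group. -/
theorem virtually_abelian_has_crystallographic_quotient
    {G : Type*} [Group G] (hfg : Group.FG G) (n : ℕ)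
    (hab : ∃ A : Subgroup G, A.FiniteIndex ∧
      Nonempty (A ≃* Multiplicative (Fin n → ℤ))) :
    ∃ (K : Subgroup G) (hK : K.Normal), Finite K ∧
      haveI := hK
      ∃ f : G ⧸ K →* (EuclideanSpace ℝ (Fin n) ≃ᵢ EuclideanSpace ℝ (Fin n)),
        Function.Injective f ∧
        (∀ R : ℝ, 0 ≤ R → {q : G ⧸ K | dist ((f q) 0) 0 ≤ R}.Finite) ∧
        (∃ R : ℝ, 0 ≤ R ∧ ∀ x : EuclideanSpace ℝ (Fin n), ∃ q : G ⧸ K,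
          dist x ((f q) 0) ≤ R) := by
  obtain ⟨A, hA, ⟨e⟩⟩ := hab
  haveI := hA
  have hle : A.normalCore ≤ A := A.normalCore_le
  let φ : A.normalCore → Fin n → ℤ := fun a => (e (Subgroup.inclusion hle a)).toAdd
  have hφ : ∀ a b, φ (a * b) = φ a + φ b := by intro a b; simp [φ]
  have hinj : Function.Injective φ := by
    intro a b h
    exact Subgroup.inclusion_injective hle (e.injective (Multiplicative.toAdd.injective h))
  have hk : 0 < A.normalCore.index := Nat.pos_of_ne_zero Subgroup.FiniteIndex.index_ne_zero
  have hsur : ∀ z, ∃ a, φ a = A.normalCore.index • z := by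
    intro z
    refine ⟨⟨(e.symm (Multiplicative.ofAdd z) : G) ^ A.normalCore.index,
      Subgroup.pow_index_mem _ _⟩, ?_⟩
    have : Subgroup.inclusion hle ⟨(e.symm (Multiplicative.ofAdd z) : G) ^ A.normalCore.index,
      Subgroup.pow_index_mem _ _⟩ = (e.symm (Multiplicative.ofAdd z)) ^ A.normalCore.index := by
      ext; simp
    simp only [φ, this, map_pow, MulEquiv.apply_symm_apply, toAdd_pow, toAdd_ofAdd]
  obtain ⟨F, hfin, R, hR, hco⟩ := action_good A.normalCore φ hφ hinj _ hk hsur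
  refine ⟨F.ker, inferInstance, ?_, QuotientGroup.kerLift F, QuotientGroup.kerLift_injective F,
    fun R _ => ?_, R, hR, fun x => ?_⟩
  · refine ((hfin 0).subset fun g hg => ?_).to_subtype
    have : F g = 1 := hg
    simp [this]
  · refine ((hfin R).image (QuotientGroup.mk : G → G ⧸ F.ker)).subset ?_
    intro q hq
    induction q using QuotientGroup.induction_on with
    | H g => exact ⟨g, hq, rfl⟩
  · obtain ⟨g, hg⟩ := hco x
    exact ⟨(g : G ⧸ F.ker), hg⟩
end

section
/- Let G be a group, let A be a normal subgroup of finite index with a fixed isomorphism ι : ℤⁿ → A, and let A' ≤ A be a subgroup which is normal in G, of finite index in A, with a fixed isomorphism ι' : ℤⁿ → A'. Let ρ, ρ' : G → GL(n, ℤ) be the conjugation actions of G on ℤⁿ via ι and ι' respectively (so ι(ρ(g) z) = g ι(z) g⁻¹ and ι'(ρ'(g) z) = g ι'(z) g⁻¹). Then there exists f ∈ GL(n, ℝ) such that, viewing ρ(g) and ρ'(g) as elements of GL(n, ℝ), one has ρ'(g) = f⁻¹ ρ(g) f for all g ∈ G. In particular, the point group of a virtually ℤⁿ group is well defined up to conjugation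 in GL(n, ℝ). -/
/-- The point group of a virtually `ℤⁿ` group is well defined up to conjugation in
`GL(n, ℝ)`: the conjugation actions of `G` on two identifications of finite-index normal
subgroups with `ℤⁿ` (one contained in the other) are conjugate in `GL(n, ℝ)`. -/
theorem point_group_well_defined_up_to_conjugation
    {G : Type*} [Group G] (n : ℕ)
    (A : Subgroup G) (hA : A.Normal) (hAFI : A.FiniteIndex)
    (ι : Multiplicative (Fin n → ℤ) ≃* A)
    (A' : Subgroup G) (hle : A' ≤ A) (hA' : A'.Normal)
    (hA'FI : (A'.subgroupOf A).FiniteIndex)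
    (ι' : Multiplicative (Fin n → ℤ) ≃* A')
    (ρ ρ' : G →* Matrix.GeneralLinearGroup (Fin n) ℤ)
    (hρ : ∀ (g : G) (z : Fin n → ℤ),
      ((ι (Multiplicative.ofAdd (Matrix.mulVec (ρ g : Matrix (Fin n) (Fin n) ℤ) z)) : A) : G) =
        g * ((ι (Multiplicative.ofAdd z) : A) : G) * g⁻¹)
    (hρ' : ∀ (g : G) (z : Fin n → ℤ),
      ((ι' (Multiplicative.ofAdd (Matrix.mulVec (ρ' g : Matrix (Fin n) (Fin n) ℤ) z)) : A') : G) =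
        g * ((ι' (Multiplicative.ofAdd z) : A') : G) * g⁻¹) :
    ∃ f : Matrix.GeneralLinearGroup (Fin n) ℝ, ∀ g : G,
      Matrix.GeneralLinearGroup.map (Int.castRingHom ℝ) (ρ' g) =
        f⁻¹ * Matrix.GeneralLinearGroup.map (Int.castRingHom ℝ) (ρ g) * f := by
  let φ : (Fin n → ℤ) →+ (Fin n → ℤ) :=
    AddMonoidHom.toMultiplicative.symm (ι.symm.toMonoidHom.comp ((Subgroup.inclusion hle).comp ι'.toMonoidHom))
  have hφ : ∀ z, ((ι (Multiplicative.ofAdd (φ z)) : A) : G) =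
      ((ι' (Multiplicative.ofAdd z) : A') : G) := by
    intro z
    have h : ι (Multiplicative.ofAdd (φ z)) =
        Subgroup.inclusion hle (ι' (Multiplicative.ofAdd z)) :=
      ι.apply_symm_apply _
    rw [h]
    rfl
  have hιinj : ∀ x y : Fin n → ℤ, ((ι (Multiplicative.ofAdd x) : A) : G) =
      ((ι (Multiplicative.ofAdd y) : A) : G) → x = y := fun x y h =>
    Multiplicative.ofAdd.injective (ι.injective (Subtype.ext h))
  have hφinj : ∀ x y, φ x = φ y → x = y := by
    intro x y h
    have h2 := hφ x
    rw [h, hφ y] at h2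
    exact (Multiplicative.ofAdd.injective (ι'.injective (Subtype.ext h2))).symm
  let M : Matrix (Fin n) (Fin n) ℤ := LinearMap.toMatrix' φ.toIntLinearMap
  have hM : ∀ z, M.mulVec z = φ z := fun z => by
    simp [M, LinearMap.toMatrix'_mulVec]
  have hdet : M.det ≠ 0 := by
    intro h0
    obtain ⟨v, hv, hv0⟩ := Matrix.exists_mulVec_eq_zero_iff.mpr h0
    apply hv
    apply hφinj
    rw [← hM, hv0, map_zero]
  have hcomm : ∀ g : G, M * (ρ' g : Matrix (Fin n) (Fin n) ℤ) =
      (ρ g : Matrix (Fin n) (Fin n) ℤ) * M := by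
    intro g
    apply Matrix.mulVec_injective
    funext z
    rw [← Matrix.mulVec_mulVec, ← Matrix.mulVec_mulVec, hM, hM]
    apply hιinj
    rw [hφ, hρ', hρ, hφ]
  have hdetR : (M.map (Int.castRingHom ℝ)).det ≠ 0 := by
    have h := (Int.castRingHom ℝ).map_det M
    rw [RingHom.mapMatrix_apply] at h
    rw [← h]
    simpa using hdet
  refine ⟨Matrix.GeneralLinearGroup.mkOfDetNeZero _ hdetR, fun g => ?_⟩
  rw [mul_assoc, eq_inv_mul_iff_mul_eq]
  apply Units.ext
  have h := congrArg (fun X => X.map (Int.castRingHom ℝ)) (hcomm g)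
  simp only [Matrix.map_mul] at h
  exact h
end

section
/- Let N be a normal subgroup of a group G, let G act on a group M by group automorphisms, and let φ : N → M be a group homomorphism such that φ(g n g⁻¹) = g · φ(n) for all g ∈ G, n ∈ N, and n · m = φ(n) m φ(n)⁻¹ for all n ∈ N, m ∈ M. Then the subset K = {(φ(n)⁻¹, n) : n ∈ N} of the semidirect product M ⋊ G is a normal subgroup of M ⋊ G. -/
/-- Given a normal subgroup `N ⊴ G`, an action of `G` on a group `M` by automorphisms, and
a `G`-equivariant homomorphism `φ : N → M` through which `N` acts on `M` by conjugation,
the subset `{(φ(n)⁻¹, n) : n ∈ N}` is a normal subgroup of the semidirect product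
`M ⋊ G`. -/
theorem graph_of_phi_is_normal_in_semidirect_product
    {G : Type*} [Group G] (N : Subgroup G) [hN : N.Normal]
    {M : Type*} [Group M] [MulDistribMulAction G M] (φ : N →* M)
    (hequiv : ∀ (g : G) (nn : N),
      φ ⟨g * (nn : G) * g⁻¹, hN.conj_mem (nn : G) nn.2 g⟩ = g • φ nn)
    (hconj : ∀ (nn : N) (m : M), (nn : G) • m = φ nn * m * (φ nn)⁻¹) :
    ∃ K : Subgroup (M ⋊[MulDistribMulAction.toMulAut G M] G),
      (K : Set (M ⋊[MulDistribMulAction.toMulAut G M] G)) =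
        {p | ∃ nn : N, p = ⟨(φ nn)⁻¹, (nn : G)⟩} ∧
      K.Normal := by
  refine ⟨{ carrier := {p | ∃ nn : N, p = ⟨(φ nn)⁻¹, (nn : G)⟩}
            mul_mem' := ?_
            one_mem' := ?_
            inv_mem' := ?_ }, rfl, ⟨?_⟩⟩
  · rintro _ _ ⟨a, rfl⟩ ⟨b, rfl⟩
    refine ⟨a * b, ?_⟩
    ext
    · simp [hconj, mul_assoc]
    · simp
  · exact ⟨1, by ext <;> simp⟩
  · rintro _ ⟨a, rfl⟩
    refine ⟨a⁻¹, ?_⟩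
    ext
    · have h := hconj a⁻¹ (φ a)
      simp only [Subgroup.coe_inv, map_inv] at h
      simp [h]
    · simp
  · rintro _ ⟨n, rfl⟩ ⟨m, g⟩
    refine ⟨⟨g * (n : G) * g⁻¹, hN.conj_mem (n : G) n.2 g⟩, ?_⟩
    have h := hconj ⟨g * (n : G) * g⁻¹, hN.conj_mem (n : G) n.2 g⟩ m⁻¹
    rw [hequiv] at h
    simp only at h
    ext
    · change m * g • (φ n)⁻¹ * (g * (n : G)) • (g⁻¹ • m⁻¹) = _
      rw [← mul_smul, h, hequiv, smul_inv']
      group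
    · simp
end
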